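/- arXiv:1411.7425 — 5 statements merged into one kernel-verified Lean document; each statement's English description precedes it below -/
import Mathlib

section
/- For every n ≥ 1 and every pair of indices i, j ∈ {1,…,n}, the matrix entry M_{i,j} is a positive-coefficient Laurent polynomial in the central minors of M: there exist a finitely supported function e from the set I = {(x,y) : 1 ≤ x ≤ 2n, 0 ≤ y ≤ n} to ℕ and a multivariate real polynomial p in variables (X_{(x,y)})_{(x,y)∈I} with all coefficients nonnegative, such that for every n×n real matrix M one has M_{i,j} · ∏_{(x,y)∈I} CM_{x,y}(M)^{e(x,y)} = p((CM_{x,y}(M))_{(x,y)∈I}). -/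
/-- The contiguous minor `CM_{a,b,y}(M)` of an `n × n` matrix `M` (indexed by `ZMod n`,
i.e. indices are taken modulo `n`): the determinant of the `y × y` matrix whose rows are
`a, a+1, …, a+y-1` in order and whose columns are `b+y-1, …, b+1, b` in order. -/
noncomputable def contiguousMinor (n : ℕ) (M : Matrix (ZMod n) (ZMod n) ℝ)
    (a b : ℤ) (y : ℕ) : ℝ :=
  Matrix.det (Matrix.of fun i j : Fin y =>
    M (((a + (i : ℤ)) : ℤ) : ZMod n) (((b + (y : ℤ) - 1 - (j : ℤ)) : ℤ) : ZMod n))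

/-- The central minor `CM_{x,y}(M)`: the contiguous minor `CM_{a,b,y}(M)` with
`a = ⌊(x-y)/2⌋` and `b = ⌊(x-y+n-((n-1) mod 2))/2⌋`. -/
noncomputable def centralMinor (n : ℕ) (M : Matrix (ZMod n) (ZMod n) ℝ)
    (x : ℤ) (y : ℕ) : ℝ :=
  contiguousMinor n M (Int.fdiv (x - (y : ℤ)) 2)
    (Int.fdiv (x - (y : ℤ) + (n : ℤ) - (((n : ℤ) - 1) % 2)) 2) y

/-- The index set `I = {(x,y) : 1 ≤ x ≤ 2n, 0 ≤ y ≤ n}` of all central minors. -/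
def CentralIdx (n : ℕ) : Set (ℤ × ℕ) :=
  {s | 1 ≤ s.1 ∧ s.1 ≤ 2 * (n : ℤ) ∧ s.2 ≤ n}


namespace CentralAux

open Matrix

/-- Desnanot–Jacobi, multiplied by the determinant. -/
theorem jacobi_aux {S : Type*} [CommRing S] (m : ℕ) (N : Matrix (Fin (m + 2)) (Fin (m + 2)) S) :
    N.det * ((N.submatrix Fin.succ Fin.succ).det *
        (N.submatrix Fin.castSucc Fin.castSucc).det -
      (N.submatrix Fin.succ Fin.castSucc).det * (N.submatrix Fin.castSucc Fin.succ).det) =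
    N.det * (N.det * (N.submatrix (fun i : Fin m => i.castSucc.succ)
      (fun j : Fin m => j.castSucc.succ)).det) := by
  set P := N.adjugate with hP
  let z : Fin 2 → Fin (m + 2) := ![0, Fin.last (m + 1)]
  let V : Matrix (Fin 2) (Fin (m + 2)) S := (1 : Matrix (Fin (m + 2)) (Fin (m + 2)) S).submatrix z id
  let U : Matrix (Fin (m + 2)) (Fin 2) S := (P - 1).submatrix id z
  have hne : (0 : Fin (m + 2)) ≠ Fin.last (m + 1) := by
    intro h; simpa using congrArg Fin.val h
  have hB : (1 + U * V).det = P 0 0 * P (Fin.last _) (Fin.last _)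
      - P 0 (Fin.last _) * P (Fin.last _) 0 := by
    have hVU : V * U = (P - 1).submatrix z z := by
      ext k l
      have h3 := congrFun (congrFun (Matrix.one_mul (P - 1)) (z k)) (z l)
      rw [Matrix.mul_apply] at h3
      rw [Matrix.mul_apply]
      exact h3
    rw [Matrix.det_one_add_mul_comm, hVU, Matrix.det_fin_two]
    have z0 : z 0 = 0 := rfl
    have z1 : z 1 = Fin.last (m + 1) := rfl
    simp only [Matrix.add_apply, Matrix.submatrix_apply, Matrix.sub_apply, z0, z1]
    simp [Matrix.one_apply, hne, hne.symm]
  have hC : ∀ i j, (N * (1 + U * V) : Matrix (Fin (m + 2)) (Fin (m + 2)) S) i j = if j = 0 then (if i = 0 then N.det else 0) else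
      if j = Fin.last _ then (if i = Fin.last _ then N.det else 0) else N i j := by
    intro i j
    have h1 : N * (1 + U * V) = N + (N * U) * V := by
      rw [Matrix.mul_add, Matrix.mul_one, Matrix.mul_assoc]
    have h2 : ∀ k, (N * U) i k = N.det * (1 : Matrix (Fin (m + 2)) (Fin (m + 2)) S) i (z k)
        - N i (z k) := by
      intro k
      have h3 : N * (P - 1) = N.det • (1 : Matrix (Fin (m + 2)) (Fin (m + 2)) S) - N := by
        rw [Matrix.mul_sub, hP, Matrix.mul_adjugate, Matrix.mul_one]
      have h4 := congrFun (congrFun h3 i) (z k)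
      rw [Matrix.mul_apply] at h4
      rw [Matrix.mul_apply]
      exact h4
    rw [h1, Matrix.add_apply, Matrix.mul_apply, Fin.sum_univ_two, h2, h2]
    have z0 : z 0 = 0 := rfl
    have z1 : z 1 = Fin.last (m + 1) := rfl
    simp only [V, Matrix.submatrix_apply, z0, z1, id, Matrix.one_apply]
    by_cases ha : j = 0
    · subst ha
      rw [if_pos rfl, if_neg hne.symm]
      simp
    · by_cases hb : j = Fin.last _
      · subst hb
        simp [hne]
      · simp [ha, hb, Ne.symm ha, Ne.symm hb, eq_comm]
  have hCL : ∀ b : Fin (m + 1), (N * (1 + U * V) : Matrix (Fin (m + 2)) (Fin (m + 2)) S)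
      b.succ (Fin.last m).succ = if b = Fin.last m then N.det else 0 := by
    intro b
    rw [hC, if_neg (Fin.succ_ne_zero _), Fin.succ_last, if_pos rfl]
    by_cases hb : b = Fin.last m
    · subst hb
      rw [Fin.succ_last, if_pos rfl, if_pos rfl]
    · rw [if_neg hb, if_neg]
      intro h
      apply hb
      apply Fin.succ_injective
      rw [h, Fin.succ_last]
  have hD : (N * (1 + U * V)).det = N.det * (N.det * (N.submatrix
      (fun i : Fin m => i.castSucc.succ) (fun j : Fin m => j.castSucc.succ)).det) := by
    rw [Matrix.det_succ_column_zero, Finset.sum_eq_single 0]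
    · rw [hC]
      simp only [Fin.val_zero, pow_zero, if_true, one_mul]
      congr 1
      rw [Matrix.det_succ_column _ (Fin.last m), Finset.sum_eq_single (Fin.last m)]
      · rw [Matrix.submatrix_apply, Fin.succAbove_zero, hCL, if_pos rfl, Even.neg_one_pow ⟨_, rfl⟩, one_mul]
        congr 1
        congr 1
        ext i j
        simp only [Matrix.submatrix_apply, hC, Fin.succAbove_last]
        rw [if_neg (Fin.succ_ne_zero _), if_neg]
        intro h
        have := congrArg Fin.val h
        have := j.2
        simp at *
      · intro b _ hb
        rw [Matrix.submatrix_apply, Fin.succAbove_zero, hCL, if_neg hb]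
        simp
      · simp
    · intro b _ hb
      rw [hC]; simp [hb]
    · simp
  rw [← hD, Matrix.det_mul, hB, hP]
  simp only [Matrix.adjugate_fin_succ_eq_det_submatrix, Fin.succAbove_zero, Fin.succAbove_last,
    Fin.val_zero, Fin.val_last]
  have h4 : ((-1 : S)) ^ (m + 1 + (m + 1)) = 1 := Even.neg_one_pow ⟨_, rfl⟩
  have h5 : ((-1 : S)) ^ (m + 1) * (-1) ^ (m + 1) = 1 := by rw [← pow_add, h4]
  simp only [h4, add_zero, zero_add, pow_zero, one_mul]
  linear_combination (N.det * (N.submatrix Fin.succ Fin.castSucc).det *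
    (N.submatrix Fin.castSucc Fin.succ).det) * h5

/-- Desnanot–Jacobi identity. -/
theorem jacobi (m : ℕ) (N : Matrix (Fin (m + 2)) (Fin (m + 2)) ℝ) :
    (N.submatrix Fin.succ Fin.succ).det * (N.submatrix Fin.castSucc Fin.castSucc).det -
      (N.submatrix Fin.succ Fin.castSucc).det * (N.submatrix Fin.castSucc Fin.succ).det =
    N.det * (N.submatrix (fun i : Fin m => i.castSucc.succ)
      (fun j : Fin m => j.castSucc.succ)).det := by
  have h := mul_left_cancel₀ (Matrix.det_mvPolynomialX_ne_zero (Fin (m + 2)) ℝ)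
    (jacobi_aux m (Matrix.mvPolynomialX (Fin (m + 2)) (Fin (m + 2)) ℝ))
  have h2 := congrArg (MvPolynomial.eval fun p : Fin (m + 2) × Fin (m + 2) => N p.1 p.2) h
  have key : ∀ (k : ℕ) (f g : Fin k → Fin (m + 2)),
      MvPolynomial.eval (fun p : Fin (m + 2) × Fin (m + 2) => N p.1 p.2)
        ((Matrix.mvPolynomialX (Fin (m + 2)) (Fin (m + 2)) ℝ).submatrix f g).det =
      (N.submatrix f g).det := by
    intro k f g
    rw [RingHom.map_det]
    congr 1
    ext i j
    simp
  have key0 := key _ id id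
  simp only [Matrix.submatrix_id_id] at key0
  simpa only [map_sub, map_mul, key, key0] using h2

theorem det_single_col (m : ℕ) (N : Matrix (Fin (m + 1)) (Fin (m + 1)) ℝ) (p : Fin (m + 1))
    (h : ∀ k, N k 0 = if k = p then 1 else 0) :
    N.det = (-1) ^ (p : ℕ) * (N.submatrix p.succAbove Fin.succ).det := by
  rw [Matrix.det_succ_column_zero, Finset.sum_eq_single p]
  · simp [h]
  · intro b _ hb; simp [h, hb]
  · simp

/-- Contiguous minor. -/
noncomputable def D (A : ℤ → ℤ → ℝ) (r s : ℤ) (y : ℕ) : ℝ :=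
  Matrix.det (Matrix.of fun k l : Fin y => A (r + (k : ℕ)) (s + (l : ℕ)))

/-- Minor with rows `r, …, r+y-1, i` and columns `s, …, s+y`. -/
noncomputable def R (A : ℤ → ℤ → ℝ) (r s : ℤ) (y : ℕ) (i : ℤ) : ℝ :=
  Matrix.det (Matrix.of fun k l : Fin (y + 1) =>
    A (if (k : ℕ) < y then r + (k : ℕ) else i) (s + (l : ℕ)))

theorem R_contig (A : ℤ → ℤ → ℝ) (r s : ℤ) (y : ℕ) : R A r s y (r + y) = D A r s (y + 1) := by
  unfold R D
  congr 1
  ext k l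
  simp only [Matrix.of_apply]
  congr 1
  have := k.2
  split_ifs <;> omega

theorem R_zero (A : ℤ → ℤ → ℝ) (r s i : ℤ) : R A r s 0 i = A i s := by
  simp [R]

theorem D_one (A : ℤ → ℤ → ℝ) (r s : ℤ) : D A r s 1 = A r s := by
  simp [D]

theorem step2 (A : ℤ → ℤ → ℝ) (r s : ℤ) (y : ℕ) (i : ℤ) :
    R A (r + 1) (s + 1) y i * D A r s (y + 1) =
      R A r s (y + 1) i * D A (r + 1) (s + 1) y + R A (r + 1) s y i * D A r (s + 1) (y + 1) := by
  have h := jacobi y (Matrix.of fun k l : Fin (y + 2) =>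
    A (if (k : ℕ) < y + 1 then r + (k : ℕ) else i) (s + (l : ℕ)))
  have h1 : R A (r + 1) (s + 1) y i = ((Matrix.of fun k l : Fin (y + 2) =>
      A (if (k : ℕ) < y + 1 then r + (k : ℕ) else i) (s + (l : ℕ))).submatrix
        Fin.succ Fin.succ).det := by
    unfold R; congr 1; ext k l
    simp only [Matrix.of_apply, Matrix.submatrix_apply, Fin.val_succ]
    congr 1
    · split_ifs <;> push_cast <;> omega
    · push_cast; ring
  have h2 : D A r s (y + 1) = ((Matrix.of fun k l : Fin (y + 2) =>
      A (if (k : ℕ) < y + 1 then r + (k : ℕ) else i) (s + (l : ℕ))).submatrix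
        Fin.castSucc Fin.castSucc).det := by
    unfold D; congr 1; ext k l
    simp only [Matrix.of_apply, Matrix.submatrix_apply, Fin.val_castSucc]
    rw [if_pos k.2]
  have h3 : R A (r + 1) s y i = ((Matrix.of fun k l : Fin (y + 2) =>
      A (if (k : ℕ) < y + 1 then r + (k : ℕ) else i) (s + (l : ℕ))).submatrix
        Fin.succ Fin.castSucc).det := by
    unfold R; congr 1; ext k l
    simp only [Matrix.of_apply, Matrix.submatrix_apply, Fin.val_succ, Fin.val_castSucc]
    congr 1
    split_ifs <;> push_cast <;> omega
  have h4 : D A r (s + 1) (y + 1) = ((Matrix.of fun k l : Fin (y + 2) =>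
      A (if (k : ℕ) < y + 1 then r + (k : ℕ) else i) (s + (l : ℕ))).submatrix
        Fin.castSucc Fin.succ).det := by
    unfold D; congr 1; ext k l
    simp only [Matrix.of_apply, Matrix.submatrix_apply, Fin.val_succ, Fin.val_castSucc]
    congr 1
    · rw [if_pos k.2]
    · push_cast; ring
  have h5 : D A (r + 1) (s + 1) y = ((Matrix.of fun k l : Fin (y + 2) =>
      A (if (k : ℕ) < y + 1 then r + (k : ℕ) else i) (s + (l : ℕ))).submatrix
        (fun i : Fin y => i.castSucc.succ) (fun j : Fin y => j.castSucc.succ)).det := by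
    unfold D; congr 1; ext k l
    simp only [Matrix.of_apply, Matrix.submatrix_apply, Fin.val_succ, Fin.val_castSucc]
    congr 1
    · rw [if_pos (by omega)]; push_cast; ring
    · push_cast; ring
  rw [← h1, ← h2, ← h3, ← h4, ← h5] at h
  change _ = R A r s (y + 1) i * _ at h
  linarith

/-- The auxiliary matrix for `step1`. -/
noncomputable def auxN (A : ℤ → ℤ → ℝ) (r s : ℤ) (y : ℕ) (i : ℤ) :
    Matrix (Fin (y + 3)) (Fin (y + 3)) ℝ :=
  Matrix.of fun k l => if (l : ℕ) = 0 then (if (k : ℕ) = y + 1 then 1 else 0) else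
    A (if (k : ℕ) < y + 2 then r + (k : ℕ) else i) (s + (l : ℕ) - 1)

theorem succAbove_val {m : ℕ} (p : Fin (m + 1)) (k : Fin m) :
    ((p.succAbove k : Fin (m + 1)) : ℕ) = if (k : ℕ) < p then (k : ℕ) else k + 1 := by
  unfold Fin.succAbove
  by_cases h : k.castSucc < p
  · have h' : (k : ℕ) < p := h
    simp [h, h']
  · have h' : ¬ (k : ℕ) < p := h
    simp [h, h']

theorem step1 (A : ℤ → ℤ → ℝ) (r s : ℤ) (y : ℕ) (i : ℤ) :
    R A r s (y + 1) i * D A (r + 1) s (y + 1) =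
      R A (r + 1) s (y + 1) i * D A r s (y + 1) + R A (r + 1) s y i * D A r s (y + 2) := by
  have h := jacobi (y + 1) (auxN A r s y i)
  have h1 : R A (r + 1) s (y + 1) i = ((auxN A r s y i).submatrix Fin.succ Fin.succ).det := by
    unfold R; congr 1; ext k l
    simp only [auxN, Matrix.of_apply, Matrix.submatrix_apply, Fin.val_succ]
    rw [if_neg (Nat.succ_ne_zero _)]
    congr 1
    · split_ifs <;> push_cast <;> omega
    · push_cast; ring
  have h2 : D A r s (y + 2) = ((auxN A r s y i).submatrix Fin.castSucc Fin.succ).det := by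
    unfold D; congr 1; ext k l
    simp only [auxN, Matrix.of_apply, Matrix.submatrix_apply, Fin.val_succ, Fin.val_castSucc]
    rw [if_neg (Nat.succ_ne_zero _), if_pos k.2]
    congr 1
    push_cast; ring
  have h3 : D A (r + 1) s (y + 1) = ((auxN A r s y i).submatrix
      (fun i : Fin (y + 1) => i.castSucc.succ) (fun j : Fin (y + 1) => j.castSucc.succ)).det := by
    unfold D; congr 1; ext k l
    simp only [auxN, Matrix.of_apply, Matrix.submatrix_apply, Fin.val_succ, Fin.val_castSucc]
    rw [if_neg (Nat.succ_ne_zero _), if_pos (by omega)]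
    congr 1
    · push_cast; ring
    · push_cast; ring
  have h4 : (auxN A r s y i).det = (-1) ^ (y + 1) * R A r s (y + 1) i := by
    rw [det_single_col _ _ ⟨y + 1, by omega⟩]
    · congr 1
      unfold R; congr 1; ext k l
      simp only [auxN, Matrix.of_apply, Matrix.submatrix_apply, Fin.val_succ, succAbove_val]
      rw [if_neg (Nat.succ_ne_zero _)]
      have := k.2
      congr 1
      · split_ifs <;> push_cast <;> omega
      · push_cast; ring
    · intro k
      simp only [auxN, Matrix.of_apply, Matrix.submatrix_apply, Fin.ext_iff, Fin.val_zero,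
        Fin.castSucc_zero, Fin.val_succ, Fin.val_castSucc]
      split_ifs <;> first | rfl | omega
  have h5 : ((auxN A r s y i).submatrix Fin.castSucc Fin.castSucc).det =
      (-1) ^ (y + 1) * D A r s (y + 1) := by
    rw [det_single_col _ _ ⟨y + 1, by omega⟩]
    · congr 1
      unfold D; congr 1; ext k l
      simp only [auxN, Matrix.of_apply, Matrix.submatrix_apply, Fin.val_succ, Fin.val_castSucc,
        succAbove_val]
      rw [if_neg (Nat.succ_ne_zero _)]
      have := k.2
      congr 1
      · split_ifs <;> push_cast <;> omega
      · push_cast; ring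
    · intro k
      simp only [auxN, Matrix.of_apply, Matrix.submatrix_apply, Fin.ext_iff, Fin.val_zero,
        Fin.castSucc_zero, Fin.val_succ, Fin.val_castSucc]
      split_ifs <;> first | rfl | omega
  have h6 : ((auxN A r s y i).submatrix Fin.succ Fin.castSucc).det =
      (-1) ^ y * R A (r + 1) s y i := by
    rw [det_single_col _ _ ⟨y, by omega⟩]
    · congr 1
      unfold R; congr 1; ext k l
      simp only [auxN, Matrix.of_apply, Matrix.submatrix_apply, Fin.val_succ, Fin.val_castSucc,
        succAbove_val]
      rw [if_neg (Nat.succ_ne_zero _)]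
      have := k.2
      congr 1
      · split_ifs <;> push_cast <;> omega
      · push_cast; ring
    · intro k
      simp only [auxN, Matrix.of_apply, Matrix.submatrix_apply, Fin.ext_iff, Fin.val_zero,
        Fin.castSucc_zero, Fin.val_succ, Fin.val_castSucc]
      split_ifs <;> first | rfl | omega
  rw [← h1, ← h2, ← h3, h4, h5, h6] at h
  have h7 : ((-1 : ℝ)) ^ y * (-1) ^ y = 1 := by rw [← mul_pow]; simp
  rw [pow_succ] at h
  linear_combination ((-1 : ℝ) ^ y) * h + (R A (r + 1) s (y + 1) i * D A r s (y + 1)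
    + R A (r + 1) s y i * D A r s (y + 2) - R A r s (y + 1) i * D A (r + 1) s (y + 1)) * h7

/-- The matrix as a doubly periodic array with reversed columns. -/
def arr (n : ℕ) (M : Matrix (ZMod n) (ZMod n) ℝ) : ℤ → ℤ → ℝ :=
  fun i s => M ((i : ℤ) : ZMod n) (((-s : ℤ)) : ZMod n)

theorem arr_D (n : ℕ) (M : Matrix (ZMod n) (ZMod n) ℝ) (r s : ℤ) (y : ℕ) :
    D (arr n M) r s y = contiguousMinor n M r (1 - s - y) y := by
  unfold D contiguousMinor arr
  congr 1; ext k l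
  simp only [Matrix.of_apply]
  congr 2
  ring

theorem contig_congr (n : ℕ) (M : Matrix (ZMod n) (ZMod n) ℝ) (a b : ℤ) (y : ℕ) (k : ℤ) :
    contiguousMinor n M (a - n * k) (b - n * k) y = contiguousMinor n M a b y := by
  unfold contiguousMinor
  congr 1; ext i j
  simp

theorem central_exists (n : ℕ) [NeZero n] (r s : ℤ) (y : ℕ) (hy : y ≤ n)
    (h : r + s + y = 1 - ((n : ℤ) - 1) / 2 ∨ r + s + y = - (((n : ℤ) - 1) / 2)) :
    ∃ σ : CentralIdx n, ∀ M : Matrix (ZMod n) (ZMod n) ℝ,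
      D (arr n M) r s y = centralMinor n M σ.1.1 σ.1.2 := by
  have hn : 0 < (n : ℤ) := by exact_mod_cast Nat.pos_of_ne_zero (NeZero.ne n)
  obtain ⟨x, hx⟩ : ∃ x : ℤ, x = y + 2 * r + (1 - ((n : ℤ) - 1) / 2 - (r + s + y)) := ⟨_, rfl⟩
  have hm := Int.emod_add_mul_ediv (x - 1) (2 * n)
  have h0 := Int.emod_nonneg (x - 1) (b := 2 * n) (by omega)
  have h1 := Int.emod_lt_of_pos (x - 1) (b := 2 * n) (by omega)
  refine ⟨⟨((x - 1) % (2 * n) + 1, y), ?_, ?_, hy⟩, ?_⟩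
  · show 1 ≤ (x - 1) % (2 * n) + 1
    omega
  · show (x - 1) % (2 * n) + 1 ≤ 2 * n
    omega
  · intro M
    simp only
    rw [arr_D, ← contig_congr n M _ _ y ((x - 1) / (2 * n))]
    unfold centralMinor
    generalize (x - 1) % (2 * n) = w at *
    rw [Int.fdiv_eq_ediv_of_nonneg _ (by norm_num), Int.fdiv_eq_ediv_of_nonneg _ (by norm_num)]
    rw [mul_assoc] at hm
    generalize (n : ℤ) * ((x - 1) / (2 * n)) = q at *
    congr 1
    · omega
    · omega

/-- Positive Laurent functions. -/
def Good (n : ℕ) (f : Matrix (ZMod n) (ZMod n) ℝ → ℝ) : Prop :=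
  ∃ (e : (CentralIdx n) →₀ ℕ) (p : MvPolynomial (CentralIdx n) ℝ),
      (∀ m : (CentralIdx n) →₀ ℕ, 0 ≤ MvPolynomial.coeff m p) ∧
      ∀ M : Matrix (ZMod n) (ZMod n) ℝ,
        f M * e.prod (fun s k => (centralMinor n M s.1.1 s.1.2) ^ k) =
          MvPolynomial.eval (fun s : CentralIdx n => centralMinor n M s.1.1 s.1.2) p

theorem nonneg_mul {σ : Type*} (p q : MvPolynomial σ ℝ)
    (hp : ∀ m, 0 ≤ MvPolynomial.coeff m p) (hq : ∀ m, 0 ≤ MvPolynomial.coeff m q) :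
    ∀ m, 0 ≤ MvPolynomial.coeff m (p * q) := by
  classical
  intro m
  rw [MvPolynomial.coeff_mul]
  exact Finset.sum_nonneg fun x _ => mul_nonneg (hp _) (hq _)

theorem nonneg_monomial {σ : Type*} (e : σ →₀ ℕ) :
    ∀ m, 0 ≤ MvPolynomial.coeff m (MvPolynomial.monomial e (1 : ℝ)) := by
  classical
  intro m
  rw [MvPolynomial.coeff_monomial]
  split_ifs <;> norm_num

theorem good_central (n : ℕ) (σ : CentralIdx n) :
    Good n fun M => centralMinor n M σ.1.1 σ.1.2 := by
  refine ⟨0, MvPolynomial.X σ, nonneg_monomial _, ?_⟩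
  intro M
  simp

theorem good_step (n : ℕ) (f f1 f2 : Matrix (ZMod n) (ZMod n) ℝ → ℝ) (h1 : Good n f1)
    (h2 : Good n f2) (c a b : CentralIdx n)
    (h : ∀ M, f M * centralMinor n M c.1.1 c.1.2 =
      f1 M * centralMinor n M a.1.1 a.1.2 + f2 M * centralMinor n M b.1.1 b.1.2) : Good n f := by
  obtain ⟨e1, p1, hp1, h1⟩ := h1
  obtain ⟨e2, p2, hp2, h2⟩ := h2
  refine ⟨e1 + e2 + Finsupp.single c 1,
    p1 * MvPolynomial.monomial (e2 + Finsupp.single a 1) 1 +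
      p2 * MvPolynomial.monomial (e1 + Finsupp.single b 1) 1, ?_, ?_⟩
  · intro m
    rw [MvPolynomial.coeff_add]
    exact add_nonneg (nonneg_mul _ _ hp1 (nonneg_monomial _) m)
      (nonneg_mul _ _ hp2 (nonneg_monomial _) m)
  · intro M
    have hadd : ∀ u v : (CentralIdx n) →₀ ℕ,
        (u + v).prod (fun s k => (centralMinor n M s.1.1 s.1.2) ^ k) =
        u.prod (fun s k => (centralMinor n M s.1.1 s.1.2) ^ k) *
        v.prod (fun s k => (centralMinor n M s.1.1 s.1.2) ^ k) := by
      intro u v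
      exact Finsupp.prod_add_index' (fun _ => pow_zero _) (fun _ _ _ => pow_add _ _ _)
    have hs : ∀ u : CentralIdx n,
        (Finsupp.single u 1).prod (fun s k => (centralMinor n M s.1.1 s.1.2) ^ k) =
        centralMinor n M u.1.1 u.1.2 := by
      intro u
      rw [Finsupp.prod_single_index] <;> simp
    rw [map_add, map_mul, map_mul, MvPolynomial.eval_monomial, MvPolynomial.eval_monomial,
      ← h1, ← h2, hadd, hadd, hadd, hadd, hs, hs, hs]
    linear_combination (e1.prod (fun s k => (centralMinor n M s.1.1 s.1.2) ^ k) *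
      e2.prod (fun s k => (centralMinor n M s.1.1 s.1.2) ^ k)) * h M

theorem good_R (n : ℕ) [NeZero n] (g : ℕ) : ∀ (y : ℕ) (r s i : ℤ), y + g + 1 ≤ n →
    r + s + y = - (((n : ℤ) - 1) / 2) → i = r + y + g →
    Good n fun M => R (arr n M) r s y i := by
  induction g with
  | zero =>
    intro y r s i hy h hi
    obtain ⟨σ, hσ⟩ := central_exists n r s (y + 1) (by omega) (by left; push_cast; omega)
    have hi' : i = r + y := by simpa using hi
    subst hi'
    simp only [R_contig, hσ]
    exact good_central n σ
  | succ g ih =>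
    -- the next layer
    have layer : ∀ (y : ℕ) (r s i : ℤ), y + 1 + g + 1 ≤ n →
        r + s + y = 1 - (((n : ℤ) - 1) / 2) → i = r + y + g →
        Good n fun M => R (arr n M) r s y i := by
      intro y r s i hy h hi
      obtain ⟨r, rfl⟩ : ∃ r', r = r' + 1 := ⟨r - 1, by ring⟩
      obtain ⟨s, rfl⟩ : ∃ s', s = s' + 1 := ⟨s - 1, by ring⟩
      obtain ⟨c, hc⟩ := central_exists n r s (y + 1) (by omega) (by push_cast; omega)
      obtain ⟨a, ha⟩ := central_exists n (r + 1) (s + 1) y (by omega) (by omega)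
      obtain ⟨b, hb⟩ := central_exists n r (s + 1) (y + 1) (by omega) (by push_cast; omega)
      refine good_step n _ (fun M => R (arr n M) r s (y + 1) i)
        (fun M => R (arr n M) (r + 1) s y i)
        (ih _ _ _ _ (by omega) (by push_cast; omega) (by push_cast; omega))
        (ih _ _ _ _ (by omega) (by omega) (by omega)) c a b ?_
      intro M
      rw [← hc, ← ha, ← hb]
      exact step2 _ _ _ _ _
    intro y
    induction y with
    | zero =>
      intro r s i hy h hi
      have := layer 0 (r + 1) s i (by omega) (by omega) (by push_cast at *; omega)
      simpa only [R_zero] using this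
    | succ y ihy =>
      intro r s i hy h hi
      push_cast at h hi
      obtain ⟨c, hc⟩ := central_exists n (r + 1) s (y + 1) (by omega) (by push_cast; omega)
      obtain ⟨a, ha⟩ := central_exists n r s (y + 1) (by omega) (by push_cast; omega)
      obtain ⟨b, hb⟩ := central_exists n r s (y + 2) (by omega) (by push_cast; omega)
      refine good_step n _ (fun M => R (arr n M) (r + 1) s (y + 1) i)
        (fun M => R (arr n M) (r + 1) s y i)
        (layer _ _ _ _ (by omega) (by push_cast; omega) (by push_cast; omega))
        (ihy _ _ _ (by omega) (by omega) (by push_cast; omega)) c a b ?_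
      intro M
      rw [← hc, ← ha, ← hb]
      exact step1 _ _ _ _ _

theorem entry (n : ℕ) [NeZero n] (i j : ZMod n) : Good n fun M => M i j := by
  have hn : 0 < (n : ℤ) := by exact_mod_cast Nat.pos_of_ne_zero (NeZero.ne n)
  obtain ⟨i, rfl⟩ := ZMod.intCast_surjective i
  obtain ⟨j, rfl⟩ := ZMod.intCast_surjective j
  obtain ⟨w, hw⟩ : ∃ w : ℤ, w = i - j + ((n : ℤ) - 1) / 2 := ⟨_, rfl⟩
  have hm := Int.emod_add_mul_ediv w n
  have h0 := Int.emod_nonneg w (b := n) (by omega)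
  have h1 := Int.emod_lt_of_pos w (b := n) (by omega)
  have h2 := good_R n (w % n).toNat 0 (j - ((n : ℤ) - 1) / 2) (-j)
    (i - n * (w / n)) (by omega) (by push_cast; ring)
    (by rw [Int.toNat_of_nonneg h0]; push_cast; linarith)
  simpa only [R_zero, arr, neg_neg, Int.cast_sub, Int.cast_mul, Int.cast_natCast, ZMod.natCast_self,
    zero_mul, sub_zero] using h2

end CentralAux

/-- Every matrix entry `M i j` of an `n × n` matrix is a positive-coefficient Laurent
polynomial in the central minors of `M`: there are a finitely supported exponent function `e`
on the central-minor index set and a polynomial `p` with nonnegative coefficients such that,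
for every `M`, `M i j · ∏ CM_{x,y}(M)^{e(x,y)} = p((CM_{x,y}(M))_{(x,y)})`. -/
theorem entry_laurent_in_central_minors (n : ℕ) [NeZero n] (i j : ZMod n) :
    ∃ (e : (CentralIdx n) →₀ ℕ) (p : MvPolynomial (CentralIdx n) ℝ),
      (∀ m : (CentralIdx n) →₀ ℕ, 0 ≤ MvPolynomial.coeff m p) ∧
      ∀ M : Matrix (ZMod n) (ZMod n) ℝ,
        M i j * e.prod (fun s k => (centralMinor n M s.1.1 s.1.2) ^ k) =
          MvPolynomial.eval (fun s : CentralIdx n => centralMinor n M s.1.1 s.1.2) p := by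
  exact CentralAux.entry n i j
end

section
/- Fix n ≥ 1 and integers a, b, y with 1 ≤ y such that the contiguous minor CM_{a,b,y} has disjoint row and column index sets, i.e. the sets {a, a+1, …, a+y−1} and {b, b+1, …, b+y−1} taken modulo n are disjoint. Then CM_{a,b,y}(M) is a positive-coefficient Laurent polynomial in the small central minors of M: there exist a finitely supported function e from the small-central-minor index set S = {(x,y') : 1 ≤ x ≤ 2n, and either 1 ≤ y' < n/2, or y' = n/2 and x+y' is odd} to ℕ and a multivariate real polynomial p in variables (X_s)_{s∈S} with all coefficients nonnegative, such that for every n×n real matrix M one has CM_{a,b,y}(M) · ∏_{s∈S} CM_s(M)^{e(s)} = p((CM_s(M))_{s∈S}). -/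
/-- The index set of the small central minors: pairs `(x,y)` with `1 ≤ x ≤ 2n` and
either `1 ≤ y < n/2`, or `y = n/2` and `x + y` odd. -/
def SmallIdx (n : ℕ) : Set (ℤ × ℕ) :=
  {s | 1 ≤ s.1 ∧ s.1 ≤ 2 * (n : ℤ) ∧
    ((1 ≤ s.2 ∧ 2 * s.2 < n) ∨ (2 * s.2 = n ∧ Odd (s.1 + (s.2 : ℤ))))}


namespace CML
open Matrix

section Plucker
variable {R : Type*} [CommRing R]

/-- Three-term Grassmann-Pluecker relation for two distinguished rows `p`, `q`. -/
theorem plucker {ι : Type*} [Fintype ι] [DecidableEq ι] (A : Matrix ι ι R) {p q : ι}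
    (hpq : p ≠ q) (u v x y : ι → R) :
    ((A.updateRow p u).updateRow q v).det * ((A.updateRow p y).updateRow q x).det =
      ((A.updateRow p x).updateRow q v).det * ((A.updateRow p y).updateRow q u).det +
      ((A.updateRow p u).updateRow q x).det * ((A.updateRow p y).updateRow q v).det := by
  set B := (A.updateRow p u).updateRow q v with hB
  let φ : (ι → R) →ₗ[R] R :=
    (Matrix.detRowAlternating (R := R) (n := ι)).toMultilinearMap.toLinearMap (A.updateRow p y) q
  have hφ : ∀ z, φ z = ((A.updateRow p y).updateRow q z).det := fun z => rfl
  have hc : ∑ l, (B.updateRow l x).det • B l = B.det • x := by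
    have h := Matrix.mulVec_cramer Bᵀ x
    rw [Matrix.det_transpose] at h
    rw [← h]
    funext i
    simp only [Finset.sum_apply, Pi.smul_apply, smul_eq_mul, Matrix.mulVec, dotProduct,
      Matrix.transpose_apply, Matrix.cramer_transpose_apply]
    exact Finset.sum_congr rfl fun l _ => mul_comm _ _
  have h2 := congrArg φ hc
  rw [map_sum, map_smul, hφ x, smul_eq_mul] at h2
  rw [← h2, ← Finset.sum_subset (Finset.subset_univ {p, q}), Finset.sum_pair hpq]
  · have e1 : B.updateRow p x = (A.updateRow p x).updateRow q v := by
      ext i j; simp only [hB, Matrix.updateRow_apply]; split_ifs <;> simp_all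
    have e2 : B.updateRow q x = (A.updateRow p u).updateRow q x := by
      ext i j; simp only [hB, Matrix.updateRow_apply]; split_ifs <;> simp_all
    have e3 : B p = u := by
      ext j; simp only [hB, Matrix.updateRow_apply]; simp [hpq]
    have e4 : B q = v := by
      ext j; simp only [hB, Matrix.updateRow_apply]; simp
    rw [map_smul, map_smul, e1, e2, e3, e4, hφ, hφ, smul_eq_mul, smul_eq_mul]
  · intro l _ hl
    simp only [Finset.mem_insert, Finset.mem_singleton, not_or] at hl
    rw [map_smul, hφ]
    have : ((A.updateRow p y).updateRow q (B l)).det = 0 := by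
      apply Matrix.det_zero_of_row_eq (i := l) (j := q) hl.2
      ext j
      simp [hB, Matrix.updateRow_apply, hl.1, hl.2]
    rw [this, smul_zero]

/-- Laplace expansion along a row which is a standard basis vector. -/
theorem det_row_single {N : ℕ} (A : Matrix (Fin (N + 1)) (Fin (N + 1)) R) (p q : Fin (N + 1))
    (h : A p = Pi.single q 1) :
    A.det = (-1) ^ ((p : ℕ) + (q : ℕ)) * (A.submatrix p.succAbove q.succAbove).det := by
  rw [Matrix.det_succ_row A p, Finset.sum_eq_single q]
  · rw [h]; simp
  · intro b _ hb
    rw [h]; simp [hb]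
  · simp

/-- Cyclically moving the first row to the end. -/
theorem det_rotate {m : ℕ} (A : Matrix (Fin (m + 1)) (Fin (m + 1)) R) :
    (A.submatrix (finRotate (m + 1)) id).det = (-1) ^ m * A.det := by
  rw [Matrix.det_permute, sign_finRotate, Nat.add_sub_cancel]
  push_cast
  simp

end Plucker

section Ring
variable {R : Type*} [CommRing R]

/-- Contiguous minors of a bi-infinite array. -/
def F (L : ℤ → ℤ → R) (a b : ℤ) (y : ℕ) : R :=
  Matrix.det (Matrix.of fun i j : Fin y => L (a + (i : ℤ)) (b + (y : ℤ) - 1 - (j : ℤ)))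

/-- Minors with rows `a, …, a+y`, columns `j, b+y, …, b+1`. -/
def rho (L : ℤ → ℤ → R) (a b : ℤ) (y : ℕ) (j : ℤ) : R :=
  Matrix.det (Matrix.of fun l i : Fin (y + 1) =>
    L (a + (i : ℤ)) (if l = 0 then j else b + (y : ℤ) + 1 - (l : ℤ)))

theorem F_eq (L : ℤ → ℤ → R) (a b : ℤ) (y : ℕ) : F L a b y =
    Matrix.det (Matrix.of fun l i : Fin y => L (a + (i : ℤ)) (b + (y : ℤ) - 1 - (l : ℤ))) := by
  rw [F, ← Matrix.det_transpose]; rfl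

theorem F_zero (L : ℤ → ℤ → R) (a b : ℤ) : F L a b 0 = 1 := by
  simp [F]

theorem bstep (L : ℤ → ℤ → R) (a b j : ℤ) (m : ℕ) :
    rho L a (b - 1) (m + 1) j * F L a (b + 1) (m + 1) =
      rho L a b (m + 1) j * F L a b (m + 1) + F L a b (m + 2) * rho L a b m j := by
  let V : ℤ → Fin (m + 2) → R := fun c i => L (a + (i : ℤ)) c
  let A : Matrix (Fin (m + 2)) (Fin (m + 2)) R :=
    Matrix.of fun l => V (b + m + 1 - (l : ℤ))
  have h0l : (0 : Fin (m + 2)) ≠ Fin.last (m + 1) := by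
    intro h; simpa using congrArg Fin.val h
  have hP := plucker A h0l (V j) (V b) (Pi.single (Fin.last (m + 1)) 1) (V (b + m + 1))
  have h1 : ((A.updateRow 0 (V j)).updateRow (Fin.last (m + 1)) (V b)).det
      = rho L a (b - 1) (m + 1) j := by
    rw [rho]; congr 1; ext l i
    simp only [Matrix.updateRow_apply, Matrix.of_apply, A, V]
    split_ifs with h h' h'
    · exact absurd (h'.symm.trans h) h0l
    · subst h; congr 1; simp
    · rfl
    · congr 1; push_cast; ring
  have h2 : ((A.updateRow 0 (V (b + m + 1))).updateRow (Fin.last (m + 1))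
      (Pi.single (Fin.last (m + 1)) 1)).det = F L a (b + 1) (m + 1) := by
    rw [det_row_single _ (Fin.last (m + 1)) (Fin.last (m + 1)) (by simp), F_eq]
    rw [← two_mul, pow_mul]
    simp only [even_two, Even.neg_pow, one_pow, one_mul]
    congr 1; ext l i
    simp only [Matrix.submatrix_apply, Fin.succAbove_last, Matrix.updateRow_apply, Matrix.of_apply,
      A, V, (Fin.castSucc_lt_last l).ne, if_false, Fin.val_castSucc]
    split_ifs with h
    · have : (l : ℕ) = 0 := by simpa using congrArg Fin.val h
      congr 1; rw [this]; push_cast; ring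
    · congr 1; push_cast; ring
  have h3 : ((A.updateRow 0 (Pi.single (Fin.last (m + 1)) 1)).updateRow (Fin.last (m + 1)) (V b)).det
      = (-1) ^ (m + 1) * F L a b (m + 1) := by
    rw [det_row_single _ 0 (Fin.last (m + 1)) (by
      rw [Matrix.updateRow_ne h0l]; simp), F_eq]
    simp only [Fin.val_zero, Fin.val_last, zero_add]
    congr 2; ext l i
    simp only [Matrix.submatrix_apply, Fin.succAbove_last, Fin.succAbove_zero, Matrix.updateRow_apply,
      Matrix.of_apply, A, V, Fin.val_castSucc, Fin.succ_ne_zero, if_false]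
    split_ifs with h
    · have : (l : ℕ) = m := by simpa using congrArg Fin.val h
      congr 1; rw [this]; push_cast; ring
    · congr 1; simp; ring
  have h4 : ((A.updateRow 0 (V (b + m + 1))).updateRow (Fin.last (m + 1)) (V j)).det
      = (-1) ^ (m + 1) * rho L a b (m + 1) j := by
    rw [rho, ← det_rotate]
    congr 1; ext l i
    simp only [Matrix.submatrix_apply, Matrix.updateRow_apply, Matrix.of_apply, A, V, id]
    by_cases h : l = Fin.last (m + 1)
    · subst h; simp
    · obtain ⟨l, rfl⟩ := Fin.exists_castSucc_eq.2 h
      have h5 : finRotate (m + 2) (Fin.castSucc l) = l.succ := by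
        rw [finRotate_apply]; simp
      rw [h5]
      simp only [h, if_false, Fin.succ_ne_zero]
      split_ifs with h'
      · have : (l : ℕ) = 0 := by simpa using congrArg Fin.val h'
        congr 1; simp [this]; ring
      · congr 1; push_cast; simp; ring
  have h5 : ((A.updateRow 0 (V j)).updateRow (Fin.last (m + 1))
      (Pi.single (Fin.last (m + 1)) 1)).det = rho L a b m j := by
    rw [det_row_single _ (Fin.last (m + 1)) (Fin.last (m + 1)) (by simp), rho]
    rw [← two_mul, pow_mul]
    simp only [even_two, Even.neg_pow, one_pow, one_mul]
    congr 1; ext l i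
    simp only [Matrix.submatrix_apply, Fin.succAbove_last, Matrix.updateRow_apply, Matrix.of_apply,
      A, V, (Fin.castSucc_lt_last l).ne, if_false, Fin.val_castSucc, Fin.castSucc_eq_zero_iff]
    split_ifs with h
    · rfl
    · congr 1
  have h6 : ((A.updateRow 0 (V (b + m + 1))).updateRow (Fin.last (m + 1)) (V b)).det
      = F L a b (m + 2) := by
    rw [F_eq]; congr 1; ext l i
    simp only [Matrix.updateRow_apply, Matrix.of_apply, A, V]
    split_ifs with h h'
    · subst h; congr 1; simp; ring
    · subst h'; congr 1; simp; ring
    · congr 1; push_cast; ring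
  rw [h1, h2, h3, h4, h5, h6] at hP
  rw [hP]
  have : ((-1 : R) ^ (m + 1)) * (-1) ^ (m + 1) = 1 := by
    rw [← mul_pow]; simp
  linear_combination (rho L a b (m + 1) j * F L a b (m + 1)) * this

theorem astep (L : ℤ → ℤ → R) (a b j : ℤ) (m : ℕ) :
    rho L a b m j * F L (a + 1) (b + 1) (m + 1) =
      rho L (a + 1) b m j * F L a (b + 1) (m + 1) +
        rho L a b (m + 1) j * F L (a + 1) (b + 1) m := by
  let V : ℤ → Fin (m + 2) → R := fun c i => L (a + (i : ℤ)) c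
  let A : Matrix (Fin (m + 2)) (Fin (m + 2)) R :=
    Matrix.of fun l => V (b + m + 2 - (l : ℤ))
  have h01 : (0 : Fin (m + 2)) ≠ 1 := by
    intro h; simpa using congrArg Fin.val h
  let q : Fin (m + 2) → R := Pi.single (Fin.last (m + 1)) 1
  let t : Fin (m + 2) → R := Pi.single 0 1
  have hP := plucker A h01 (V j) (V (b + m + 1)) q t
  have h1 : ((A.updateRow 0 (V j)).updateRow 1 (V (b + m + 1))).det = rho L a b (m + 1) j := by
    rw [rho]; congr 1; ext l i
    simp only [Matrix.updateRow_apply, Matrix.of_apply, A, V]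
    split_ifs with h h' h'
    · exact absurd (h'.symm.trans h) h01
    · subst h; congr 1; simp; ring
    · rfl
    · congr 1; push_cast; ring
  have h2 : ((A.updateRow 0 t).updateRow 1 q).det = (-1) ^ m * F L (a + 1) (b + 1) m := by
    rw [det_row_single _ 0 0 (by rw [Matrix.updateRow_ne h01]; simp [t])]
    rw [det_row_single _ 0 (Fin.last m) (by
      funext i
      simp [q, Matrix.updateRow_apply, Pi.single_apply, Fin.ext_iff]), F_eq]
    simp only [Fin.val_zero, Fin.val_last, zero_add, pow_zero, one_mul]
    congr 2; ext l i
    have e1 : (l.succ.succ : Fin (m + 2)) ≠ 1 := by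
      intro h; simpa using congrArg Fin.val h
    simp only [Matrix.submatrix_apply, Fin.succAbove_last, Fin.succAbove_zero,
      Matrix.updateRow_apply, Matrix.of_apply, A, V, Fin.succ_ne_zero, if_false, e1]
    congr 1 <;> · simp; ring
  have h3 : ((A.updateRow 0 q).updateRow 1 (V (b + m + 1))).det
      = (-1) ^ (m + 1) * F L a (b + 1) (m + 1) := by
    rw [det_row_single _ 0 (Fin.last (m + 1)) (by rw [Matrix.updateRow_ne h01]; simp [q]), F_eq]
    simp only [Fin.val_zero, Fin.val_last, zero_add]
    congr 2; ext l i
    simp only [Matrix.submatrix_apply, Fin.succAbove_last, Fin.succAbove_zero,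
      Matrix.updateRow_apply, Matrix.of_apply, A, V, Fin.succ_ne_zero, if_false, Fin.val_castSucc]
    split_ifs with h
    · have : (l : ℕ) = 0 := by simpa using congrArg Fin.val h
      congr 1; simp [this]; ring
    · congr 1; simp; ring
  have h4 : ((A.updateRow 0 t).updateRow 1 (V j)).det = rho L (a + 1) b m j := by
    rw [det_row_single _ 0 0 (by rw [Matrix.updateRow_ne h01]; simp [t]), rho]
    simp only [Fin.val_zero, zero_add, pow_zero, one_mul]
    congr 1; ext l i
    have e1 : (l.succ : Fin (m + 2)) = 1 ↔ l = 0 := by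
      rw [← Fin.succ_zero_eq_one, Fin.succ_inj]
    simp only [Matrix.submatrix_apply, Fin.succAbove_zero,
      Matrix.updateRow_apply, Matrix.of_apply, A, V, Fin.succ_ne_zero, if_false, e1]
    split_ifs with h
    · congr 1; simp; ring
    · congr 1 <;> · simp; ring
  have h5 : ((A.updateRow 0 (V j)).updateRow 1 q).det = (-1) ^ m * rho L a b m j := by
    rw [det_row_single _ 1 (Fin.last (m + 1)) (by simp [q]), rho]
    have e0 : (-1 : R) ^ (((1 : Fin (m + 2)) : ℕ) + ((Fin.last (m + 1) : Fin (m + 2)) : ℕ))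
        = (-1) ^ m := by
      simp; ring
    rw [e0]
    congr 2; ext l i
    simp only [Matrix.submatrix_apply, Fin.succAbove_last, Matrix.updateRow_apply, Matrix.of_apply,
      A, V, Fin.val_castSucc, Fin.succAbove_ne, if_false]
    refine Fin.cases ?_ (fun l => ?_) l
    · simp
    · have : (1 : Fin (m + 2)).succAbove l.succ = l.succ.succ := by
        rw [Fin.succAbove_of_le_castSucc]
        rw [Fin.le_def]; simp
      rw [this]
      simp only [Fin.succ_ne_zero, if_false]
      congr 1; simp; ring
  have h6 : ((A.updateRow 0 t).updateRow 1 (V (b + m + 1))).det = F L (a + 1) (b + 1) (m + 1) := by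
    rw [det_row_single _ 0 0 (by rw [Matrix.updateRow_ne h01]; simp [t]), F_eq]
    simp only [Fin.val_zero, zero_add, pow_zero, one_mul]
    congr 1; ext l i
    have e1 : (l.succ : Fin (m + 2)) = 1 ↔ l = 0 := by
      rw [← Fin.succ_zero_eq_one, Fin.succ_inj]
    simp only [Matrix.submatrix_apply, Fin.succAbove_zero,
      Matrix.updateRow_apply, Matrix.of_apply, A, V, Fin.succ_ne_zero, if_false, e1]
    split_ifs with h
    · subst h; congr 1 <;> · simp; ring
    · congr 1 <;> · simp; ring
  rw [h1, h2, h3, h4, h5, h6] at hP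
  have : ((-1 : R) ^ m) * (-1) ^ m = 1 := by
    rw [← mul_pow]; simp
  rw [pow_succ] at hP
  linear_combination (-(-1) ^ m) * hP + (rho L a b (m + 1) j * F L (a + 1) (b + 1) m +
    F L a (b + 1) (m + 1) * rho L (a + 1) b m j - rho L a b m j * F L (a + 1) (b + 1) (m + 1)) * this

theorem rho_zero (L : ℤ → ℤ → R) (a b j : ℤ) : rho L a b 0 j = L a j := by
  simp [rho]

theorem rho_vanish (L : ℤ → ℤ → R) (a b j : ℤ) (y : ℕ) (h1 : b < j) (h2 : j ≤ b + y) :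
    rho L a b y j = 0 := by
  obtain ⟨k, hk⟩ : ∃ k : ℕ, b + y + 1 - j = k := ⟨(b + y + 1 - j).toNat, by omega⟩
  have hne : (0 : Fin (y + 1)) ≠ ⟨k, by omega⟩ := by
    intro h; have := congrArg Fin.val h; simp at this; omega
  apply Matrix.det_zero_of_row_eq hne
  ext i
  simp only [Matrix.of_apply, if_true, hne.symm, if_false]
  congr 1; omega

theorem rho_top (L : ℤ → ℤ → R) (a b : ℤ) (y : ℕ) :
    rho L a b y (b + y + 1) = F L a (b + 1) (y + 1) := by
  rw [rho, F_eq]; congr 1; ext l i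
  simp only [Matrix.of_apply]
  split_ifs with h
  · subst h; congr 1; simp; ring
  · congr 1; push_cast; ring

end Ring
end CML
namespace CML
open Matrix

section TN
variable {R : Type*} [CommRing R]

/-- Elements of `P` by which one may divide. -/
def Good (P : Subsemiring R) (c : R) : Prop := c ∈ P ∧ ∀ g, g * c ∈ P → g ∈ P

/-- All minors with rows `< Y` and columns in `(lo, hi]` lie in `P`. -/
def TN (P : Subsemiring R) (v : ℕ → ℤ → R) (Y : ℕ) (lo hi : ℤ) : Prop :=
  ∀ (k : ℕ) (s : Fin k → ℕ) (t : Fin k → ℤ), StrictMono s → StrictMono t → (∀ i, s i < Y) →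
    (∀ i, lo < t i ∧ t i ≤ hi) → (Matrix.of fun i l => v (s i) (t l)).det ∈ P

variable {P : Subsemiring R}

theorem Good.one : Good P 1 := ⟨P.one_mem, fun g h => by simpa using h⟩

theorem Good.mul {c d : R} (hc : Good P c) (hd : Good P d) : Good P (c * d) :=
  ⟨P.mul_mem hc.1 hd.1, fun g h => hc.2 _ (hd.2 _ (by rwa [mul_assoc]))⟩

theorem Good.prod {ι : Type*} (s : Finset ι) (f : ι → R) (h : ∀ i ∈ s, Good P (f i)) :
    Good P (∏ i ∈ s, f i) :=
  Finset.prod_induction f (Good P) (fun _ _ => Good.mul) Good.one h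

theorem TN.congr {u v : ℕ → ℤ → R} {Y : ℕ} {lo hi : ℤ} (hu : TN P u Y lo hi)
    (h : ∀ y < Y, ∀ j, lo < j → j ≤ hi → v y j = u y j) : TN P v Y lo hi := by
  intro k s t hs ht hsY htb
  have := hu k s t hs ht hsY htb
  convert this using 2
  ext i l
  exact h _ (hsY i) _ (htb l).1 (htb l).2

theorem TN.elem {u v : ℕ → ℤ → R} {Y : ℕ} {lo hi : ℤ} (hu : TN P u Y lo hi) {r r' : ℕ}
    (hr' : r' < Y) (hrr : r' = r + 1 ∨ r = r' + 1) {c p q : R} (hc : Good P c)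
    (hp : p ∈ P) (hq : q ∈ P)
    (h : ∀ y < Y, y ≠ r → ∀ j, lo < j → j ≤ hi → v y j = u y j)
    (hrow : ∀ j, lo < j → j ≤ hi → v r j * c = u r j * p + u r' j * q) : TN P v Y lo hi := by
  intro k s t hs ht hsY htb
  by_cases hex : ∃ i0, s i0 = r
  · obtain ⟨i0, hi0⟩ := hex
    apply hc.2
    set A : Matrix (Fin k) (Fin k) R := Matrix.of fun i l => u (s i) (t l) with hA
    have e1 : (Matrix.of fun i l => v (s i) (t l)) = A.updateRow i0 (fun l => v r (t l)) := by
      ext i l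
      rw [Matrix.updateRow_apply]
      split_ifs with hi
      · subst hi; simp [hi0]
      · simp only [Matrix.of_apply, hA]
        refine h _ (hsY i) (fun h' => hi (hs.injective (h'.trans hi0.symm))) _ (htb l).1 (htb l).2
    have e2 : (c • fun l => v r (t l)) = (p • A i0) + q • fun l => u r' (t l) := by
      funext l
      have := hrow (t l) (htb l).1 (htb l).2
      simp only [Pi.smul_apply, Pi.add_apply, smul_eq_mul, hA, Matrix.of_apply, hi0]
      linear_combination this
    have e3 : (Matrix.of fun i l => v (s i) (t l)).det * c =
        p * A.det + q * (A.updateRow i0 fun l => u r' (t l)).det := by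
      rw [e1, mul_comm, ← Matrix.det_updateRow_smul, e2, Matrix.det_updateRow_add,
        Matrix.det_updateRow_smul, Matrix.det_updateRow_smul, Matrix.updateRow_eq_self]
    rw [e3]
    refine P.add_mem (P.mul_mem hp (hu k s t hs ht hsY htb)) (P.mul_mem hq ?_)
    have e4 : (A.updateRow i0 fun l => u r' (t l)) =
        Matrix.of fun i l => u (Function.update s i0 r' i) (t l) := by
      ext i l
      rw [Matrix.updateRow_apply]
      by_cases hi : i = i0
      · subst hi; simp
      · simp [hi, hA]
    rw [e4]
    have hmono : Monotone (Function.update s i0 r') := by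
      intro i j hij
      rcases hij.eq_or_lt with rfl | hij
      · exact le_rfl
      have := hs hij
      by_cases h1 : i = i0
      · have h2 : j ≠ i0 := by rintro rfl; exact absurd h1 hij.ne
        subst h1
        simp only [Function.update_self, Function.update_of_ne h2]
        omega
      · by_cases h2 : j = i0
        · subst h2
          simp only [Function.update_self, Function.update_of_ne h1]
          omega
        · simp only [Function.update_of_ne h2, Function.update_of_ne h1]
          omega
    by_cases hinj : Function.Injective (Function.update s i0 r')
    · refine hu k _ t (hmono.strictMono_of_injective hinj) ht (fun i => ?_) htb
      by_cases h1 : i = i0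
      · subst h1; simpa using hr'
      · simpa [h1] using hsY i
    · rw [Function.Injective] at hinj
      push Not at hinj
      obtain ⟨i, j, hij, hne⟩ := hinj
      rw [Matrix.det_zero_of_row_eq hne (by ext l; simp only [Matrix.of_apply, hij])]
      exact P.zero_mem
  · push Not at hex
    have := hu k s t hs ht hsY htb
    convert this using 2
    ext i l
    exact h _ (hsY i) (hex i) _ (htb l).1 (htb l).2

theorem TN.lastRow {u : ℕ → ℤ → R} {Y : ℕ} {lo hi : ℤ} (hu : TN P u Y lo hi)
    (h1 : ∀ j, lo < j → j < hi → u Y j = 0) (h2 : u Y hi ∈ P) : TN P u (Y + 1) lo hi := by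
  intro k s t hs ht hsY htb
  by_cases hall : ∀ i, s i < Y
  · exact hu k s t hs ht hall htb
  push Not at hall
  obtain ⟨i0, hi0⟩ := hall
  obtain ⟨k, rfl⟩ : ∃ k', k = k' + 1 := ⟨k - 1, by have := i0.2; omega⟩
  have hlast : s (Fin.last k) = Y := by
    have := hs.monotone (Fin.le_last i0)
    have := hsY (Fin.last k)
    omega
  rw [Matrix.det_succ_row _ (Fin.last k), Finset.sum_eq_single (Fin.last k)]
  · rw [← two_mul, pow_mul]
    simp only [even_two, Even.neg_pow, one_pow, one_mul, Matrix.of_apply, hlast]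
    refine P.mul_mem ?_ ?_
    · rcases (htb (Fin.last k)).2.eq_or_lt with h | h
      · rw [h]; exact h2
      · rw [h1 _ (htb _).1 h]; exact P.zero_mem
    · have h := hu k (s ∘ Fin.castSucc) (t ∘ Fin.castSucc) (hs.comp Fin.strictMono_castSucc)
        (ht.comp Fin.strictMono_castSucc) (fun i => by
          have := hs (Fin.castSucc_lt_last i)
          simp only [Function.comp]; omega) (fun i => htb _)
      convert h using 2
      ext i l
      simp
  · intro l _ hl
    have hl' := ht (lt_of_le_of_ne (Fin.le_last l) hl)
    simp only [Matrix.of_apply, hlast]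
    rw [h1 _ (htb l).1 (by have := (htb (Fin.last k)).2; omega)]
    simp
  · simp

theorem TN.firstCol {u : ℕ → ℤ → R} {Y : ℕ} {lo hi : ℤ} (hu : TN P u Y (lo + 1) hi)
    (h1 : ∀ y < Y, y ≠ 0 → u y (lo + 1) = 0) (h2 : 0 < Y → u 0 (lo + 1) ∈ P) :
    TN P u Y lo hi := by
  intro k s t hs ht hsY htb
  by_cases hall : ∀ i, lo + 1 < t i
  · exact hu k s t hs ht hsY (fun i => ⟨hall i, (htb i).2⟩)
  push Not at hall
  obtain ⟨i0, hi0⟩ := hall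
  obtain ⟨k, rfl⟩ : ∃ k', k = k' + 1 := ⟨k - 1, by have := i0.2; omega⟩
  have hz : t 0 = lo + 1 := by
    have := ht.monotone (Fin.zero_le i0)
    have := (htb 0).1
    omega
  rw [Matrix.det_succ_column _ 0, Finset.sum_eq_single 0]
  · simp only [Fin.val_zero, add_zero, pow_zero, one_mul, Matrix.of_apply, hz]
    refine P.mul_mem ?_ ?_
    · by_cases h0 : s 0 = 0
      · rw [h0]; exact h2 (by have := hsY 0; omega)
      · rw [h1 _ (hsY 0) h0]; exact P.zero_mem
    · have h := hu k (s ∘ Fin.succ) (t ∘ Fin.succ) (hs.comp Fin.strictMono_succ)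
        (ht.comp Fin.strictMono_succ) (fun i => hsY _) (fun i => ⟨by
          have := ht (Fin.succ_pos i)
          simp only [Function.comp]; omega, (htb _).2⟩)
      convert h using 2
      ext i l
      simp
  · intro i _ hi
    have := hs (Fin.pos_of_ne_zero hi)
    simp only [Matrix.of_apply, hz]
    rw [h1 _ (hsY i) (by omega)]
    simp
  · simp

theorem TN.down {w x : ℕ → ℤ → R} {Y : ℕ} {lo hi : ℤ} (hx : TN P x Y lo hi)
    (h0 : ∀ j, w 0 j = x 0 j) (c p q : ℕ → R)
    (hc : ∀ y, y + 1 < Y → Good P (c y)) (hp : ∀ y, y + 1 < Y → p y ∈ P)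
    (hq : ∀ y, y + 1 < Y → q y ∈ P)
    (h : ∀ y, y + 1 < Y → ∀ j, w (y + 1) j * c y = x (y + 1) j * p y + x y j * q y) :
    TN P w Y lo hi := by
  have key : ∀ d r, r + d = Y → TN P (fun y => if y < r then x y else w y) Y lo hi := by
    intro d
    induction d with
    | zero =>
      intro r hr
      exact hx.congr fun y hy j _ _ => by simp [show y < r by omega]
    | succ d ih =>
      intro r hr
      have ih' := ih (r + 1) (by omega)
      rcases r with _ | r
      · refine ih'.congr fun y hy j _ _ => ?_
        by_cases hy0 : y = 0
        · subst hy0; simp [h0]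
        · simp [hy0]
      · refine ih'.elem (r := r + 1) (r' := r) (by omega) (Or.inr rfl) (hc r (by omega))
          (hp r (by omega)) (hq r (by omega)) ?_ ?_
        · intro y hy hne j _ _
          by_cases h1 : y < r + 1
          · simp [h1, show y < r + 1 + 1 by omega]
          · simp [h1, show ¬ y < r + 1 + 1 by omega]
        · intro j _ _
          simpa [show r < r + 1 + 1 by omega] using h r (by omega) j
  exact (key Y 0 (by omega)).congr fun y hy j _ _ => by simp

theorem TN.up {v w : ℕ → ℤ → R} {Y : ℕ} {lo hi : ℤ} (hw : TN P w Y lo hi)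
    (h1 : ∀ j, lo < j → j < hi → v Y j = 0) (h2 : v Y hi ∈ P) (c p q : ℕ → R)
    (hc : ∀ y, y < Y → Good P (c y)) (hp : ∀ y, y < Y → p y ∈ P)
    (hq : ∀ y, y < Y → q y ∈ P)
    (h : ∀ y, y < Y → ∀ j, v y j * c y = w y j * p y + v (y + 1) j * q y) :
    TN P v (Y + 1) lo hi := by
  have key : ∀ d r, r + d = Y → TN P (fun y => if y < r then w y else v y) (Y + 1) lo hi := by
    intro d
    induction d with
    | zero =>
      intro r hr
      refine TN.lastRow (hw.congr fun y hy j _ _ => by simp [show y < r by omega]) ?_ ?_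
      · intro j hj hj'
        simp [show ¬ Y < r by omega, h1 j hj hj']
      · simp [show ¬ Y < r by omega, h2]
    | succ d ih =>
      intro r hr
      have ih' := ih (r + 1) (by omega)
      refine ih'.elem (r := r) (r' := r + 1) (by omega) (Or.inl rfl) (hc r (by omega))
          (hp r (by omega)) (hq r (by omega)) ?_ ?_
      · intro y hy hne j _ _
        by_cases h1 : y < r
        · simp [h1, show y < r + 1 by omega]
        · simp [h1, show ¬ y < r + 1 by omega]
      · intro j _ _
        simpa using h r (by omega) j
  exact (key Y 0 (by omega)).congr fun y hy j _ _ => by simp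

end TN

section Main
variable {R : Type*} [CommRing R] {P : Subsemiring R}

theorem rho_TN (L : ℤ → ℤ → R) (a0 m δ : ℤ)
    (H1 : ∀ (a : ℤ) (y : ℕ), a0 ≤ a → a + δ + y ≤ m → Good P (F L a (a + δ + 1) y))
    (H0 : ∀ (a : ℤ) (y : ℕ), a0 + 1 ≤ a → a + δ + y ≤ m → Good P (F L a (a + δ) y)) :
    ∀ (h : ℕ) (a : ℤ), a0 ≤ a → a + δ + h = m → TN P (rho L a (a + δ)) h (a + δ) m := by
  intro h
  induction h with
  | zero =>
    intro a ha hm k s t hs ht hsY htb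
    rcases k with _ | k
    · simp only [Matrix.det_fin_zero]; exact P.one_mem
    · exact absurd (hsY 0) (by omega)
  | succ h ih =>
    intro a ha hm
    have hx := ih (a + 1) (by omega) (by omega)
    push_cast at hm
    have e1 : a + 1 + δ = a + δ + 1 := by ring
    rw [e1] at hx
    -- b-step
    have hw : TN P (rho L (a + 1) (a + δ)) h (a + δ + 1) m := by
      refine hx.down (fun j => by rw [rho_zero, rho_zero])
        (fun y => F L (a + 1) (a + δ + 1 + 1) (y + 1)) (fun y => F L (a + 1) (a + δ + 1) (y + 1))
        (fun y => F L (a + 1) (a + δ + 1) (y + 2)) ?_ ?_ ?_ ?_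
      · intro y hy
        have := H1 (a + 1) (y + 1) (by omega) (by push_cast; omega)
        rwa [e1] at this
      · intro y hy
        have := H0 (a + 1) (y + 1) (by omega) (by push_cast; omega)
        rw [e1] at this
        exact this.1
      · intro y hy
        have := H0 (a + 1) (y + 2) (by omega) (by push_cast; omega)
        rw [e1] at this
        exact this.1
      · intro y hy j
        have := bstep L (a + 1) (a + δ + 1) j y
        rw [add_sub_cancel_right] at this
        rw [this]; ring
    have hw2 : TN P (rho L (a + 1) (a + δ)) h (a + δ) m := by
      refine hw.firstCol ?_ ?_
      · intro y hy hy0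
        exact rho_vanish _ _ _ _ _ (by omega) (by omega)
      · intro hpos
        have := rho_top L (a + 1) (a + δ) 0
        simp only [Nat.cast_zero, add_zero, zero_add] at this
        rw [this]
        have := H0 (a + 1) 1 (by omega) (by omega)
        rw [e1] at this
        exact this.1
    refine hw2.up ?_ ?_ (fun y => F L (a + 1) (a + δ + 1) (y + 1))
      (fun y => F L a (a + δ + 1) (y + 1)) (fun y => F L (a + 1) (a + δ + 1) y) ?_ ?_ ?_ ?_
    · intro j hj hj'
      exact rho_vanish _ _ _ _ _ (by omega) (by omega)
    · have := rho_top L a (a + δ) h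
      rw [show m = a + δ + h + 1 by omega, this]
      exact (H1 a (h + 1) (by omega) (by push_cast; omega)).1
    · intro y hy
      have := H0 (a + 1) (y + 1) (by omega) (by push_cast; omega)
      rwa [e1] at this
    · intro y hy
      exact (H1 a (y + 1) (by omega) (by push_cast; omega)).1
    · intro y hy
      have := H0 (a + 1) y (by omega) (by push_cast; omega)
      rw [e1] at this
      exact this.1
    · intro y hy j
      exact astep L a (a + δ) j y

/-- The coefficient of row `i` in `rho L a b y`. -/
def coefT (L : ℤ → ℤ → R) (a b : ℤ) (y : ℕ) (i : Fin (y + 1)) : R :=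
  (-1) ^ (i : ℕ) * (Matrix.of fun l c : Fin y =>
    L (a + ((i.succAbove c : Fin (y + 1)) : ℕ)) (b + (y : ℤ) - (l : ℤ))).det

theorem rho_expand (L : ℤ → ℤ → R) (a b : ℤ) (y : ℕ) (j : ℤ) :
    rho L a b y j = ∑ i : Fin (y + 1), coefT L a b y i * L (a + (i : ℤ)) j := by
  rw [rho, Matrix.det_succ_row_zero]
  refine Finset.sum_congr rfl fun i _ => ?_
  rw [coefT]
  simp only [Matrix.of_apply, if_true]
  have : ((Matrix.of fun l i : Fin (y + 1) =>
      L (a + (i : ℤ)) (if l = 0 then j else b + (y : ℤ) + 1 - (l : ℤ))).submatrix Fin.succ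
        i.succAbove) = (Matrix.of fun l c : Fin y =>
    L (a + ((i.succAbove c : Fin (y + 1)) : ℕ)) (b + (y : ℤ) - (l : ℤ))) := by
    ext l c
    simp only [Matrix.submatrix_apply, Matrix.of_apply, Fin.succ_ne_zero, if_false]
    congr 1; simp
  rw [this]; ring

theorem coefT_last (L : ℤ → ℤ → R) (a b : ℤ) (y : ℕ) :
    coefT L a b y (Fin.last y) = (-1) ^ y * F L a (b + 1) y := by
  rw [coefT, F_eq]
  simp only [Fin.val_last, Fin.succAbove_last, Fin.val_castSucc]
  congr 3
  ext l c
  congr 1; ring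

theorem det_rev (k : ℕ) : ∀ (A : Matrix (Fin k) (Fin k) R),
    (∏ i : Fin k, (-1 : R) ^ (i : ℕ)) * A.det = (A.submatrix id Fin.rev).det := by
  induction k with
  | zero => intro A; simp
  | succ k ih =>
    intro A
    rw [Matrix.det_succ_column A (Fin.last k), Matrix.det_succ_column (A.submatrix id Fin.rev) 0,
      Finset.mul_sum]
    refine Finset.sum_congr rfl fun i _ => ?_
    have h := ih (A.submatrix i.succAbove Fin.castSucc)
    rw [Fin.prod_univ_castSucc]
    have h2 : ((A.submatrix id Fin.rev).submatrix i.succAbove (Fin.succAbove 0)) =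
        (A.submatrix i.succAbove Fin.castSucc).submatrix id Fin.rev := by
      ext p q; simp [Fin.rev_succ]
    rw [h2, ← h]
    simp only [Fin.val_castSucc, Fin.val_last, Fin.val_zero, Matrix.submatrix_apply, id,
      Fin.rev_zero, Fin.succAbove_last, add_zero]
    have h3 : ((-1 : R) ^ k) * (-1) ^ k = 1 := by rw [← mul_pow]; simp
    rw [pow_add]
    linear_combination ((-1) ^ (i : ℕ) * A i (Fin.last k) *
      (∏ x : Fin k, (-1 : R) ^ (x : ℕ)) * (A.submatrix i.succAbove Fin.castSucc).det) * h3

theorem det_rho (L : ℤ → ℤ → R) (a b j : ℤ) (k : ℕ) :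
    (Matrix.of fun i l : Fin k => rho L a b i (j + (l : ℤ))).det =
      F L a j k * ∏ i : Fin k, F L a (b + 1) i := by
  let T : Matrix (Fin k) (Fin k) R := Matrix.of fun i i' =>
    if h : (i' : ℕ) < (i : ℕ) + 1 then coefT L a b i ⟨i', h⟩ else 0
  let X : Matrix (Fin k) (Fin k) R := Matrix.of fun i l => L (a + (i : ℤ)) (j + (l : ℤ))
  have hTX : (Matrix.of fun i l : Fin k => rho L a b i (j + (l : ℤ))) = T * X := by
    ext i l
    rw [Matrix.mul_apply, Matrix.of_apply, rho_expand]
    let g : ℕ → R := fun n => if h : n < (i : ℕ) + 1 then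
      coefT L a b i ⟨n, h⟩ * L (a + (n : ℤ)) (j + (l : ℤ)) else 0
    have e1 : ∑ x : Fin k, T i x * X x l = ∑ x : Fin k, g x := by
      refine Finset.sum_congr rfl fun x _ => ?_
      simp only [T, X, g, Matrix.of_apply]
      split_ifs <;> simp
    have e2 : ∑ x : Fin ((i : ℕ) + 1), coefT L a b i x * L (a + (x : ℤ)) (j + (l : ℤ))
        = ∑ x : Fin ((i : ℕ) + 1), g x := by
      refine Finset.sum_congr rfl fun x _ => ?_
      simp only [g, x.2, dif_pos]
    rw [e1, e2, Fin.sum_univ_eq_sum_range, Fin.sum_univ_eq_sum_range]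
    apply Finset.sum_subset
    · intro x hx; simp only [Finset.mem_range] at *; have := i.2; omega
    · intro x _ hx
      simp only [Finset.mem_range] at hx
      simp only [g, hx, dif_neg, not_false_iff]
  have hT : T.det = ∏ i : Fin k, ((-1) ^ (i : ℕ) * F L a (b + 1) i) := by
    rw [Matrix.det_of_isLowerTriangular]
    · refine Finset.prod_congr rfl fun i _ => ?_
      rw [← coefT_last]
      simp [T, Fin.last]
    · intro p q hpq
      have : (p : ℕ) < q := hpq
      simp only [T, Matrix.of_apply, show ¬ (q : ℕ) < p + 1 by omega, dif_neg, not_false_iff]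
  have hX : F L a j k = (∏ i : Fin k, (-1 : R) ^ (i : ℕ)) * X.det := by
    rw [det_rev, F]; congr 1; ext i l
    simp only [X, Matrix.of_apply, Matrix.submatrix_apply, id, Fin.val_rev]
    congr 1; have := l.2; omega
  rw [hTX, Matrix.det_mul, hT, hX, Finset.prod_mul_distrib]; ring

theorem main_lemma (L : ℤ → ℤ → R) (a0 m δ : ℤ)
    (H1 : ∀ (a : ℤ) (y : ℕ), a0 ≤ a → a + δ + y ≤ m → Good P (F L a (a + δ + 1) y))
    (H0 : ∀ (a : ℤ) (y : ℕ), a0 + 1 ≤ a → a + δ + y ≤ m → Good P (F L a (a + δ) y))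
    (j : ℤ) (k : ℕ) (hj : a0 + δ + 1 ≤ j) (hjk : j + k - 1 ≤ m) : F L a0 j k ∈ P := by
  rcases Nat.eq_zero_or_pos k with rfl | hk
  · rw [F_zero]; exact P.one_mem
  have hT := rho_TN L a0 m δ H1 H0 (m - (a0 + δ)).toNat a0 le_rfl (by omega)
  have := hT k (fun i => (i : ℕ)) (fun l => j + (l : ℤ)) (fun p q h => h)
    (fun p q h => by have : (p : ℕ) < q := h; simp; omega) (fun i => by have := i.2; omega)
    (fun i => by have := i.2; omega)
  rw [det_rho] at this
  refine (Good.prod _ _ fun i _ => ?_).2 _ this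
  exact H1 a0 i le_rfl (by have := i.2; omega)

end Main
end CML
namespace CML

section Final
variable (n : ℕ)

/-- Functions of `M` which are positive Laurent polynomials in the small central minors. -/
noncomputable def PL : Subsemiring (Matrix (ZMod n) (ZMod n) ℝ → ℝ) where
  carrier := {g | ∃ (e : (SmallIdx n) →₀ ℕ) (p : MvPolynomial (SmallIdx n) ℝ),
      (∀ m : (SmallIdx n) →₀ ℕ, 0 ≤ MvPolynomial.coeff m p) ∧
      ∀ M : Matrix (ZMod n) (ZMod n) ℝ,
        g M * e.prod (fun s k => (centralMinor n M s.1.1 s.1.2) ^ k) =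
          MvPolynomial.eval (fun s : SmallIdx n => centralMinor n M s.1.1 s.1.2) p}
  mul_mem' := by
    rintro g g' ⟨e, p, hp, h⟩ ⟨e', p', hp', h'⟩
    refine ⟨e + e', p * p', fun m => ?_, fun M => ?_⟩
    · rw [MvPolynomial.coeff_mul]
      exact Finset.sum_nonneg fun x _ => mul_nonneg (hp _) (hp' _)
    · rw [Finsupp.prod_add_index' (by simp) (fun _ _ _ => pow_add _ _ _), map_mul, ← h, ← h']
      simp only [Pi.mul_apply]; ring
  one_mem' := ⟨0, 1, fun m => by
    classical
    rw [MvPolynomial.coeff_one]; split_ifs <;> simp, fun M => by simp⟩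
  zero_mem' := ⟨0, 0, fun m => by simp, fun M => by simp⟩
  add_mem' := by
    classical
    rintro g g' ⟨e, p, hp, h⟩ ⟨e', p', hp', h'⟩
    have hmon : ∀ (e m : (SmallIdx n) →₀ ℕ),
        0 ≤ MvPolynomial.coeff m (MvPolynomial.monomial e (1 : ℝ)) := by
      intro e m
      rw [MvPolynomial.coeff_monomial]; split_ifs <;> simp
    refine ⟨e + e', p * MvPolynomial.monomial e' 1 + p' * MvPolynomial.monomial e 1,
      fun m => ?_, fun M => ?_⟩
    · rw [MvPolynomial.coeff_add, MvPolynomial.coeff_mul, MvPolynomial.coeff_mul]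
      exact add_nonneg (Finset.sum_nonneg fun x _ => mul_nonneg (hp _) (hmon _ _))
        (Finset.sum_nonneg fun x _ => mul_nonneg (hp' _) (hmon _ _))
    · rw [Finsupp.prod_add_index' (by simp) (fun _ _ _ => pow_add _ _ _), map_add, map_mul,
        map_mul, ← h, ← h', MvPolynomial.eval_monomial, MvPolynomial.eval_monomial]
      simp only [Pi.add_apply]; ring

theorem good_central (s : SmallIdx n) :
    Good (PL n) (fun M => centralMinor n M s.1.1 s.1.2) := by
  classical
  refine ⟨⟨0, MvPolynomial.X s, fun m => ?_, fun M => by simp⟩, ?_⟩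
  · rw [MvPolynomial.coeff_X]; split_ifs <;> simp
  · rintro g ⟨e, p, hp, h⟩
    refine ⟨e + Finsupp.single s 1, p, hp, fun M => ?_⟩
    rw [Finsupp.prod_add_index' (by simp) (fun _ _ _ => pow_add _ _ _), ← h]
    simp only [Pi.mul_apply, Finsupp.prod_single_index, pow_zero, pow_one]; ring

theorem cm_congr (M : Matrix (ZMod n) (ZMod n) ℝ) {a a' b b' : ℤ} (y : ℕ)
    (ha : (a : ZMod n) = a') (hb : (b : ZMod n) = b') :
    contiguousMinor n M a b y = contiguousMinor n M a' b' y := by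
  simp only [contiguousMinor]
  congr 1; ext i j
  simp only [Matrix.of_apply]
  push_cast
  rw [ha, hb]

theorem cm_zero (M : Matrix (ZMod n) (ZMod n) ℝ) (a b : ℤ) : contiguousMinor n M a b 0 = 1 := by
  simp [contiguousMinor]

theorem F_cm (a b : ℤ) (y : ℕ) :
    F (fun i j (M : Matrix (ZMod n) (ZMod n) ℝ) => M (i : ZMod n) (j : ZMod n)) a b y =
      fun M => contiguousMinor n M a b y := by
  funext M
  rw [F, contiguousMinor]
  exact (RingHom.map_det (Pi.evalRingHom (fun _ : Matrix (ZMod n) (ZMod n) ℝ => ℝ) M) _)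

theorem F_cm_transpose (a b : ℤ) (y : ℕ) :
    F (fun i j (M : Matrix (ZMod n) (ZMod n) ℝ) => M (j : ZMod n) (i : ZMod n)) a b y =
      fun M => contiguousMinor n M b a y := by
  funext M
  rw [F, contiguousMinor]
  refine (RingHom.map_det (Pi.evalRingHom (fun _ : Matrix (ZMod n) (ZMod n) ℝ => ℝ) M) _).trans ?_
  rw [← Matrix.det_transpose, ← Matrix.det_submatrix_equiv_self (Fin.revPerm)]
  congr 1; ext i j
  simp only [RingHom.mapMatrix_apply, Matrix.submatrix_apply, Matrix.transpose_apply,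
    Matrix.map_apply, Matrix.of_apply, Pi.evalRingHom_apply, Fin.revPerm_apply, Fin.val_rev]
  have := i.2
  have := j.2
  congr 2 <;> omega

variable [NeZero n]

theorem good_aux (a b x0 : ℤ) (y : ℕ) (hy : 1 ≤ y)
    (hsm : 2 * y < n ∨ (2 * y = n ∧ Odd (x0 + y)))
    (ha : ∀ z : ℤ, Int.fdiv (x0 - 2 * z - y) 2 = a - z)
    (hb : ∀ z : ℤ, Int.fdiv (x0 - 2 * z - y + n - (((n : ℤ) - 1) % 2)) 2 = b - z) :
    Good (PL n) (fun M => contiguousMinor n M a b y) := by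
  have hn : 0 < n := Nat.pos_of_ne_zero (NeZero.ne n)
  set q := (x0 - 1) / (2 * n) with hq
  have h1 := Int.emod_add_mul_ediv (x0 - 1) (2 * n)
  have h2 := Int.emod_nonneg (x0 - 1) (b := 2 * (n : ℤ)) (by omega)
  have h3 := Int.emod_lt_of_pos (x0 - 1) (b := 2 * (n : ℤ)) (by omega)
  rw [← hq, mul_assoc] at h1
  have hs : ((x0 - 2 * (n * q), y) : ℤ × ℕ) ∈ SmallIdx n := by
    refine ⟨by simp only; omega, by simp only; omega, ?_⟩
    rcases hsm with h | ⟨h, h'⟩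
    · exact Or.inl ⟨hy, h⟩
    · refine Or.inr ⟨h, ?_⟩
      rw [Int.odd_iff] at *
      simp only
      omega
  have := good_central n ⟨_, hs⟩
  convert this using 2 with M
  simp only [centralMinor]
  rw [ha, hb]
  apply cm_congr <;> simp

theorem good1 (a : ℤ) (y : ℕ) (hy : 2 * y ≤ n) :
    Good (PL n) (fun M => contiguousMinor n M a (a + ((n : ℤ) - 1) / 2 + 1) y) := by
  rcases Nat.eq_zero_or_pos y with rfl | hpos
  · simp only [cm_zero]; exact Good.one
  refine good_aux n _ _ (2 * a + 1 + y) y hpos ?_ ?_ ?_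
  · rcases hy.eq_or_lt with h | h
    · right; refine ⟨h, ?_⟩
      rw [Int.odd_iff]; omega
    · exact Or.inl h
  · intro z
    rw [Int.fdiv_eq_ediv_of_nonneg _ (by norm_num)]; omega
  · intro z
    rw [Int.fdiv_eq_ediv_of_nonneg _ (by norm_num)]; omega

theorem good0 (a : ℤ) (y : ℕ) (hy : 2 * y < n) :
    Good (PL n) (fun M => contiguousMinor n M a (a + ((n : ℤ) - 1) / 2) y) := by
  rcases Nat.eq_zero_or_pos y with rfl | hpos
  · simp only [cm_zero]; exact Good.one
  refine good_aux n _ _ (2 * a + y) y hpos (Or.inl hy) ?_ ?_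
  · intro z
    rw [Int.fdiv_eq_ediv_of_nonneg _ (by norm_num)]; omega
  · intro z
    rw [Int.fdiv_eq_ediv_of_nonneg _ (by norm_num)]; omega

theorem cm_mem (a b : ℤ) (y : ℕ) (h1 : (y : ℤ) ≤ b - a) (h2 : b - a + y ≤ n) :
    (fun M => contiguousMinor n M a b y) ∈ PL n := by
  by_cases hd : ((n : ℤ) - 1) / 2 + 1 ≤ b - a
  · rw [← F_cm]
    refine main_lemma _ a (a + n - 1) (((n : ℤ) - 1) / 2) ?_ ?_ b y (by omega) (by omega)
    · intro a1 y1 ha hy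
      rw [F_cm]
      exact good1 n a1 y1 (by omega)
    · intro a1 y1 ha hy
      rw [F_cm]
      exact good0 n a1 y1 (by omega)
  · have e : (fun M => contiguousMinor n M a b y) =
        fun M => contiguousMinor n M (a + n) b y := by
      funext M; apply cm_congr <;> simp
    rw [e, ← F_cm_transpose]
    refine main_lemma _ b (b + n - 1) (n - 1 - ((n : ℤ) - 1) / 2) ?_ ?_ (a + n) y
      (by omega) (by omega)
    · intro a1 y1 ha hy
      rw [F_cm_transpose]
      convert good0 n (a1 - ((n : ℤ) - 1) / 2) y1 (by omega) using 2 with M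
      apply cm_congr
      · push_cast; rw [ZMod.natCast_self]; ring
      · simp
    · intro a1 y1 ha hy
      rw [F_cm_transpose]
      convert good1 n (a1 - ((n : ℤ) - 1) / 2 - 1) y1 (by omega) using 2 with M
      apply cm_congr
      · push_cast; simp; ring
      · push_cast; ring

end Final
end CML

/-- Any contiguous minor `CM_{a,b,y}` (with `y ≥ 1`) whose row index set
`{a, …, a+y-1}` and column index set `{b, …, b+y-1}` are disjoint modulo `n` is a
positive-coefficient Laurent polynomial in the small central minors. -/
theorem contiguous_laurent_in_small_central_minors (n : ℕ) [NeZero n]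
    (a b : ℤ) (y : ℕ) (hy : 1 ≤ y)
    (hdisj : ∀ i j : Fin y, ((a + (i : ℤ) : ℤ) : ZMod n) ≠ ((b + (j : ℤ) : ℤ) : ZMod n)) :
    ∃ (e : (SmallIdx n) →₀ ℕ) (p : MvPolynomial (SmallIdx n) ℝ),
      (∀ m : (SmallIdx n) →₀ ℕ, 0 ≤ MvPolynomial.coeff m p) ∧
      ∀ M : Matrix (ZMod n) (ZMod n) ℝ,
        contiguousMinor n M a b y * e.prod (fun s k => (centralMinor n M s.1.1 s.1.2) ^ k) =
          MvPolynomial.eval (fun s : SmallIdx n => centralMinor n M s.1.1 s.1.2) p := by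
  have hn : 0 < n := Nat.pos_of_ne_zero (NeZero.ne n)
  have hd0 := Int.emod_nonneg (b - a) (b := (n : ℤ)) (by omega)
  have hd1 := Int.emod_lt_of_pos (b - a) (b := (n : ℤ)) (by omega)
  set d := (b - a) % (n : ℤ) with hd
  have hcast : ((a + d : ℤ) : ZMod n) = (b : ZMod n) := by
    have h := Int.emod_add_mul_ediv (b - a) n
    rw [← hd] at h
    have h2 : b = a + d + n * ((b - a) / n) := by linarith
    rw [h2]; push_cast; simp
  have h1 : (y : ℤ) ≤ d := by
    by_contra hlt
    push Not at hlt
    refine hdisj ⟨d.toNat, by omega⟩ ⟨0, by omega⟩ ?_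
    have : ((d.toNat : ℕ) : ℤ) = d := by omega
    simp only [this]
    rw [hcast]; simp
  have h2 : d + y ≤ n := by
    by_contra hlt
    push Not at hlt
    refine hdisj ⟨0, by omega⟩ ⟨(n - d).toNat, by omega⟩ ?_
    have : (((n - d).toNat : ℕ) : ℤ) = n - d := by omega
    simp only [this]
    rw [Int.cast_add, Int.cast_add, ← hcast]; push_cast; simp
  obtain ⟨e, p, hp, h⟩ := CML.cm_mem n a (a + d) y (by omega) (by omega)
  refine ⟨e, p, hp, fun M => ?_⟩
  rw [← h M]
  simp only
  rw [CML.cm_congr n M y (a := a) (a' := a) rfl hcast]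
end

section
/- Fix n ≥ 1 and a noninterlaced pair of k-element subsets A = {a_1,…,a_k} and B = {b_1,…,b_k} of {1,…,n}, listed so that a_1, a_2, …, a_k, b_k, b_{k−1}, …, b_1 occur in circular order. Then the noninterlaced minor det((M_{a_i,b_j})_{1≤i,j≤k}) is a positive rational function of the small central minors of M: there exist multivariate real polynomials p and q in variables indexed by the small-central-minor index set S = {(x,y) : 1 ≤ x ≤ 2n, and either 1 ≤ y < n/2, or y = n/2 and x+y is odd}, both with all coefficients nonnegative and with q not identically zero, such that for every n×n real matrix M one has det((M_{a_i,b_j})_{i,j}) · q((CM_s(M))_{s∈S}) = p((CM_s(M))_{s∈S}). -/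
/-- A class of real functions closed under subtraction-free operations. -/
structure PosClass {Ω : Type*} (P : (Ω → ℝ) → Prop) : Prop where
  one : P (fun _ => 1)
  add : ∀ f g, P f → P g → P (fun ω => f ω + g ω)
  mul : ∀ f g, P f → P g → P (fun ω => f ω * g ω)
  smul : ∀ (c : ℝ) f, 0 < c → P f → P (fun ω => c * f ω)
  div : ∀ f g h, P f → P g → (∀ ω, h ω * g ω = f ω) → P h

theorem det_swap_cols {ι : Type*} [Fintype ι] [DecidableEq ι] (A : Matrix ι ι ℝ) (p q : ι)
    (hpq : p ≠ q) (v w : ι → ℝ) :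
    ((A.updateCol p v).updateCol q w).det = - ((A.updateCol p w).updateCol q v).det := by
  have h := Matrix.det_permute' (Equiv.swap p q) ((A.updateCol p w).updateCol q v)
  rw [Equiv.Perm.sign_swap hpq] at h
  have e : ((A.updateCol p w).updateCol q v).submatrix id (Equiv.swap p q)
      = (A.updateCol p v).updateCol q w := by
    ext i j
    simp only [Matrix.submatrix_apply, Matrix.updateCol_apply, id]
    by_cases h1 : j = p
    · subst h1; simp [hpq]
    · by_cases h2 : j = q
      · subst h2; simp [hpq]
      · simp [Equiv.swap_apply_of_ne_of_ne h1 h2, h1, h2]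
  rw [e] at h
  rw [h]; simp

theorem plucker_aux {ι : Type*} [Fintype ι] [DecidableEq ι] (A : Matrix ι ι ℝ) (p q : ι)
    (hpq : p ≠ q) (y z : ι → ℝ) :
    (A.updateCol q y).det * ((A.updateCol p (fun i => A i q)).updateCol q z).det
      + (A.updateCol p y).det * (A.updateCol q z).det
      = A.det * ((A.updateCol p y).updateCol q z).det := by
  -- apply the linear functional `v ↦ det (A with v at p and z at q)` to the Cramer identity
  have key : ∀ v, ((A.updateCol p v).updateCol q z).det = ((A.updateCol q z).cramer v) p := by
    intro v
    rw [Matrix.cramer_apply, Matrix.updateCol_comm _ hpq]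
  have h := Matrix.mulVec_cramer A y
  have h' : A.mulVec (A.cramer y) = ∑ j, A.cramer y j • (fun i => A i j) := by
    ext i
    simp [Matrix.mulVec, dotProduct, mul_comm]
  rw [h'] at h
  have h2 := congrArg (fun v => (A.updateCol q z).cramer v p) h
  simp only [map_smul, map_sum, Finset.sum_apply, Pi.smul_apply, smul_eq_mul] at h2
  simp only [← key] at h2
  rw [← h2, ← Finset.sum_subset (Finset.subset_univ {p, q}), Finset.sum_pair hpq]
  · have hp : (A.updateCol p fun i => A i p) = A := by
      ext i j; simp only [Matrix.updateCol_apply]; split_ifs with h <;> simp [h]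
    rw [Matrix.cramer_apply, Matrix.cramer_apply, hp]; ring
  · intro j _ hj
    simp only [Finset.mem_insert, Finset.mem_singleton, not_or] at hj
    rw [Matrix.det_zero_of_column_eq (i := p) (j := j) (Ne.symm hj.1), mul_zero]
    intro i
    simp [Matrix.updateCol_apply, hj.1, hj.2, hpq]

theorem plucker {ι : Type*} [Fintype ι] [DecidableEq ι] (A : Matrix ι ι ℝ) (p q : ι)
    (hpq : p ≠ q) (w x y z : ι → ℝ) :
    ((A.updateCol p w).updateCol q y).det * ((A.updateCol p x).updateCol q z).det
      = ((A.updateCol p w).updateCol q x).det * ((A.updateCol p y).updateCol q z).det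
      + ((A.updateCol p x).updateCol q y).det * ((A.updateCol p w).updateCol q z).det := by
  have h := plucker_aux ((A.updateCol p w).updateCol q x) p q hpq y z
  have e1 : ∀ v, ((A.updateCol p w).updateCol q x).updateCol q v = (A.updateCol p w).updateCol q v := by
    intro v; ext i j; simp only [Matrix.updateCol_apply]; split_ifs <;> rfl
  have e2 : ∀ v, ((A.updateCol p w).updateCol q x).updateCol p v = (A.updateCol p v).updateCol q x := by
    intro v; ext i j; simp only [Matrix.updateCol_apply]; split_ifs <;> simp_all
  have e3 : ∀ v v', ((A.updateCol p v).updateCol q x).updateCol q v' = (A.updateCol p v).updateCol q v' := by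
    intro v v'; ext i j; simp only [Matrix.updateCol_apply]; split_ifs <;> rfl
  have e4 : (fun i => ((A.updateCol p w).updateCol q x) i q) = x := by ext i; simp
  rw [e4, e1, e1, e2, e2, e3, e3, det_swap_cols A p q hpq y x] at h
  linarith

theorem det_updateCol_single {m : ℕ} (A : Matrix (Fin (m+1)) (Fin (m+1)) ℝ) (i j : Fin (m+1)) :
    (A.updateCol j (Pi.single i 1)).det
      = (-1) ^ ((i : ℕ) + (j : ℕ)) * (A.submatrix i.succAbove j.succAbove).det := by
  rw [← Matrix.adjugate_fin_succ_eq_det_submatrix, Matrix.adjugate_def, Matrix.of_apply,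
    Matrix.cramer_transpose_apply, ← Matrix.adjugate_apply]
  rw [← Matrix.det_transpose, ← Matrix.updateRow_transpose, ← Matrix.adjugate_apply,
    ← Matrix.adjugate_transpose, Matrix.transpose_apply]

theorem dodgson {m : ℕ} (A : Matrix (Fin (m+2)) (Fin (m+2)) ℝ) :
    A.det * (A.submatrix (fun i : Fin m => i.castSucc.succ) (fun i : Fin m => i.castSucc.succ)).det
     + (A.submatrix Fin.succ Fin.castSucc).det * (A.submatrix Fin.castSucc Fin.succ).det
     = (A.submatrix Fin.succ Fin.succ).det * (A.submatrix Fin.castSucc Fin.castSucc).det := by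
  have hne : (0 : Fin (m+2)) ≠ Fin.last (m+1) := by
    intro h; simpa using congrArg Fin.val h
  have h := plucker A 0 (Fin.last (m+1)) hne (fun i => A i 0) (Pi.single 0 1)
    (fun i => A i (Fin.last (m+1))) (Pi.single (Fin.last (m+1)) 1)
  have hp : ∀ (B : Matrix (Fin (m+2)) (Fin (m+2)) ℝ) p, (B.updateCol p fun i => B i p) = B := by
    intro B p
    ext i j; simp only [Matrix.updateCol_apply]; split_ifs with h <;> simp [h]
  have hq : ∀ v, (A.updateCol 0 v).updateCol (Fin.last (m+1)) (fun i => A i (Fin.last (m+1)))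
      = A.updateCol 0 v := by
    intro v
    rw [Matrix.updateCol_comm _ hne, hp]
  rw [det_swap_cols A 0 (Fin.last (m+1)) hne (fun i => A i (Fin.last (m+1))), hq, hq, hq, hp,
    det_updateCol_single, det_updateCol_single, det_updateCol_single] at h
  rw [det_updateCol_single, det_updateCol_single] at h
  have e : (A.updateCol 0 (Pi.single 0 1)).submatrix (Fin.last (m + 1)).succAbove
      (Fin.last (m + 1)).succAbove
      = (A.submatrix Fin.castSucc Fin.castSucc).updateCol 0 (Pi.single 0 1) := by
    ext i j
    simp [Matrix.updateCol_apply, Fin.succAbove_last, Pi.single_apply]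
  have e2 : ((A.submatrix Fin.castSucc Fin.castSucc).submatrix (Fin.succAbove 0)
      (Fin.succAbove 0)) = A.submatrix (fun i : Fin m => i.castSucc.succ) (fun i : Fin m => i.castSucc.succ) := by
    ext i j
    simp
  rw [e, det_updateCol_single, e2] at h
  have hs : ((-1 : ℝ) ^ (m+1)) * (-1 : ℝ) ^ (m+1) = 1 := by
    rw [← mul_pow]; simp
  simp only [Fin.succAbove_last, Fin.succAbove_zero, Fin.val_last, Fin.val_zero, add_zero, zero_add,
    pow_add _ (m+1) (m+1), hs, pow_zero, one_mul] at h
  linear_combination h + (A.submatrix Fin.succ Fin.castSucc).det * (A.submatrix Fin.castSucc Fin.succ).det * (-hs)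

/-- The minor times the Vandermonde determinant of its columns: symmetric in the columns. -/
noncomputable def WMinor {Ω : Type*} (X : Ω → ℤ → ℤ → ℝ) {k : ℕ} (f g : Fin k → ℤ) (ω : Ω) : ℝ :=
  (Matrix.of fun i j : Fin k => X ω (f i) (g j)).det *
    (Matrix.vandermonde fun j => ((g j : ℤ) : ℝ)).det

theorem WMinor_perm {Ω : Type*} (X : Ω → ℤ → ℤ → ℝ) {k : ℕ} (f g : Fin k → ℤ)
    (σ : Equiv.Perm (Fin k)) (ω : Ω) : WMinor X f (fun j => g (σ j)) ω = WMinor X f g ω := by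
  unfold WMinor
  have h1 := Matrix.det_permute' σ (Matrix.of fun i j : Fin k => X ω (f i) (g j))
  have h2 := Matrix.det_permute σ (Matrix.vandermonde fun j => ((g j : ℤ) : ℝ))
  have e1 : (Matrix.of fun i j : Fin k => X ω (f i) (g j)).submatrix id σ
    = Matrix.of fun i j : Fin k => X ω (f i) (g (σ j)) := rfl
  have e2 : (Matrix.vandermonde fun j => ((g j : ℤ) : ℝ)).submatrix σ id
    = Matrix.vandermonde fun j => ((g (σ j) : ℤ) : ℝ) := rfl
  rw [e1] at h1
  rw [e2] at h2
  rw [h1, h2]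
  have hs : (((Equiv.Perm.sign σ : ℤˣ) : ℤ) : ℝ) * (((Equiv.Perm.sign σ : ℤˣ) : ℤ) : ℝ) = 1 := by
    rw [← Int.cast_mul, ← Units.val_mul, Int.units_mul_self]; simp
  linear_combination (Matrix.of fun i j : Fin k => X ω (f i) (g j)).det *
    (Matrix.vandermonde fun j => ((g j : ℤ) : ℝ)).det * hs

theorem vandermonde_pos {k : ℕ} (g : Fin k → ℤ) (hg : StrictMono g) :
    0 < (Matrix.vandermonde fun j => ((g j : ℤ) : ℝ)).det := by
  rw [Matrix.det_vandermonde]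
  refine Finset.prod_pos fun i _ => Finset.prod_pos fun j hj => ?_
  have := hg (Finset.mem_Ioi.1 hj)
  rw [sub_pos]; exact_mod_cast this

theorem vandermonde_cons_det {k : ℕ} (x : ℤ) (g : Fin k → ℤ) :
    (Matrix.vandermonde fun j => (((Fin.cons x g : Fin (k+1) → ℤ) j : ℤ) : ℝ)).det
      = (∏ i, ((g i : ℝ) - x)) * (Matrix.vandermonde fun j => ((g j : ℤ) : ℝ)).det := by
  rw [Matrix.det_vandermonde, Matrix.det_vandermonde, Fin.prod_univ_succ]
  simp [Fin.prod_Ioi_succ, Fin.prod_Ioi_zero]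

theorem karlin (X : ℤ → ℤ → ℝ) {m : ℕ} (f : Fin (m+2) → ℤ) (K : Fin m → ℤ) (w x y : ℤ) :
    let D := fun u v : ℤ => (Matrix.of fun i j : Fin (m+2) =>
      X (f i) ((Fin.cons u (Fin.cons v K : Fin (m+1) → ℤ) : Fin (m+2) → ℤ) j)).det
    let D' := fun u : ℤ => (Matrix.of fun i j : Fin (m+1) =>
      X (f i.succ) ((Fin.cons u K : Fin (m+1) → ℤ) j)).det
    D w y * D' x = D w x * D' y + D x y * D' w := by
  intro D D'
  set A : Matrix (Fin (m+2)) (Fin (m+2)) ℝ := Matrix.of fun i j : Fin (m+2) =>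
      X (f i) ((Fin.cons w (Fin.cons y K : Fin (m+1) → ℤ) : Fin (m+2) → ℤ) j) with hA
  have h := plucker A 0 1 (by simp) (fun i => X (f i) w) (fun i => X (f i) x)
    (fun i => X (f i) y) (Pi.single 0 1)
  have e1 : ∀ u v, ((A.updateCol 0 (fun i => X (f i) u)).updateCol 1 (fun i => X (f i) v)).det
      = D u v := by
    intro u v
    congr 1
    ext i j
    refine Fin.cases ?_ (fun j => Fin.cases ?_ (fun j => ?_) j) j
    · simp [Matrix.updateCol_apply]
    · simp [Matrix.updateCol_apply]
    · have : (j.succ.succ : Fin (m+2)) ≠ 1 := by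
        intro h; have := congrArg Fin.val h; simp at this
      simp [Matrix.updateCol_apply, this, hA]
  have e2 : ∀ u, ((A.updateCol 0 (fun i => X (f i) u)).updateCol 1 (Pi.single 0 1)).det
      = - D' u := by
    intro u
    rw [det_updateCol_single]
    have : (A.updateCol 0 fun i => X (f i) u).submatrix (Fin.succAbove 0) (Fin.succAbove 1)
      = Matrix.of fun i j : Fin (m+1) =>
      X (f i.succ) ((Fin.cons u K : Fin (m+1) → ℤ) j) := by
      ext i j
      refine Fin.cases ?_ (fun j => ?_) j
      · simp [Matrix.updateCol_apply]
      · have : Fin.succAbove (1 : Fin (m+2)) j.succ = j.succ.succ := by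
          rw [← Fin.succ_zero_eq_one, Fin.succ_succAbove_succ]; simp
        simp [Matrix.updateCol_apply, this, hA]
    rw [this]; simp [D']
  simp only [e1, e2] at h
  linarith

theorem fekete {Ω : Type*} {P : (Ω → ℝ) → Prop} (hP : PosClass P) (X : Ω → ℤ → ℤ → ℝ)
    (R : ∀ k : ℕ, (Fin k → ℤ) → Prop)
    (hR : ∀ k f, R (k+1) f → R k (fun i => f i.succ)) (lo hi : ℤ)
    (hc : ∀ (k : ℕ) (f : Fin k → ℤ) (c : ℤ), R k f → lo ≤ c → c + k ≤ hi →
      P (fun ω => (Matrix.of fun i j : Fin k => X ω (f i) (c + (j : ℕ))).det)) :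
    ∀ (N : ℕ) (c : ℤ), lo ≤ c → c + N ≤ hi → ∀ (k : ℕ) (f g : Fin k → ℤ), R k f →
      Function.Injective g → (∀ j, c ≤ g j ∧ g j < c + N) → P (WMinor X f g) := by
  intro N
  induction N with
  | zero =>
    intro c hlo hhi k f g hf hg hb
    have hk : k = 0 := by
      by_contra hk
      have := hb ⟨0, Nat.pos_of_ne_zero hk⟩
      simp at this; omega
    subst hk
    convert hP.one using 1
    ext ω
    simp [WMinor]
  | succ N ih =>
    intro c hlo hhi k f g hf hg hb
    push_cast at hhi hb
    by_cases hfull : ∀ x, c ≤ x → x < c + (N + 1) → ∃ j, g j = x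
    · -- contiguous case
      have hN : ∀ j, (g j - c).toNat < N + 1 := fun j => by have := hb j; omega
      let s : Fin k → Fin (N+1) := fun j => ⟨(g j - c).toNat, hN j⟩
      have hs : Function.Bijective s := by
        constructor
        · intro i j hij
          apply hg
          have h1 := congrArg Fin.val hij
          have := hb i; have := hb j
          simp only [s] at h1; omega
        · intro x
          obtain ⟨j, hj⟩ := hfull (c + (x : ℕ)) (by omega) (by have := x.2; omega)
          refine ⟨j, Fin.ext ?_⟩
          simp only [s]; omega
      have hk : k = N + 1 := by simpa using Fintype.card_of_bijective hs
      subst hk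
      have e : ∀ ω, WMinor X f g ω = WMinor X f (fun j => c + ((j : ℕ) : ℤ)) ω := by
        intro ω
        rw [← WMinor_perm X f (fun j => c + ((j : ℕ) : ℤ)) (Equiv.ofBijective s hs) ω]
        congr 1
        ext j
        have := hb j
        simp only [Equiv.ofBijective_apply, s]; omega
      have hv := vandermonde_pos (k := N+1) (fun j => c + ((j : ℕ) : ℤ)) (by
        intro i j hij
        have : (i : ℕ) < j := hij
        simp only; omega)
      have := hP.smul _ _ hv (hc (N+1) f c hf hlo (by push_cast; linarith))
      convert this using 1
      ext ω
      rw [e ω, WMinor, mul_comm]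
    · push Not at hfull
      obtain ⟨x, hx1, hx2, hx⟩ := hfull
      by_cases h1 : ∃ p, g p = c
      swap
      · push Not at h1
        refine ih (c+1) (by omega) (by omega) k f g hf hg fun j => ?_
        have := hb j; have := h1 j; omega
      by_cases h2 : ∃ p, g p = c + N
      swap
      · push Not at h2
        refine ih c (by omega) (by omega) k f g hf hg fun j => ?_
        have := hb j; have := h2 j; omega
      obtain ⟨p, hp⟩ := h1
      obtain ⟨q, hq⟩ := h2
      have hxp := hx p
      have hxq := hx q
      have hpq : p ≠ q := by rintro rfl; omega
      obtain ⟨m, rfl⟩ : ∃ m, k = m + 2 := by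
        refine ⟨k - 2, ?_⟩
        have := p.2; have := q.2
        have : (p : ℕ) ≠ q := fun h => hpq (Fin.ext h)
        omega
      obtain ⟨σ, hσ0, hσ1⟩ : ∃ σ : Equiv.Perm (Fin (m+2)), σ 0 = p ∧ σ 1 = q := by
        refine ⟨(Equiv.swap 0 p).trans (Equiv.swap (Equiv.swap 0 p 1) q), ?_, ?_⟩
        · have : Equiv.swap 0 p 1 ≠ p := by
            intro h
            have h0 : Equiv.swap 0 p 0 = p := by simp
            have := (Equiv.swap 0 p).injective (h.trans h0.symm)
            simp at this
          simp only [Equiv.trans_apply, Equiv.swap_apply_left]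
          rw [Equiv.swap_apply_of_ne_of_ne this.symm hpq]
        · simp
      set w := c
      set y := c + (N : ℤ) with hy
      set K : Fin m → ℤ := fun j => g (σ j.succ.succ) with hK
      have hgK : (fun j => g (σ j)) = (Fin.cons w (Fin.cons y K : Fin (m+1) → ℤ) : Fin (m+2) → ℤ) := by
        ext j
        refine Fin.cases ?_ (fun j => Fin.cases ?_ (fun j => ?_) j) j
        · simp [hσ0, hp]
        · simp [hσ1, hq]
        · simp [hK]
      have hKinj : Function.Injective K := by
        intro i j hij
        have := σ.injective (hg hij)
        simpa using this
      have hKw : ∀ j, K j ≠ w := by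
        intro j h
        have := σ.injective ((hg (h.trans hp.symm)).trans hσ0.symm)
        simp at this
      have hKy : ∀ j, K j ≠ y := by
        intro j h
        have := σ.injective ((hg (h.trans hq.symm)).trans hσ1.symm)
        simpa [Fin.ext_iff] using this
      have hKx : ∀ j, K j ≠ x := fun j => hx _
      have hKb : ∀ j, w ≤ K j ∧ K j < w + (N + 1) := fun j => hb _
      have hcons : ∀ {r : ℕ} (u : ℤ) (L : Fin r → ℤ), Function.Injective L → (∀ j, L j ≠ u) →
          Function.Injective (Fin.cons u L : Fin (r+1) → ℤ) := by
        intro r u L hL hu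
        rw [Fin.cons_injective_iff]
        exact ⟨by rintro ⟨j, hj⟩; exact hu j hj, hL⟩
      have hwxy : w < x ∧ x < y := by omega
      -- the smaller minors
      have p1 : P (WMinor X f (Fin.cons w (Fin.cons x K : Fin (m+1) → ℤ))) := by
        refine ih w (by omega) (by omega) _ f _ hf (hcons _ _ (hcons _ _ hKinj hKx) ?_) ?_
        · intro j; refine Fin.cases ?_ (fun j => ?_) j
          · simp; omega
          · simpa using hKw j
        · intro j; refine Fin.cases ?_ (fun j => Fin.cases ?_ (fun j => ?_) j) j
          · simp; omega
          · simp; omega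
          · have := hKb j; have := hKy j; simp; omega
      have p2 : P (WMinor X f (Fin.cons x (Fin.cons y K : Fin (m+1) → ℤ))) := by
        refine ih (w+1) (by omega) (by omega) _ f _ hf (hcons _ _ (hcons _ _ hKinj hKy) ?_) ?_
        · intro j; refine Fin.cases ?_ (fun j => ?_) j
          · simp; omega
          · simpa using hKx j
        · intro j; refine Fin.cases ?_ (fun j => Fin.cases ?_ (fun j => ?_) j) j
          · simp; omega
          · simp; omega
          · have := hKb j; have := hKw j; simp; omega
      have q1 : P (WMinor X (fun i => f i.succ) (Fin.cons w K)) := by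
        refine ih w (by omega) (by omega) _ _ _ (hR _ f hf) (hcons _ _ hKinj hKw) ?_
        intro j; refine Fin.cases ?_ (fun j => ?_) j
        · simp; omega
        · have := hKb j; have := hKy j; simp; omega
      have q2 : P (WMinor X (fun i => f i.succ) (Fin.cons x K)) := by
        refine ih w (by omega) (by omega) _ _ _ (hR _ f hf) (hcons _ _ hKinj hKx) ?_
        intro j; refine Fin.cases ?_ (fun j => ?_) j
        · simp; omega
        · have := hKb j; have := hKy j; simp; omega
      have q3 : P (WMinor X (fun i => f i.succ) (Fin.cons y K)) := by
        refine ih (w+1) (by omega) (by omega) _ _ _ (hR _ f hf) (hcons _ _ hKinj hKy) ?_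
        intro j; refine Fin.cases ?_ (fun j => ?_) j
        · simp; omega
        · have := hKb j; have := hKw j; simp; omega
      have hwx : (0 : ℝ) < (x : ℝ) - w := by
        rw [sub_pos]; exact_mod_cast hwxy.1
      have hxy : (0 : ℝ) < (y : ℝ) - x := by
        rw [sub_pos]; exact_mod_cast hwxy.2
      have hwy : (0 : ℝ) < (y : ℝ) - w := by linarith
      refine hP.div _ _ _ (hP.add _ _
        (hP.smul (((y : ℝ) - w) / (x - w)) _ (div_pos hwy hwx) (hP.mul _ _ p1 q3))
        (hP.smul (((y : ℝ) - w) / (y - x)) _ (div_pos hwy hxy) (hP.mul _ _ p2 q1))) q2 ?_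
      intro ω
      rw [← WMinor_perm X f g σ ω, hgK]
      have hk := karlin (X ω) f K w x y
      simp only at hk
      simp only [WMinor, vandermonde_cons_det, Fin.prod_univ_succ, Fin.cons_zero, Fin.cons_succ]
      generalize Matrix.det (Matrix.of fun i j : Fin (m+2) => X ω (f i) ((Fin.cons w (Fin.cons y K : Fin (m+1) → ℤ) : Fin (m+2) → ℤ) j)) = d1 at *
      generalize Matrix.det (Matrix.of fun i j : Fin (m+2) => X ω (f i) ((Fin.cons w (Fin.cons x K : Fin (m+1) → ℤ) : Fin (m+2) → ℤ) j)) = d2 at *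
      generalize Matrix.det (Matrix.of fun i j : Fin (m+2) => X ω (f i) ((Fin.cons x (Fin.cons y K : Fin (m+1) → ℤ) : Fin (m+2) → ℤ) j)) = d3 at *
      generalize Matrix.det (Matrix.of fun i j : Fin (m+1) => X ω (f i.succ) ((Fin.cons x K : Fin (m+1) → ℤ) j)) = e1 at *
      generalize Matrix.det (Matrix.of fun i j : Fin (m+1) => X ω (f i.succ) ((Fin.cons y K : Fin (m+1) → ℤ) j)) = e2 at *
      generalize Matrix.det (Matrix.of fun i j : Fin (m+1) => X ω (f i.succ) ((Fin.cons w K : Fin (m+1) → ℤ) j)) = e3 at *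
      generalize (Matrix.vandermonde fun j => ((K j : ℤ) : ℝ)).det = V
      generalize (∏ i, ((K i : ℝ) - x)) = t1
      generalize (∏ i, ((K i : ℝ) - w)) = t2
      generalize (∏ i, ((K i : ℝ) - y)) = t3
      have hwx' := hwx.ne'
      have hxy' := hxy.ne'
      have r1 : ((y : ℝ) - w) / (x - w) * (x - w) = y - w := by field_simp
      have r2 : ((y : ℝ) - w) / (y - x) * (y - x) = y - w := by field_simp
      linear_combination ((y : ℝ) - w) * t1 * t2 * t3 * V * V * hk
        - d2 * e2 * t1 * t2 * t3 * V * V * r1 - d3 * e3 * t1 * t2 * t3 * V * V * r2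

theorem fekete_mono {Ω : Type*} {P : (Ω → ℝ) → Prop} (hP : PosClass P) (X : Ω → ℤ → ℤ → ℝ)
    (R : ∀ k : ℕ, (Fin k → ℤ) → Prop)
    (hR : ∀ k f, R (k+1) f → R k (fun i => f i.succ)) (lo hi : ℤ) (hlh : lo ≤ hi)
    (hc : ∀ (k : ℕ) (f : Fin k → ℤ) (c : ℤ), R k f → lo ≤ c → c + k ≤ hi →
      P (fun ω => (Matrix.of fun i j : Fin k => X ω (f i) (c + (j : ℕ))).det))
    (k : ℕ) (f g : Fin k → ℤ) (hf : R k f) (hg : StrictMono g) (hb : ∀ j, lo ≤ g j ∧ g j < hi) :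
    P (fun ω => (Matrix.of fun i j : Fin k => X ω (f i) (g j)).det) := by
  have h := fekete hP X R hR lo hi hc (hi - lo).toNat lo le_rfl (by omega) k f g hf hg.injective
    (fun j => by have := hb j; omega)
  have hv := vandermonde_pos g hg
  have := hP.smul _ _ (inv_pos.2 hv) h
  convert this using 1
  ext ω
  rw [WMinor]
  field_simp

theorem minors_of_contiguous {Ω : Type*} {P : (Ω → ℝ) → Prop} (hP : PosClass P)
    (X : Ω → ℤ → ℤ → ℝ) (r s : ℤ) (hr : 0 ≤ r) (hs : 0 ≤ s)
    (hc : ∀ (k : ℕ) (c d : ℤ), 0 ≤ c → c + k ≤ r → 0 ≤ d → d + k ≤ s →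
      P (fun ω => (Matrix.of fun i j : Fin k => X ω (c + (i : ℕ)) (d + (j : ℕ))).det))
    (k : ℕ) (f g : Fin k → ℤ) (hf : StrictMono f) (hfb : ∀ i, 0 ≤ f i ∧ f i < r)
    (hg : StrictMono g) (hgb : ∀ i, 0 ≤ g i ∧ g i < s) :
    P (fun ω => (Matrix.of fun i j : Fin k => X ω (f i) (g j)).det) := by
  have step2 := fekete_mono hP (fun ω i j => X ω j i)
    (fun k g => StrictMono g ∧ ∀ i, 0 ≤ g i ∧ g i < s)
    (fun k g h => ⟨fun i j hij => h.1 (Fin.succ_lt_succ_iff.2 hij), fun i => h.2 _⟩) 0 r hr ?_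
    k g f ⟨hg, hgb⟩ hf hfb
  · convert step2 using 2 with ω
    rw [← Matrix.det_transpose]; rfl
  · intro k g c hgR hc0 hck
    have step1 := fekete_mono hP X
      (fun k f => ∃ c : ℤ, 0 ≤ c ∧ c + k ≤ r ∧ ∀ i : Fin k, f i = c + (i : ℕ)) ?_ 0 s hs ?_
      k (fun i => c + (i : ℕ)) g ⟨c, hc0, hck, fun i => rfl⟩ hgR.1 hgR.2
    · convert step1 using 2 with ω
      rw [← Matrix.det_transpose]; rfl
    · rintro k f ⟨c, h0, h1, h2⟩
      refine ⟨c + 1, by omega, by push_cast at h1; omega, fun i => ?_⟩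
      simp only [h2]; push_cast [Fin.val_succ]; ring
    · rintro k f d ⟨c, h0, h1, h2⟩ hd hdk
      obtain rfl : f = fun i : Fin k => c + ((i : ℕ) : ℤ) := funext h2
      exact hc k c d h0 h1 hd hdk

/-- Positive rational functions of the small central minors. -/
def PosRat (n : ℕ) (F : Matrix (ZMod n) (ZMod n) ℝ → ℝ) : Prop :=
  ∃ p q : MvPolynomial (SmallIdx n) ℝ,
    (∀ m : (SmallIdx n) →₀ ℕ, 0 ≤ MvPolynomial.coeff m p) ∧
    (∀ m : (SmallIdx n) →₀ ℕ, 0 ≤ MvPolynomial.coeff m q) ∧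
    p ≠ 0 ∧ q ≠ 0 ∧
    ∀ M : Matrix (ZMod n) (ZMod n) ℝ,
      F M * MvPolynomial.eval (fun s : SmallIdx n => centralMinor n M s.1.1 s.1.2) q =
        MvPolynomial.eval (fun s : SmallIdx n => centralMinor n M s.1.1 s.1.2) p

theorem coeff_mul_nonneg {σ : Type*} {p q : MvPolynomial σ ℝ}
    (hp : ∀ m, 0 ≤ MvPolynomial.coeff m p) (hq : ∀ m, 0 ≤ MvPolynomial.coeff m q) :
    ∀ m, 0 ≤ MvPolynomial.coeff m (p * q) := by
  classical
  intro m
  rw [MvPolynomial.coeff_mul]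
  exact Finset.sum_nonneg fun x _ => mul_nonneg (hp _) (hq _)

theorem coeff_add_nonneg {σ : Type*} {p q : MvPolynomial σ ℝ}
    (hp : ∀ m, 0 ≤ MvPolynomial.coeff m p) (hq : ∀ m, 0 ≤ MvPolynomial.coeff m q) :
    ∀ m, 0 ≤ MvPolynomial.coeff m (p + q) := by
  intro m
  rw [MvPolynomial.coeff_add]
  exact add_nonneg (hp _) (hq _)

theorem add_ne_zero_of_nonneg {σ : Type*} {p q : MvPolynomial σ ℝ}
    (hp : ∀ m, 0 ≤ MvPolynomial.coeff m p) (hq : ∀ m, 0 ≤ MvPolynomial.coeff m q)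
    (h : p ≠ 0) : p + q ≠ 0 := by
  intro h0
  apply h
  ext m
  have := congrArg (MvPolynomial.coeff m) h0
  rw [MvPolynomial.coeff_add, MvPolynomial.coeff_zero] at this
  rw [MvPolynomial.coeff_zero]
  linarith [hp m, hq m]

theorem coeff_C_nonneg {σ : Type*} {c : ℝ} (hc : 0 ≤ c) :
    ∀ m, 0 ≤ MvPolynomial.coeff m (MvPolynomial.C c : MvPolynomial σ ℝ) := by
  classical
  intro m
  rw [MvPolynomial.coeff_C]
  split_ifs <;> simp [hc]

theorem coeff_one_nonneg {σ : Type*} :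
    ∀ m, 0 ≤ MvPolynomial.coeff m (1 : MvPolynomial σ ℝ) := by
  have := coeff_C_nonneg (σ := σ) (zero_le_one (α := ℝ))
  simpa using this

theorem posRat_posClass (n : ℕ) : PosClass (PosRat n) where
  one := ⟨1, 1, coeff_one_nonneg, coeff_one_nonneg, one_ne_zero, one_ne_zero, by simp⟩
  add := by
    rintro f g ⟨p1, q1, hp1, hq1, np1, nq1, h1⟩ ⟨p2, q2, hp2, hq2, np2, nq2, h2⟩
    refine ⟨p1 * q2 + p2 * q1, q1 * q2,
      coeff_add_nonneg (coeff_mul_nonneg hp1 hq2) (coeff_mul_nonneg hp2 hq1),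
      coeff_mul_nonneg hq1 hq2,
      add_ne_zero_of_nonneg (coeff_mul_nonneg hp1 hq2) (coeff_mul_nonneg hp2 hq1)
        (mul_ne_zero np1 nq2), mul_ne_zero nq1 nq2, fun M => ?_⟩
    simp only [map_add, map_mul, ← h1, ← h2]
    ring
  mul := by
    rintro f g ⟨p1, q1, hp1, hq1, np1, nq1, h1⟩ ⟨p2, q2, hp2, hq2, np2, nq2, h2⟩
    refine ⟨p1 * p2, q1 * q2, coeff_mul_nonneg hp1 hp2, coeff_mul_nonneg hq1 hq2,
      mul_ne_zero np1 np2, mul_ne_zero nq1 nq2, fun M => ?_⟩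
    simp only [map_mul, ← h1, ← h2]
    ring
  smul := by
    rintro c f hc ⟨p1, q1, hp1, hq1, np1, nq1, h1⟩
    refine ⟨MvPolynomial.C c * p1, q1, coeff_mul_nonneg (coeff_C_nonneg hc.le) hp1, hq1,
      mul_ne_zero (by simpa using hc.ne') np1, nq1, fun M => ?_⟩
    simp only [map_mul, ← h1, MvPolynomial.eval_C]
    ring
  div := by
    rintro f g h ⟨p1, q1, hp1, hq1, np1, nq1, h1⟩ ⟨p2, q2, hp2, hq2, np2, nq2, h2⟩ hfg
    refine ⟨p1 * q2, p2 * q1, coeff_mul_nonneg hp1 hq2, coeff_mul_nonneg hp2 hq1,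
      mul_ne_zero np1 nq2, mul_ne_zero np2 nq1, fun M => ?_⟩
    simp only [map_mul, ← h1, ← h2, ← hfg]
    ring

theorem posRat_central (n : ℕ) (x : ℤ) (y : ℕ) (h : (x, y) ∈ SmallIdx n) :
    PosRat n (fun M => centralMinor n M x y) := by
  classical
  refine ⟨MvPolynomial.X ⟨(x, y), h⟩, 1, ?_, coeff_one_nonneg, MvPolynomial.X_ne_zero _,
    one_ne_zero, by simp⟩
  intro m
  rw [MvPolynomial.coeff_X]
  split_ifs <;> simp

theorem octahedron (n : ℕ) (M : Matrix (ZMod n) (ZMod n) ℝ) (a b : ℤ) (y : ℕ) :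
    contiguousMinor n M a b (y+2) * contiguousMinor n M (a+1) (b+1) y
      + contiguousMinor n M (a+1) (b+1) (y+1) * contiguousMinor n M a b (y+1)
      = contiguousMinor n M (a+1) b (y+1) * contiguousMinor n M a (b+1) (y+1) := by
  have h := dodgson (Matrix.of fun i j : Fin (y+2) =>
    M (((a + (i : ℤ)) : ℤ) : ZMod n) (((b + ((y+2 : ℕ) : ℤ) - 1 - (j : ℤ)) : ℤ) : ZMod n))
  unfold contiguousMinor
  convert h using 4
  all_goals
    first
    | rfl
    | (congr 1
       ext i j
       simp only [Matrix.of_apply, Matrix.submatrix_apply, Fin.val_succ, Fin.val_castSucc]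
       push_cast
       congr 1 <;> ring)

theorem contiguousMinor_shift (n : ℕ) (M : Matrix (ZMod n) (ZMod n) ℝ) (a b t : ℤ) (y : ℕ) :
    contiguousMinor n M (a + n * t) (b + n * t) y = contiguousMinor n M a b y := by
  unfold contiguousMinor
  congr 1
  ext i j
  simp

/-- Noninterlaced contiguous minors of offset `d` are positive rational functions. -/
def OffsetOK (n : ℕ) (d : ℤ) : Prop :=
  ∀ (a : ℤ) (y : ℕ), (y : ℤ) ≤ d → y + d ≤ n → PosRat n (fun M => contiguousMinor n M a (a + d) y)

theorem posRat_zero_size (n : ℕ) (a b : ℤ) : PosRat n (fun M => contiguousMinor n M a b 0) := by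
  convert (posRat_posClass n).one using 2 with M
  simp [contiguousMinor]

theorem offset_up (n : ℕ) (d : ℤ) (hd : (n : ℤ) ≤ 2 * d) (h1 : OffsetOK n (d-1)) (h2 : OffsetOK n d) :
    OffsetOK n (d+1) := by
  intro a y hy hyn
  obtain _ | y := y
  · exact posRat_zero_size _ _ _
  push_cast at hy hyn
  have hP := posRat_posClass n
  refine hP.div _ _ _ (hP.add _ _ (hP.mul _ _ (h2 a (y+2) ?_ ?_) (h2 (a+1) y ?_ ?_))
    (hP.mul _ _ (h2 (a+1) (y+1) ?_ ?_) (h2 a (y+1) ?_ ?_))) (h1 (a+1) (y+1) ?_ ?_) ?_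
  all_goals try (push_cast; omega)
  intro M
  have h := octahedron n M a (a+d) y
  rw [show a + 1 + (d - 1) = a + d by ring, show a + 1 + d = a + d + 1 by ring,
    show a + (d + 1) = a + d + 1 by ring, h]
  ring

theorem offset_down (n : ℕ) (d : ℤ) (hd : 2 * d < n) (h1 : OffsetOK n (d+1)) (h2 : OffsetOK n d) :
    OffsetOK n (d-1) := by
  intro a y hy hyn
  obtain _ | y := y
  · exact posRat_zero_size _ _ _
  push_cast at hy hyn
  have hP := posRat_posClass n
  obtain ⟨a, rfl⟩ : ∃ a', a = a' + 1 := ⟨a - 1, by ring⟩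
  refine hP.div _ _ _ (hP.add _ _ (hP.mul _ _ (h2 a (y+2) ?_ ?_) (h2 (a+1) y ?_ ?_))
    (hP.mul _ _ (h2 (a+1) (y+1) ?_ ?_) (h2 a (y+1) ?_ ?_))) (h1 a (y+1) ?_ ?_) ?_
  all_goals try (push_cast; omega)
  intro M
  have h := octahedron n M a (a+d) y
  rw [show a + 1 + (d - 1) = a + d by ring, show a + 1 + d = a + d + 1 by ring,
    show a + (d + 1) = a + d + 1 by ring, h]

theorem offset_base0 (n : ℕ) [NeZero n] : OffsetOK n (((n : ℤ) - 1) / 2) := by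
  intro a y hy hyn
  by_cases hy0 : y = 0
  · subst hy0; exact posRat_zero_size _ _ _
  have hn : 0 < n := Nat.pos_of_ne_zero (NeZero.ne n)
  have hx : ∃ t x : ℤ, 2 * a + y = x + 2 * n * t ∧ 1 ≤ x ∧ x ≤ 2 * n := by
    refine ⟨(2 * a + y - 1) / (2 * n), (2 * a + y - 1) % (2 * n) + 1, ?_, ?_, ?_⟩
    · have := Int.emod_add_mul_ediv (2 * a + y - 1) (2 * n); linarith
    · have := Int.emod_nonneg (2 * a + y - 1) (b := 2 * (n : ℤ)) (by omega); linarith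
    · have := Int.emod_lt_of_pos (2 * a + y - 1) (b := 2 * (n : ℤ)) (by omega); linarith
  obtain ⟨t, x, hxe, hx1, hx2⟩ := hx
  have hc := posRat_central n x y ⟨hx1, hx2, Or.inl ⟨by simp only; omega, by simp only; omega⟩⟩
  convert hc using 2 with M
  unfold centralMinor
  conv_rhs => rw [← contiguousMinor_shift n M _ _ t]
  have e : x - y = 2 * (a - n * t) := by linarith
  rw [e, Int.fdiv_eq_ediv_of_nonneg _ (by norm_num), Int.fdiv_eq_ediv_of_nonneg _ (by norm_num)]
  generalize (n : ℤ) * t = u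
  congr 1 <;> omega

theorem offset_base1 (n : ℕ) [NeZero n] : OffsetOK n (((n : ℤ) - 1) / 2 + 1) := by
  intro a y hy hyn
  by_cases hy0 : y = 0
  · subst hy0; exact posRat_zero_size _ _ _
  have hn : 0 < n := Nat.pos_of_ne_zero (NeZero.ne n)
  have hx : ∃ t x : ℤ, 2 * a + 1 + y = x + 2 * n * t ∧ 1 ≤ x ∧ x ≤ 2 * n := by
    refine ⟨(2 * a + 1 + y - 1) / (2 * n), (2 * a + 1 + y - 1) % (2 * n) + 1, ?_, ?_, ?_⟩
    · have := Int.emod_add_mul_ediv (2 * a + 1 + y - 1) (2 * n); linarith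
    · have := Int.emod_nonneg (2 * a + 1 + y - 1) (b := 2 * (n : ℤ)) (by omega); linarith
    · have := Int.emod_lt_of_pos (2 * a + 1 + y - 1) (b := 2 * (n : ℤ)) (by omega); linarith
  obtain ⟨t, x, hxe, hx1, hx2⟩ := hx
  have e : x - y = 2 * (a - n * t) + 1 := by linarith
  have hc := posRat_central n x y ⟨hx1, hx2, by
    by_cases h : 2 * y < n
    · exact Or.inl ⟨by simp only; omega, h⟩
    · refine Or.inr ⟨by simp only; omega, ⟨a - n * t + y, ?_⟩⟩
      simp only; linarith⟩
  convert hc using 2 with M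
  unfold centralMinor
  conv_rhs => rw [← contiguousMinor_shift n M _ _ t]
  rw [e, Int.fdiv_eq_ediv_of_nonneg _ (by norm_num), Int.fdiv_eq_ediv_of_nonneg _ (by norm_num)]
  generalize (n : ℤ) * t = u
  congr 1 <;> omega

theorem offset_all (n : ℕ) [NeZero n] (d : ℤ) : OffsetOK n d := by
  set D : ℤ := ((n : ℤ) - 1) / 2 with hD
  have up : ∀ e : ℕ, OffsetOK n (D + e) ∧ OffsetOK n (D + e + 1) := by
    intro e
    induction e with
    | zero => simpa using ⟨offset_base0 n, offset_base1 n⟩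
    | succ e ih =>
      push_cast
      rw [show D + ((e : ℤ) + 1) = D + e + 1 by ring]
      refine ⟨ih.2, offset_up n _ (by omega) ?_ ih.2⟩
      rw [show D + e + 1 - 1 = D + (e : ℤ) by ring]
      exact ih.1
  have down : ∀ e : ℕ, OffsetOK n (D - e) ∧ OffsetOK n (D - e + 1) := by
    intro e
    induction e with
    | zero => simpa using ⟨offset_base0 n, offset_base1 n⟩
    | succ e ih =>
      have hn : 0 < n := Nat.pos_of_ne_zero (NeZero.ne n)
      push_cast
      rw [show D - ((e : ℤ) + 1) = D - e - 1 by ring, show D - (e : ℤ) - 1 + 1 = D - e by ring]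
      exact ⟨offset_down n _ (by omega) ih.2 ih.1, ih.1⟩
  rcases le_total D d with h | h
  · have := (up (d - D).toNat).1
    rwa [show D + ((d - D).toNat : ℤ) = d by omega] at this
  · have := (down (D - d).toNat).1
    rwa [show D - ((D - d).toNat : ℤ) = d by omega] at this

/-- Any noninterlaced minor is a positive rational function of the small central minors.
The noninterlaced pair `A = {a₁,…,a_k}`, `B = {b₁,…,b_k}` is encoded by the hypothesis
that after a cyclic rotation by `t`, the sequence `a₁, …, a_k, b_k, …, b₁` is strictly
increasing (i.e. it occurs in circular order). Then there are polynomials `p, q` in the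
small central minors, both with nonnegative coefficients and `q ≠ 0`, with
`det((M_{aᵢ,bⱼ})) · q((CM_s(M))_s) = p((CM_s(M))_s)` for every `n × n` real matrix `M`. -/
theorem noninterlaced_minor_positive_rational (n k : ℕ) [NeZero n]
    (a b : Fin k → Fin n) (t : ℕ)
    (hg : StrictMono (fun i : Fin k => ((a i : ℕ) + t) % n))
    (hh : StrictAnti (fun i : Fin k => ((b i : ℕ) + t) % n))
    (hgh : ∀ i j : Fin k, ((a i : ℕ) + t) % n < ((b j : ℕ) + t) % n) :
    ∃ p q : MvPolynomial (SmallIdx n) ℝ,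
      (∀ m : (SmallIdx n) →₀ ℕ, 0 ≤ MvPolynomial.coeff m p) ∧
      (∀ m : (SmallIdx n) →₀ ℕ, 0 ≤ MvPolynomial.coeff m q) ∧
      q ≠ 0 ∧
      ∀ M : Matrix (ZMod n) (ZMod n) ℝ,
        Matrix.det (Matrix.of fun i j : Fin k =>
            M (((a i : ℕ) : ZMod n)) (((b j : ℕ) : ZMod n))) *
          MvPolynomial.eval (fun s : SmallIdx n => centralMinor n M s.1.1 s.1.2) q =
          MvPolynomial.eval (fun s : SmallIdx n => centralMinor n M s.1.1 s.1.2) p := by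
  have hP := posRat_posClass n
  have hn : 0 < n := Nat.pos_of_ne_zero (NeZero.ne n)
  suffices h : PosRat n (fun M => Matrix.det (Matrix.of fun i j : Fin k =>
            M (((a i : ℕ) : ZMod n)) (((b j : ℕ) : ZMod n)))) by
    obtain ⟨p, q, hp, hq, -, hq0, h⟩ := h
    exact ⟨p, q, hp, hq, hq0, h⟩
  -- a cut point separating the rows from the columns
  obtain ⟨r, hr0, hrn, hra, hrb⟩ : ∃ r : ℤ, 0 ≤ r ∧ r ≤ n ∧
      (∀ i, ((((a i : ℕ) + t) % n : ℕ) : ℤ) < r) ∧ (∀ j, r ≤ ((((b j : ℕ) + t) % n : ℕ) : ℤ)) := by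
    obtain _ | k := k
    · exact ⟨0, le_rfl, by omega, fun i => i.elim0, fun i => i.elim0⟩
    · refine ⟨((((b (Fin.last k) : ℕ) + t) % n : ℕ) : ℤ), by omega, ?_, ?_, ?_⟩
      · have := Nat.mod_lt ((b (Fin.last k) : ℕ) + t) hn; omega
      · intro i; exact_mod_cast hgh i (Fin.last k)
      · intro j; exact_mod_cast hh.antitone (Fin.le_last j)
  have hbn : ∀ j, ((((b j : ℕ) + t) % n : ℕ) : ℤ) < n := by
    intro j; exact_mod_cast Nat.mod_lt _ hn
  have main := minors_of_contiguous hP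
    (fun (M : Matrix (ZMod n) (ZMod n) ℝ) (i j : ℤ) =>
      M ((i - t : ℤ) : ZMod n) (((n : ℤ) - 1 - j - t : ℤ) : ZMod n)) r (n - r) hr0 (by omega) ?_ k
    (fun i => ((((a i : ℕ) + t) % n : ℕ) : ℤ)) (fun j => (n : ℤ) - 1 - ((((b j : ℕ) + t) % n : ℕ) : ℤ))
    ?_ ?_ ?_ ?_
  · convert main using 3 with M
    ext i j
    simp only [Matrix.of_apply]
    congr 1
    · push_cast [ZMod.natCast_mod]; ring
    · rw [show (n : ℤ) - 1 - ((n : ℤ) - 1 - ((((b j : ℕ) + t) % n : ℕ) : ℤ)) - t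
        = ((((b j : ℕ) + t) % n : ℕ) : ℤ) - t by ring]
      push_cast [ZMod.natCast_mod]; ring
  · intro k c d hc0 hcr hd0 hdr
    have h := offset_all n (n - d - k - c) (c - t) k (by omega) (by omega)
    convert h using 2 with M
    unfold contiguousMinor
    congr 1
    ext i j
    simp only [Matrix.of_apply]
    congr 2 <;> ring
  · intro i j hij
    have := hg hij
    simp only at this ⊢
    exact_mod_cast this
  · intro i; exact ⟨by positivity, hra i⟩
  · intro i j hij
    have := hh hij
    simp only at this ⊢
    omega
  · intro j
    have := hbn j; have := hrb j
    omega
end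

section
/- Fix n ≥ 1 and a noninterlaced pair of k-element subsets A = {a_1,…,a_k} and B = {b_1,…,b_k} of {1,…,n}, listed so that a_1, a_2, …, a_k, b_k, b_{k−1}, …, b_1 occur in circular order. Then there exist multivariate real polynomials p and q in variables indexed by the restricted small-central-minor index set S' = {(x,y) : 1 ≤ x ≤ n, and either 1 ≤ y < n/2, or y = n/2 and x+y is odd}, both with all coefficients nonnegative and with q not identically zero, such that for every SYMMETRIC n×n real matrix M one has det((M_{a_i,b_j})_{i,j}) · q((CM_s(M))_{s∈S'}) = p((CM_s(M))_{s∈S'}). That is, for symmetric matrices every noninterlaced minor is a positive rational function of the small central minors with first index x in {1,…,n} only. -/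
/-- The restricted small-central-minor index set for symmetric matrices:
pairs `(x,y)` with `1 ≤ x ≤ n` and either `1 ≤ y < n/2`, or `y = n/2` and `x + y` odd. -/
def SmallIdxSym (n : ℕ) : Set (ℤ × ℕ) :=
  {s | 1 ≤ s.1 ∧ s.1 ≤ (n : ℤ) ∧
    ((1 ≤ s.2 ∧ 2 * s.2 < n) ∨ (2 * s.2 = n ∧ Odd (s.1 + (s.2 : ℤ))))}

namespace SNM
open Matrix

theorem plucker {ι : Type*} [Fintype ι] [DecidableEq ι] (A : Matrix ι ι ℝ) {i j : ι} (hij : i ≠ j)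
    (u v : ι → ℝ) :
    det A * det ((A.updateRow i u).updateRow j v) =
      det (A.updateRow i u) * det (A.updateRow j v) -
      det (A.updateRow j u) * det (A.updateRow i v) := by
  have h1 := mulVec_cramer Aᵀ u
  have h2 : ∀ w, det ((A.updateRow i w).updateRow j v) =
      cramer (A.updateRow j v)ᵀ w i := by
    intro w
    rw [cramer_transpose_apply, updateRow_comm _ hij]
  have h3 : ∀ l, l ≠ i → l ≠ j → cramer (A.updateRow j v)ᵀ (A l) i = 0 := by
    intro l hi hj
    rw [cramer_transpose_apply]
    apply det_zero_of_row_eq hi.symm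
    simp [hi, hj, updateRow_ne]
  have h4 : cramer (A.updateRow j v)ᵀ (A i) i = det (A.updateRow j v) := by
    rw [cramer_transpose_apply]
    congr 1
    rw [← updateRow_comm _ hij, updateRow_eq_self]
  have h5 : cramer (A.updateRow j v)ᵀ (A j) i = - det (A.updateRow i v) := by
    have e : (A.updateRow j v).updateRow i (A j) =
        (A.updateRow i v).submatrix (Equiv.swap i j) id := by
      ext k l
      by_cases hi : k = i
      · subst hi
        simp [updateRow_ne hij.symm]
      · by_cases hj : k = j
        · subst hj
          simp [updateRow_ne hi]
        · simp [updateRow_ne hi, updateRow_ne hj, Equiv.swap_apply_of_ne_of_ne hi hj]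
    rw [cramer_transpose_apply, e, det_permute, Equiv.Perm.sign_swap hij]
    simp
  have key : det A * cramer (A.updateRow j v)ᵀ u i =
      ∑ l, cramer Aᵀ u l * cramer (A.updateRow j v)ᵀ (A l) i := by
    have e : det A • u = ∑ l, cramer Aᵀ u l • A l := by
      rw [det_transpose] at h1
      rw [← h1]
      ext x
      simp [mulVec, dotProduct, Finset.sum_apply, mul_comm]
    have := congrArg (fun w => cramer (A.updateRow j v)ᵀ w i) e
    simpa [map_sum, Finset.sum_apply] using this
  rw [h2, key, ← Finset.sum_subset (Finset.subset_univ {i, j}),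
    Finset.sum_pair hij, h4, h5, cramer_transpose_apply, cramer_transpose_apply]
  · ring
  · intro l _ hl
    simp only [Finset.mem_insert, Finset.mem_singleton, not_or] at hl
    rw [h3 l hl.1 hl.2, mul_zero]

theorem det_move {m : ℕ} (f : Fin (m+1) → Fin (m+1) → ℝ) (p : Fin (m+1)) :
    det (of f) = (-1)^(p:ℕ) * det (of (Fin.cons (f p) (fun l => f (p.succAbove l)) :
      Fin (m+1) → Fin (m+1) → ℝ)) := by
  rw [det_succ_row (of f) p, det_succ_row_zero, Finset.mul_sum]
  refine Finset.sum_congr rfl fun j _ => ?_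
  rw [pow_add]
  simp only [mul_assoc, of_apply, Fin.cons_zero]
  rfl

theorem det_unit {m : ℕ} (A : Matrix (Fin (m+1)) (Fin (m+1)) ℝ) (p q : Fin (m+1)) :
    det (A.updateRow p (Pi.single q 1)) =
      (-1)^(p + q : ℕ) * det (A.submatrix p.succAbove q.succAbove) := by
  rw [← adjugate_fin_succ_eq_det_submatrix, adjugate_apply]

theorem dodgson {m : ℕ} (A : Matrix (Fin (m+2)) (Fin (m+2)) ℝ) :
    det A * det (A.submatrix (fun i : Fin m => i.succ.castSucc) (fun i : Fin m => i.succ.castSucc)) =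
    det (A.submatrix Fin.succ Fin.succ) * det (A.submatrix Fin.castSucc Fin.castSucc) -
    det (A.submatrix Fin.castSucc Fin.succ) * det (A.submatrix Fin.succ Fin.castSucc) := by
  have h := plucker A (i := 0) (j := Fin.last (m+1)) (Fin.last_pos.ne)
    (Pi.single 0 1) (Pi.single (Fin.last (m+1)) 1)
  rw [det_unit, det_unit, det_unit, det_unit, det_unit] at h
  have e : (A.updateRow 0 (Pi.single 0 1)).submatrix (Fin.last (m+1)).succAbove (Fin.last (m+1)).succAbove
    = (A.submatrix (Fin.last (m+1)).succAbove (Fin.last (m+1)).succAbove).updateRow 0 (Pi.single 0 1) := by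
    ext i j
    refine Fin.cases ?_ (fun i => ?_) i
    · refine Fin.cases ?_ (fun j => ?_) j <;> simp [updateRow_apply, Fin.ext_iff]
    · simp [updateRow_apply, Fin.ext_iff]
  rw [e, det_unit] at h
  simp only [submatrix_submatrix] at h
  have e2 : (Fin.last (m+1)).succAbove ∘ (0 : Fin (m+1)).succAbove =
      fun i : Fin m => i.succ.castSucc := by
    ext i; simp
  rw [e2] at h
  simp only [Fin.succAbove_last, Fin.val_zero, Fin.val_last, add_zero, zero_add,
    pow_zero, one_mul] at h
  have z1 : (0 : Fin (m+2)).succAbove = Fin.succ := by ext i; simp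
  rw [z1] at h
  have s : ((-1:ℝ)^(m+1))*(-1)^(m+1) = 1 := by rw [← mul_pow]; simp
  have s2 : ((-1:ℝ)^(m + 1 + (m + 1))) = 1 := by rw [pow_add]; exact s
  rw [s2] at h
  linear_combination h + (det (A.submatrix Fin.castSucc Fin.succ) * det (A.submatrix Fin.succ Fin.castSucc)) * (-s)

theorem mixed {m : ℕ} (x z : Fin (m+2) → ℝ) (U : Fin (m+1) → Fin (m+2) → ℝ) (p : Fin (m+1)) :
    det (of (Fin.cons x (Fin.snoc (fun l => U (p.succAbove l)) z : Fin (m+1) → Fin (m+2) → ℝ) :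
        Fin (m+2) → Fin (m+2) → ℝ)) *
      det (of fun i j : Fin (m+1) => U i j.succ) =
    det (of (Fin.cons x U : Fin (m+2) → Fin (m+2) → ℝ)) *
      det (of fun i j : Fin (m+1) =>
        (Fin.snoc (fun l => U (p.succAbove l)) z : Fin (m+1) → Fin (m+2) → ℝ) i j.succ) +
    det (of (Fin.snoc U z : Fin (m+2) → Fin (m+2) → ℝ)) *
      det (of fun i j : Fin (m+1) =>
        (Fin.cons x (fun l => U (p.succAbove l)) : Fin (m+1) → Fin (m+2) → ℝ) i j.succ) := by
  set T : Fin m → Fin (m+2) → ℝ := fun l => U (p.succAbove l) with hT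
  have h := plucker (of (Fin.cons x U : Fin (m+2) → Fin (m+2) → ℝ)) (i := 0) (j := p.succ)
    (Fin.succ_ne_zero p).symm z (Pi.single 0 1)
  have c0 : ∀ w, (of (Fin.cons x U : Fin (m+2) → Fin (m+2) → ℝ)).updateRow 0 w =
      of (Fin.cons w U : Fin (m+2) → Fin (m+2) → ℝ) := by
    intro w
    ext i j
    refine Fin.cases ?_ (fun i => ?_) i <;> simp [updateRow_apply]
  have cs : ∀ w, (fun l => (Fin.cons w U : Fin (m+2) → Fin (m+2) → ℝ) (p.succ.succAbove l)) =
      (Fin.cons w T : Fin (m+1) → Fin (m+2) → ℝ) := by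
    intro w
    ext i j
    refine Fin.cases ?_ (fun i => ?_) i <;> simp [hT]
  have t1 : ∀ w, det ((of (Fin.cons w U : Fin (m+2) → Fin (m+2) → ℝ)).updateRow p.succ (Pi.single 0 1))
      = (-1)^(p+1 : ℕ) * det (of fun i j : Fin (m+1) =>
        (Fin.cons w T : Fin (m+1) → Fin (m+2) → ℝ) i j.succ) := by
    intro w
    rw [det_unit, ← cs w]
    simp only [Fin.val_succ, Fin.val_zero, add_zero]
    congr 2
  have t2 : det (of (Fin.snoc U z : Fin (m+2) → Fin (m+2) → ℝ)) =
      (-1)^(m+1) * det (of (Fin.cons z U : Fin (m+2) → Fin (m+2) → ℝ)) := by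
    rw [det_move _ (Fin.last (m+1))]
    simp
  have t3 : det (of fun i j : Fin (m+1) => (Fin.snoc T z : Fin (m+1) → Fin (m+2) → ℝ) i j.succ) =
      (-1)^m * det (of fun i j : Fin (m+1) =>
        (Fin.cons z T : Fin (m+1) → Fin (m+2) → ℝ) i j.succ) := by
    rw [det_move _ (Fin.last m)]
    simp only [Fin.snoc_last, Fin.val_last, Fin.succAbove_last, Fin.snoc_castSucc]
    congr 3
    ext i j
    refine Fin.cases ?_ (fun i => ?_) i <;> simp
  have t4 : det (of (Fin.cons x (Fin.snoc T z : Fin (m+1) → Fin (m+2) → ℝ) :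
        Fin (m+2) → Fin (m+2) → ℝ)) = (-1)^(m+1) *
      det (of (Fin.cons z (Fin.cons x T : Fin (m+1) → Fin (m+2) → ℝ) :
        Fin (m+2) → Fin (m+2) → ℝ)) := by
    rw [det_move _ (Fin.last (m+1))]
    simp only [Fin.val_last, Fin.succAbove_last]
    congr 3
    ext i j
    refine Fin.cases ?_ (fun i => ?_) i
    · simp [← Fin.succ_last]
    · refine Fin.cases ?_ (fun i => ?_) i
      · simp
      · simp only [Fin.cons_succ, ← Fin.succ_castSucc, Fin.snoc_castSucc]
  have t5 : det ((of (Fin.cons x U : Fin (m+2) → Fin (m+2) → ℝ)).updateRow p.succ z) =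
      (-1)^(p+1 : ℕ) * det (of (Fin.cons z (Fin.cons x T : Fin (m+1) → Fin (m+2) → ℝ) :
        Fin (m+2) → Fin (m+2) → ℝ)) := by
    have := det_move ((of (Fin.cons x U : Fin (m+2) → Fin (m+2) → ℝ)).updateRow p.succ z) p.succ
    refine Eq.trans this ?_
    simp only [Fin.val_succ]
    congr 3
    rw [← cs x]
    ext i j
    refine Fin.cases ?_ (fun i => ?_) i
    · simp
    · simp
  have t6 : det ((of (Fin.cons x U : Fin (m+2) → Fin (m+2) → ℝ)).updateRow 0 (Pi.single 0 1)) =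
      det (of fun i j : Fin (m+1) => U i j.succ) := by
    rw [det_unit]
    simp
    congr 1
  rw [t6, t5, t1, c0, t1] at h
  rw [t2, t3, t4]
  simp only [pow_succ] at h ⊢
  rcases neg_one_pow_eq_or ℝ (p:ℕ) with e | e <;> rw [e] at h
  · linear_combination (-1:ℝ)^m * h
  · linear_combination (-(-1:ℝ)^m) * h

/-- A family of functions closed under the subtraction-free operations. -/
structure Closed {Ω : Type*} (P : (Ω → ℝ) → Prop) : Prop where
  one : P (fun _ => 1)
  add : ∀ f g, P f → P g → P (fun w => f w + g w)
  mul : ∀ f g, P f → P g → P (fun w => f w * g w)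
  div : ∀ f g h, P f → P g → (∀ w, h w * g w = f w) → P h

noncomputable def minor {Ω : Type*} (X : ℤ → ℤ → Ω → ℝ) {k : ℕ} (r c : Fin k → ℤ) : Ω → ℝ :=
  fun w => det (of fun i j : Fin k => X (r i) (c j) w)

theorem minor_swap {Ω : Type*} (X : ℤ → ℤ → Ω → ℝ) {k : ℕ} (r c : Fin k → ℤ) :
    minor (fun a b => X b a) c r = minor X r c := by
  funext w
  unfold minor
  rw [← det_transpose]
  rfl

theorem minor_mixed {Ω : Type*} (X : ℤ → ℤ → Ω → ℝ) {m : ℕ} (r c : Fin (m+2) → ℤ)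
    (U : Fin (m+1) → ℤ) (p : Fin (m+1)) (hU : ∀ l, U (p.succAbove l) = r l.succ.castSucc) (w : Ω) :
    minor X r c w * minor X U (fun j => c j.succ) w =
      minor X (Fin.cons (r 0) U : Fin (m+2) → ℤ) c w *
        minor X (fun i => r i.succ) (fun j => c j.succ) w +
      minor X (Fin.snoc U (r (Fin.last _)) : Fin (m+2) → ℤ) c w *
        minor X (fun i => r i.castSucc) (fun j => c j.succ) w := by
  have h := mixed (fun j => X (r 0) (c j) w) (fun j => X (r (Fin.last _)) (c j) w)
    (fun i j => X (U i) (c j) w) p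
  unfold minor
  convert h using 4
  · ext i j
    refine Fin.cases ?_ (fun i => ?_) i
    · simp
    · refine Fin.lastCases ?_ (fun i => ?_) i
      · simp
      · simp [hU]
  · ext i j
    refine Fin.cases ?_ (fun i => ?_) i <;> simp
  · ext i j
    refine Fin.lastCases ?_ (fun i => ?_) i
    · simp
    · simp [hU]
  · ext i j
    refine Fin.lastCases ?_ (fun i => ?_) i <;> simp
  · ext i j
    refine Fin.cases ?_ (fun i => ?_) i
    · simp
    · simp [hU]

theorem gap {m : ℕ} (r : Fin (m+2) → ℤ) (hr : StrictMono r) (hs : ¬ ∀ i, r i = r 0 + (i : ℕ)) :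
    ∃ (U : Fin (m+1) → ℤ) (p : Fin (m+1)), StrictMono U ∧
      (∀ l, U (p.succAbove l) = r l.succ.castSucc) ∧ (∀ i, r 0 < U i) ∧
      ∀ i, U i < r (Fin.last _) := by
  have h1 : ∃ p : Fin (m+1), r p.castSucc + 1 < r p.succ := by
    by_contra hc
    push Not at hc
    apply hs
    intro i
    induction i using Fin.induction with
    | zero => simp
    | succ i ih =>
      have a1 := hc i
      have a2 := hr (Fin.castSucc_lt_succ (i := i))
      simp only [Fin.val_succ, Fin.val_castSucc] at *
      push_cast
      omega
  obtain ⟨p, hp⟩ := h1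
  have mono := hr.monotone
  refine ⟨fun l => if l < p then r l.succ else if l = p then r p.castSucc + 1 else r l.castSucc,
    p, ?_, ?_, ?_, ?_⟩
  · intro a b hab
    dsimp only
    have lab : a.succ < b.succ := Fin.succ_lt_succ_iff.2 hab
    have q1 := hr lab
    have q2 := hr (Fin.castSucc_lt_castSucc_iff.2 hab)
    have q3 : a < p → r a.succ ≤ r p.castSucc := fun h => mono (by
      rw [Fin.le_def]; rw [Fin.lt_def] at h; simpa using h)
    have q4 : p < b → r p.succ ≤ r b.castSucc := fun h => mono (by
      rw [Fin.le_def]; rw [Fin.lt_def] at h; simpa using h)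
    split_ifs with h1 h2 h3 h4 h5 h6 h7
    · exact q1
    · have := q3 h1; omega
    · have := q3 h1
      have := q4 (lt_of_le_of_ne (not_lt.1 h2) (Ne.symm h3))
      omega
    · subst h4; exact absurd (hab.trans h5) (lt_irrefl _)
    · omega
    · subst h4; have := q4 hab; omega
    · exact absurd (hab.trans h7) h1
    · subst_vars; exact absurd hab h1
    · exact q2
  · intro l
    dsimp only
    rcases lt_or_ge l.castSucc p with h | h
    · rw [Fin.succAbove_of_castSucc_lt _ _ h, if_pos h]; rfl
    · rw [Fin.succAbove_of_le_castSucc _ _ h]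
      have h' : p < l.succ := lt_of_le_of_lt h (Fin.castSucc_lt_succ)
      rw [if_neg (not_lt.2 h'.le), if_neg h'.ne']
  · intro i
    dsimp only
    split_ifs with h1 h2
    · exact hr (Fin.succ_pos _)
    · have : r 0 ≤ r p.castSucc := mono (Fin.zero_le _)
      omega
    · apply hr
      have h3 : p < i := lt_of_le_of_ne (not_lt.1 h1) (Ne.symm h2)
      rw [Fin.lt_def] at *
      change 0 < (i : ℕ)
      omega
  · intro i
    dsimp only
    split_ifs with h1 h2
    · apply hr
      rw [Fin.lt_def] at *
      have := p.2
      simp; omega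
    · have : r p.succ ≤ r (Fin.last _) := mono (Fin.le_last _)
      omega
    · exact hr (Fin.castSucc_lt_last _)

theorem row_step {Ω : Type*} {P : (Ω → ℝ) → Prop} (hP : Closed P) (X : ℤ → ℤ → Ω → ℝ)
    (S S' : ℤ × ℤ) {m : ℕ} (r c : Fin (m+2) → ℤ) (hr : StrictMono r) (hc : StrictMono c)
    (hrS : ∀ i, S.1 ≤ r i ∧ r i ≤ S.2) (hcS : ∀ i, S'.1 ≤ c i ∧ c i ≤ S'.2)
    (hs : ¬ ∀ i, r i = r 0 + (i : ℕ))
    (ih1 : ∀ r' c' : Fin (m+1) → ℤ, StrictMono r' → StrictMono c' →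
      (∀ i, S.1 ≤ r' i ∧ r' i ≤ S.2) → (∀ i, S'.1 ≤ c' i ∧ c' i ≤ S'.2) → P (minor X r' c'))
    (ih2 : ∀ r' : Fin (m+2) → ℤ, StrictMono r' → (∀ i, S.1 ≤ r' i ∧ r' i ≤ S.2) →
      r' (Fin.last _) - r' 0 < r (Fin.last _) - r 0 → P (minor X r' c)) : P (minor X r c) := by
  obtain ⟨U, p, hU, hp, h0, hl⟩ := gap r hr hs
  have hUS : ∀ i, S.1 ≤ U i ∧ U i ≤ S.2 := fun i => by
    have := hrS 0; have := hrS (Fin.last _); have := h0 i; have := hl i; omega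
  have hc' : StrictMono (fun j : Fin (m+1) => c j.succ) := hc.comp (Fin.strictMono_succ)
  have hcS' : ∀ i : Fin (m+1), S'.1 ≤ c i.succ ∧ c i.succ ≤ S'.2 := fun i => hcS _
  refine hP.div _ (minor X U (fun j => c j.succ)) _ (hP.add _ _ (hP.mul _ _ ?_ ?_) (hP.mul _ _ ?_ ?_))
    (ih1 _ _ hU hc' hUS hcS') (minor_mixed X r c U p hp)
  · apply ih2
    · intro a b
      refine Fin.cases ?_ (fun a => ?_) a <;> refine Fin.cases ?_ (fun b => ?_) b
      · simp
      · intro _; simpa using h0 b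
      · simp
      · intro h; simpa using hU (Fin.succ_lt_succ_iff.1 h)
    · intro i
      refine Fin.cases ?_ (fun i => ?_) i
      · simpa using hrS 0
      · simpa using hUS i
    · have := hl (Fin.last _)
      rw [← Fin.succ_last] at this ⊢
      simp only [Fin.cons_succ, Fin.cons_zero]
      omega
  · exact ih1 _ _ (hr.comp (Fin.strictMono_succ)) hc' (fun i => hrS _) hcS'
  · apply ih2
    · intro a b
      refine Fin.lastCases ?_ (fun a => ?_) a <;> refine Fin.lastCases ?_ (fun b => ?_) b
      · simp
      · intro h; exact absurd h (not_lt.2 (Fin.le_last _))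
      · intro _; simpa using hl a
      · intro h; simpa using hU (Fin.castSucc_lt_castSucc_iff.1 h)
    · intro i
      refine Fin.lastCases ?_ (fun i => ?_) i
      · simpa using hrS (Fin.last _)
      · simpa using hUS i
    · rw [← Fin.castSucc_zero]
      have := h0 0
      simp only [Fin.snoc_castSucc, Fin.snoc_last]
      simp only [Fin.castSucc_zero] at *
      omega
  · exact ih1 _ _ (hr.comp (Fin.strictMono_castSucc)) hc' (fun i => hrS _) hcS'

theorem tp {Ω : Type*} {P : (Ω → ℝ) → Prop} (hP : Closed P) (X : ℤ → ℤ → Ω → ℝ)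
    (S S' : ℤ × ℤ)
    (hsolid : ∀ (y : ℕ) (a c : ℤ), 1 ≤ y → S.1 ≤ a → a + y - 1 ≤ S.2 → S'.1 ≤ c → c + y - 1 ≤ S'.2 →
      P (minor X (fun i : Fin y => a + (i : ℕ)) (fun i : Fin y => c + (i : ℕ)))) :
    ∀ (k : ℕ) (r c : Fin k → ℤ), StrictMono r → StrictMono c →
      (∀ i, S.1 ≤ r i ∧ r i ≤ S.2) → (∀ i, S'.1 ≤ c i ∧ c i ≤ S'.2) → P (minor X r c) := by
  have solid : ∀ (m : ℕ) (r c : Fin (m+1) → ℤ), (∀ i, S.1 ≤ r i ∧ r i ≤ S.2) →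
      (∀ i, S'.1 ≤ c i ∧ c i ≤ S'.2) → (∀ i, r i = r 0 + (i : ℕ)) → (∀ i, c i = c 0 + (i : ℕ)) →
      P (minor X r c) := by
    intro m r c hrS hcS h1 h2
    have := hsolid (m+1) (r 0) (c 0) (by omega) (hrS 0).1
      (by have := (hrS (Fin.last _)).2; rw [h1] at this; simp at this; push_cast; omega) (hcS 0).1
      (by have := (hcS (Fin.last _)).2; rw [h2] at this; simp at this; push_cast; omega)
    convert this using 2
    · exact funext h1
    · exact funext h2
  intro k
  induction k with
  | zero =>
    intro r c _ _ _ _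
    convert hP.one using 1
    funext w
    simp [minor]
  | succ k ihk =>
    rcases k with _ | m
    · intro r c _ _ hrS hcS
      apply solid _ r c hrS hcS <;> intro i <;> rw [show i = 0 from Fin.ext (by have := i.2; simp)] <;> simp
    · have main : ∀ (N : ℕ) (r c : Fin (m+2) → ℤ), StrictMono r → StrictMono c →
          (∀ i, S.1 ≤ r i ∧ r i ≤ S.2) → (∀ i, S'.1 ≤ c i ∧ c i ≤ S'.2) →
          (r (Fin.last _) - r 0) + (c (Fin.last _) - c 0) < N → P (minor X r c) := by
        intro N
        induction N with
        | zero =>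
          intro r c hr hc _ _ h
          have := hr (Fin.last_pos (n := m))
          have := hc (Fin.last_pos (n := m))
          simp only [Nat.cast_zero] at h
          exfalso
          change r 0 < _ at *
          omega
        | succ N ihN =>
          intro r c hr hc hrS hcS h
          push_cast at h
          by_cases h1 : ∀ i, r i = r 0 + (i : ℕ)
          · by_cases h2 : ∀ i, c i = c 0 + (i : ℕ)
            · exact solid _ r c hrS hcS h1 h2
            · rw [← minor_swap]
              refine row_step hP _ S' S c r hc hr hcS hrS h2 ?_ ?_
              · intro r' c' a1 a2 a3 a4
                rw [minor_swap]
                exact ihk c' r' a2 a1 a4 a3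
              · intro c' a1 a2 a3
                rw [minor_swap]
                exact ihN r c' hr a1 hrS a2 (by omega)
          · refine row_step hP _ S S' r c hr hc hrS hcS h1 ihk ?_
            intro r' a1 a2 a3
            exact ihN r' c a1 hc a2 hcS (by omega)
      intro r c hr hc hrS hcS
      exact main ((r (Fin.last _) - r 0) + (c (Fin.last _) - c 0) + 1).toNat r c hr hc hrS hcS
        (by have := Int.self_le_toNat ((r (Fin.last _) - r 0) + (c (Fin.last _) - c 0) + 1); omega)

/-- Nonzero polynomials with nonnegative coefficients. -/
def Pos {σ : Type*} (p : MvPolynomial σ ℝ) : Prop :=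
  (∀ m, 0 ≤ MvPolynomial.coeff m p) ∧ 0 < MvPolynomial.eval (fun _ => (1:ℝ)) p

theorem Pos.one {σ : Type*} : Pos (1 : MvPolynomial σ ℝ) := by
  classical
  refine ⟨fun m => ?_, by simp⟩
  rw [MvPolynomial.coeff_one]
  split_ifs <;> norm_num

theorem Pos.X {σ : Type*} (s : σ) : Pos (MvPolynomial.X s : MvPolynomial σ ℝ) := by
  classical
  refine ⟨fun m => ?_, by simp⟩
  rw [MvPolynomial.coeff_X]
  split_ifs <;> norm_num

theorem Pos.add {σ : Type*} {p q : MvPolynomial σ ℝ} (hp : Pos p) (hq : Pos q) : Pos (p + q) := by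
  refine ⟨fun m => ?_, ?_⟩
  · rw [MvPolynomial.coeff_add]; exact add_nonneg (hp.1 m) (hq.1 m)
  · rw [map_add]; exact add_pos hp.2 hq.2

theorem Pos.mul {σ : Type*} {p q : MvPolynomial σ ℝ} (hp : Pos p) (hq : Pos q) : Pos (p * q) := by
  classical
  refine ⟨fun m => ?_, ?_⟩
  · rw [MvPolynomial.coeff_mul]; exact Finset.sum_nonneg fun x _ => mul_nonneg (hp.1 _) (hq.1 _)
  · rw [map_mul]; exact mul_pos hp.2 hq.2

abbrev Om (n : ℕ) := {M : Matrix (ZMod n) (ZMod n) ℝ // M.IsSymm}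

/-- Positive rational functions of the small central minors. -/
def PR (n : ℕ) (f : Om n → ℝ) : Prop :=
  ∃ p q : MvPolynomial (SmallIdxSym n) ℝ, Pos p ∧ Pos q ∧ ∀ M : Om n,
    f M * MvPolynomial.eval (fun s : SmallIdxSym n => centralMinor n M.1 s.1.1 s.1.2) q =
      MvPolynomial.eval (fun s : SmallIdxSym n => centralMinor n M.1 s.1.1 s.1.2) p

theorem PR_closed (n : ℕ) : Closed (PR n) where
  one := ⟨1, 1, Pos.one, Pos.one, fun M => by simp⟩
  add := by
    rintro f g ⟨p, q, hp, hq, h⟩ ⟨p', q', hp', hq', h'⟩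
    refine ⟨p * q' + p' * q, q * q', (hp.mul hq').add (hp'.mul hq), hq.mul hq', fun M => ?_⟩
    simp only [map_add, map_mul, ← h, ← h']
    ring
  mul := by
    rintro f g ⟨p, q, hp, hq, h⟩ ⟨p', q', hp', hq', h'⟩
    refine ⟨p * p', q * q', hp.mul hp', hq.mul hq', fun M => ?_⟩
    simp only [map_mul, ← h, ← h']
    ring
  div := by
    rintro f g e ⟨p, q, hp, hq, h⟩ ⟨p', q', hp', hq', h'⟩ he
    refine ⟨p * q', q * p', hp.mul hq', hq.mul hp', fun M => ?_⟩
    simp only [map_mul, ← h, ← h', ← he]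
    ring

noncomputable def F (n : ℕ) (a b : ℤ) (y : ℕ) : Om n → ℝ := fun M => contiguousMinor n M.1 a b y

theorem F_zero (n : ℕ) (a b : ℤ) : F n a b 0 = fun _ => 1 := by
  funext M
  simp [F, contiguousMinor]

theorem F_per1 (n : ℕ) (a b : ℤ) (y : ℕ) : F n (a + n) b y = F n a b y := by
  funext M
  simp [F, contiguousMinor]

theorem F_per2 (n : ℕ) (a b : ℤ) (y : ℕ) : F n a (b + n) y = F n a b y := by
  funext M
  simp [F, contiguousMinor]

theorem F_symm (n : ℕ) (a b : ℤ) (y : ℕ) : F n a b y = F n b a y := by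
  funext M
  unfold F contiguousMinor
  rw [← det_transpose, ← det_submatrix_equiv_self (Fin.revPerm)]
  congr 1
  ext i j
  simp only [submatrix_apply, transpose_apply, of_apply, Fin.revPerm_apply]
  rw [M.2.apply]
  have hi : (((Fin.rev i : Fin y) : ℕ) : ℤ) = y - 1 - (i : ℕ) := by
    rw [Fin.val_rev]; have := i.2; omega
  have hj : (((Fin.rev j : Fin y) : ℕ) : ℤ) = y - 1 - (j : ℕ) := by
    rw [Fin.val_rev]; have := j.2; omega
  rw [hi, hj]
  ring_nf

theorem F_sub (n : ℕ) (a b a' b' : ℤ) (m y : ℕ) (M : Om n) (e f : Fin y → Fin m)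
    (he : ∀ i, a + ((e i : ℕ) : ℤ) = a' + (i : ℕ))
    (hf : ∀ j, b + (m : ℤ) - 1 - ((f j : ℕ) : ℤ) = b' + (y : ℤ) - 1 - (j : ℕ)) :
    det ((of fun i j : Fin m => M.1 (((a + (i : ℤ)) : ℤ) : ZMod n)
      (((b + (m : ℤ) - 1 - (j : ℤ)) : ℤ) : ZMod n)).submatrix e f) = F n a' b' y M := by
  unfold F contiguousMinor
  congr 1
  ext i j
  simp only [submatrix_apply, of_apply, he, hf]

theorem F_oct (n : ℕ) (a b : ℤ) (m : ℕ) (M : Om n) :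
    F n (a+1) b (m+1) M * F n a (b+1) (m+1) M =
      F n a b (m+2) M * F n (a+1) (b+1) m M + F n (a+1) (b+1) (m+1) M * F n a b (m+1) M := by
  have h := dodgson (of fun i j : Fin (m+2) =>
    M.1 (((a + (i : ℤ)) : ℤ) : ZMod n) (((b + ((m+2 : ℕ) : ℤ) - 1 - (j : ℤ)) : ℤ) : ZMod n))
  have e1 : F n a b (m+2) M = det (of fun i j : Fin (m+2) =>
    M.1 (((a + (i : ℤ)) : ℤ) : ZMod n) (((b + ((m+2 : ℕ) : ℤ) - 1 - (j : ℤ)) : ℤ) : ZMod n)) := rfl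
  rw [← e1, F_sub n a b (a+1) (b+1), F_sub n a b (a+1) b, F_sub n a b a (b+1),
    F_sub n a b a b, F_sub n a b (a+1) (b+1)] at h
  · linear_combination -h
  all_goals
    intro i
    simp only [Fin.val_castSucc, Fin.val_succ]
    try (push_cast; ring)

theorem central (n : ℕ) (x : ℤ) (y : ℕ) (a b : ℤ) (h : (x, y) ∈ SmallIdxSym n)
    (ha : a = (x - y) / 2) (hb : b = (x - y + n - (((n:ℤ) - 1) % 2)) / 2) : PR n (F n a b y) := by
  refine ⟨MvPolynomial.X ⟨(x, y), h⟩, 1, Pos.X _, Pos.one, fun M => ?_⟩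
  simp only [map_one, mul_one, MvPolynomial.eval_X, centralMinor, F]
  rw [Int.fdiv_eq_ediv_of_nonneg _ (by norm_num), Int.fdiv_eq_ediv_of_nonneg _ (by norm_num), ha, hb]

theorem window (n : ℕ) (hn : 0 < n) (Q : ℤ → Prop) (per : ∀ a, Q (a + n) = Q a) (c : ℤ)
    (hw : ∀ a, 1 ≤ 2 * a + c → 2 * a + c ≤ 2 * n → Q a) (a : ℤ) : Q a := by
  have hp : Function.Periodic Q (n : ℤ) := per
  have h := hp.int_mul (-((2 * a + c - 1) / (2 * n))) a
  rw [← h]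
  have h1 := Int.emod_add_mul_ediv (2 * a + c - 1) (2 * n)
  have h2 := Int.emod_nonneg (2 * a + c - 1) (b := 2 * (n:ℤ)) (by omega)
  have h3 := Int.emod_lt_of_pos (2 * a + c - 1) (b := 2 * (n:ℤ)) (by omega)
  push_cast
  apply hw <;> nlinarith

theorem step (n : ℕ) (a b : ℤ) (y : ℕ) (h1 : PR n (F n (a+1) b (y+1)))
    (h2 : PR n (F n a b (y+2))) (h3 : PR n (F n (a+1) (b+1) y))
    (h4 : PR n (F n (a+1) (b+1) (y+1))) (h5 : PR n (F n a b (y+1))) : PR n (F n a (b+1) (y+1)) := by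
  refine (PR_closed n).div _ _ _ ((PR_closed n).add _ _ ((PR_closed n).mul _ _ h2 h3)
    ((PR_closed n).mul _ _ h4 h5)) h1 fun M => ?_
  rw [← F_oct]
  ring

/-- all contiguous noninterlaced minors at distance `d` -/
def C (n d : ℕ) : Prop := ∀ (a : ℤ) (y : ℕ), y ≤ d → d + y ≤ n → PR n (F n a (a + d) y)

theorem C_symm (n d : ℕ) (hd : d ≤ n) (h : C n d) : C n (n - d) := by
  intro a y h1 h2
  have := h (a - d) y (by omega) (by omega)
  rw [F_symm, ← F_per2] at this
  convert this using 2
  · ring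
  · push_cast [hd]; ring

theorem C_base1 (n : ℕ) (hn : 0 < n) : C n (n / 2) := by
  intro a y h1 h2
  rcases Nat.eq_zero_or_pos y with rfl | hy
  · rw [F_zero]; exact (PR_closed n).one
  obtain ⟨h, hh⟩ : ∃ h : ℕ, h = n / 2 := ⟨_, rfl⟩
  rw [← hh] at h1 h2 ⊢
  rcases Nat.mod_two_eq_zero_or_one n with hpar | hpar
  · refine window n hn (fun a => PR n (F n a (a + h) y)) ?_ (1 + y) ?_ a
    · intro a
      rw [F_per1, show a + n + h = a + h + n by ring, F_per2]
    · intro a l1 l2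
      rcases le_or_gt (2 * a + (1 + y)) (n : ℤ) with l | l
      · refine central n (2 * a + (1 + y)) y _ _ ⟨by dsimp only; omega, by dsimp only; omega, ?_⟩ (by omega) (by omega)
        rcases Nat.lt_or_ge (2 * y) n with l3 | l3
        · left; dsimp only; omega
        · right; dsimp only; exact ⟨by omega, ⟨a + y, by ring⟩⟩
      · have : PR n (F n (a - h) a y) := by
          refine central n (2 * a + (1 + y) - n) y _ _ ⟨by dsimp only; omega, by dsimp only; omega, ?_⟩ (by omega) (by omega)
          rcases Nat.lt_or_ge (2 * y) n with l3 | l3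
          · left; dsimp only; omega
          · right; dsimp only; exact ⟨by omega, ⟨a + y - h, by omega⟩⟩
        rw [F_symm, ← F_per2] at this
        convert this using 2
        omega
  · refine window n hn (fun a => PR n (F n a (a + h) y)) ?_ y ?_ a
    · intro a
      rw [F_per1, show a + n + h = a + h + n by ring, F_per2]
    · intro a l1 l2
      rcases le_or_gt (2 * a + y) (n : ℤ) with l | l
      · exact central n (2 * a + y) y _ _ ⟨by dsimp only; omega, by dsimp only; omega,
          by left; dsimp only; omega⟩ (by omega) (by omega)
      · have : PR n (F n (a - h - 1) a y) :=
          central n (2 * a + y - n) y _ _ ⟨by dsimp only; omega, by dsimp only; omega,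
            by left; dsimp only; omega⟩ (by omega) (by omega)
        rw [F_symm, ← F_per2] at this
        convert this using 2
        omega

theorem C_base2 (n : ℕ) (hn : 0 < n) : C n (n / 2 + 1) := by
  have hC := C_base1 n hn
  rcases Nat.mod_two_eq_zero_or_one n with hpar | hpar
  · intro a y h1 h2
    rcases Nat.eq_zero_or_pos y with rfl | hy
    · rw [F_zero]; exact (PR_closed n).one
    obtain ⟨h, hh⟩ : ∃ h : ℕ, h = n / 2 := ⟨_, rfl⟩
    rw [← hh] at h1 h2 hC ⊢
    have G : ∀ a, PR n (F n (a + 1) (a + h) y) := by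
      refine window n hn (fun a => PR n (F n (a + 1) (a + h) y)) ?_ (2 + y) ?_
      · intro a
        rw [show a + n + 1 = a + 1 + n by ring, F_per1, show a + n + h = a + h + n by ring, F_per2]
      · intro a l1 l2
        rcases le_or_gt (2 * a + (2 + y)) (n : ℤ) with l | l
        · exact central n (2 * a + (2 + y)) y _ _ ⟨by dsimp only; omega, by dsimp only; omega,
            by left; dsimp only; omega⟩ (by omega) (by omega)
        · have g1 : PR n (F n (a - h + 1) a y) :=
            central n (2 * a + (2 + y) - n) y _ _ ⟨by dsimp only; omega, by dsimp only; omega,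
              by left; dsimp only; omega⟩ (by omega) (by omega)
          obtain ⟨z, rfl⟩ : ∃ z, y = z + 1 := ⟨y - 1, by omega⟩
          have := step n (a - h) a z g1 (by convert hC (a - h) (z+2) (by omega) (by omega) using 2; ring)
            (by convert hC (a - h + 1) z (by omega) (by omega) using 2; ring)
            (by convert hC (a - h + 1) (z+1) (by omega) (by omega) using 2; ring)
            (by convert hC (a - h) (z+1) (by omega) (by omega) using 2; ring)
          rw [F_symm, ← F_per2] at this
          convert this using 2
          omega
    have := G (a + h)
    rw [F_symm, show a + h + h = a + n by omega, F_per1] at this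
    convert this using 2
    push_cast; ring
  · have := C_symm n (n/2) (by omega) hC
    rwa [show n - n/2 = n/2 + 1 by omega] at this

theorem C_up (n : ℕ) (hn : 0 < n) (e : ℕ) : C n (n / 2 + e) ∧ C n (n / 2 + e + 1) := by
  induction e with
  | zero => exact ⟨C_base1 n hn, C_base2 n hn⟩
  | succ e ih =>
    obtain ⟨i1, i2⟩ := ih
    refine ⟨i2, ?_⟩
    intro a y h1 h2
    rcases y with _ | z
    · rw [F_zero]; exact (PR_closed n).one
    have := step n a (a + (n / 2 + e + 1 : ℕ)) z
      (by convert i1 (a + 1) (z+1) (by omega) (by omega) using 2; push_cast; ring)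
      (i2 a (z+2) (by omega) (by omega))
      (by convert i2 (a + 1) z (by omega) (by omega) using 2; push_cast; ring)
      (by convert i2 (a + 1) (z+1) (by omega) (by omega) using 2; push_cast; ring)
      (i2 a (z+1) (by omega) (by omega))
    convert this using 2
    push_cast; ring

theorem C_all (n : ℕ) (hn : 0 < n) (d : ℕ) (hd : d ≤ n) : C n d := by
  rcases Nat.lt_or_ge d (n/2) with h | h
  · have := (C_up n hn (n - d - n/2)).1
    rw [show n/2 + (n - d - n/2) = n - d by omega] at this
    have := C_symm n _ (by omega) this
    rwa [show n - (n - d) = d by omega] at this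
  · have := (C_up n hn (d - n/2)).1
    rwa [show n/2 + (d - n/2) = d by omega] at this

noncomputable def X (n : ℕ) : ℤ → ℤ → Om n → ℝ := fun u v M => M.1 (u : ZMod n) ((-v : ℤ) : ZMod n)

theorem minor_solid (n : ℕ) (a c : ℤ) (y : ℕ) :
    minor (X n) (fun i : Fin y => a + (i : ℕ)) (fun i : Fin y => c + (i : ℕ)) =
      F n a (1 - y - c) y := by
  funext M
  unfold minor F contiguousMinor X
  congr 1
  ext i j
  simp only [of_apply]
  ring_nf

theorem noninterlaced (n k : ℕ) (hn : 0 < n) (g h : Fin k → ℕ) (t : ℤ) (hg : StrictMono g) (hh : StrictAnti h)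
    (hgh : ∀ i j, g i < h j) (hhn : ∀ j, h j < n) :
    PR n (minor (X n) (fun i => (g i : ℤ) - t) (fun j => -((h j : ℤ) - t))) := by
  rcases k with _ | k
  · convert (PR_closed n).one using 1
    funext w
    simp [minor]
  refine tp (PR_closed n) (X n) ((g 0 : ℤ) - t, (g (Fin.last k) : ℤ) - t)
    (-((h 0 : ℤ) - t), -((h (Fin.last k) : ℤ) - t)) ?_ _ _ _ ?_ ?_ ?_ ?_
  · intro y a c hy h1 h2 h3 h4
    dsimp only at *
    have b1 := hgh (Fin.last k) (Fin.last k)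
    have b2 := hhn 0
    rw [minor_solid]
    have := C_all n hn (1 - y - c - a).toNat (by omega) a y (by omega) (by omega)
    convert this using 2
    omega
  · intro i j hij
    have := hg hij
    dsimp only; omega
  · intro i j hij
    have := hh hij
    dsimp only; omega
  · intro i
    have := hg.monotone (Fin.zero_le i)
    have := hg.monotone (Fin.le_last i)
    dsimp only; omega
  · intro i
    have := hh.antitone (Fin.zero_le i)
    have := hh.antitone (Fin.le_last i)
    dsimp only; omega

end SNM

/-- For symmetric matrices, any noninterlaced minor is a positive rational function of the
small central minors with first index `x ∈ {1,…,n}` only.  The noninterlaced pair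
`A = {a₁,…,a_k}`, `B = {b₁,…,b_k}` is encoded by the hypothesis that after a cyclic
rotation by `t`, the sequence `a₁, …, a_k, b_k, …, b₁` is strictly increasing. -/
theorem symmetric_noninterlaced_minor_positive_rational (n k : ℕ) [NeZero n]
    (a b : Fin k → Fin n) (t : ℕ)
    (hg : StrictMono (fun i : Fin k => ((a i : ℕ) + t) % n))
    (hh : StrictAnti (fun i : Fin k => ((b i : ℕ) + t) % n))
    (hgh : ∀ i j : Fin k, ((a i : ℕ) + t) % n < ((b j : ℕ) + t) % n) :
    ∃ p q : MvPolynomial (SmallIdxSym n) ℝ,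
      (∀ m : (SmallIdxSym n) →₀ ℕ, 0 ≤ MvPolynomial.coeff m p) ∧
      (∀ m : (SmallIdxSym n) →₀ ℕ, 0 ≤ MvPolynomial.coeff m q) ∧
      q ≠ 0 ∧
      ∀ M : Matrix (ZMod n) (ZMod n) ℝ, M.IsSymm →
        Matrix.det (Matrix.of fun i j : Fin k =>
            M (((a i : ℕ) : ZMod n)) (((b j : ℕ) : ZMod n))) *
          MvPolynomial.eval (fun s : SmallIdxSym n => centralMinor n M s.1.1 s.1.2) q =
          MvPolynomial.eval (fun s : SmallIdxSym n => centralMinor n M s.1.1 s.1.2) p := by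
  have hn : 0 < n := Nat.pos_of_ne_zero (NeZero.ne n)
  obtain ⟨p, q, hp, hq, h⟩ := SNM.noninterlaced n k hn _ _ (t : ℤ) hg hh hgh
    (fun j => Nat.mod_lt _ hn)
  refine ⟨p, q, hp.1, hq.1, ?_, fun M hM => ?_⟩
  · rintro rfl
    simpa using hq.2
  · rw [← h ⟨M, hM⟩]
    congr 2
    ext i j
    simp [SNM.X]
end

section
/- Let M be a symmetric n×n real matrix, and suppose that every small central minor of M is positive, i.e. CM_{x,y}(M) > 0 for all x ∈ {1,…,n} and all y with either 1 ≤ y < n/2, or y = n/2 and x+y odd (these are n(n−1)/2 conditions). Then every noninterlaced minor of M is positive: for every noninterlaced pair of k-element subsets A = {a_1,…,a_k} and B = {b_1,…,b_k} of {1,…,n}, listed so that a_1, …, a_k, b_k, …, b_1 occur in circular order, one has det((M_{a_i,b_j})_{1≤i,j≤k}) > 0. -/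
section Helpers

open Matrix

/-- three-term Plücker relation; the linear functional drops the last column. -/
lemma plucker_three {α : Type*} (k : ℕ) (f : α → Fin (k+2) → ℝ) (x y z : α) (S : Fin k → α) :
    det (of fun i : Fin (k+2) => f ((Fin.cons x (Fin.cons z S : Fin (k+1) → α) : Fin (k+2) → α) i))
      * det (of fun (i j : Fin (k+1)) => f ((Fin.cons y S : Fin (k+1) → α) i) j.castSucc)
    = det (of fun i : Fin (k+2) => f ((Fin.cons x (Fin.cons y S : Fin (k+1) → α) : Fin (k+2) → α) i))
      * det (of fun (i j : Fin (k+1)) => f ((Fin.cons z S : Fin (k+1) → α) i) j.castSucc)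
    + det (of fun i : Fin (k+2) => f ((Fin.cons y (Fin.cons z S : Fin (k+1) → α) : Fin (k+2) → α) i))
      * det (of fun (i j : Fin (k+1)) => f ((Fin.cons x S : Fin (k+1) → α) i) j.castSucc) := by
  set φ : α → ℝ := fun v => det (of fun (i j : Fin (k+1)) => f ((Fin.cons v S : Fin (k+1) → α) i) j.castSucc) with hφ
  set T : Fin (k+3) → α := Fin.cons x (Fin.cons y (Fin.cons z S : Fin (k+1) → α) : Fin (k+2) → α) with hT
  set B : Matrix (Fin (k+3)) (Fin (k+3)) ℝ :=
    of fun i => (Fin.cons (φ (T i)) (f (T i)) : Fin (k+3) → ℝ) with hB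
  have h0 : B.det = 0 := by
    apply Matrix.exists_mulVec_eq_zero_iff.mp
    refine ⟨Fin.cons (-1) (Fin.snoc (fun j : Fin (k+1) => (-1)^(j:ℕ) *
      det (of fun (i l : Fin k) => f (S i) (j.succAbove l).castSucc)) 0 : Fin (k+2) → ℝ), ?_, ?_⟩
    · intro h
      have := congrFun h 0
      simp at this
    · funext i
      have : φ (T i) = ∑ j : Fin (k+1), f (T i) j.castSucc * ((-1)^(j:ℕ) *
        det (of fun (i l : Fin k) => f (S i) (j.succAbove l).castSucc)) := by
        simp only [hφ]
        rw [det_succ_row_zero]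
        apply Finset.sum_congr rfl
        intro j _
        simp [submatrix]
        ring
      simp only [mulVec, dotProduct, hB, of_apply]
      rw [Fin.sum_univ_succ, Fin.sum_univ_castSucc]
      simp [this]
  rw [det_succ_column_zero, Fin.sum_univ_succ, Fin.sum_univ_succ, Fin.sum_univ_succ] at h0
  have hS : ∀ i : Fin k, φ (S i) = 0 := by
    intro i
    apply det_zero_of_row_eq (i := 0) (j := i.succ) (Fin.succ_ne_zero i).symm
    funext j
    simp
  have hz : ∑ i : Fin k, (-1 : ℝ) ^ ((i.succ.succ.succ : Fin (k+3)) : ℕ) * B i.succ.succ.succ 0 *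
      (B.submatrix i.succ.succ.succ.succAbove Fin.succ).det = 0 := by
    apply Finset.sum_eq_zero
    intro i _
    simp [hB, hT, hS]
  rw [hz] at h0
  have e0 : B.submatrix (Fin.succAbove 0) Fin.succ = of fun i : Fin (k+2) => f ((Fin.cons y (Fin.cons z S : Fin (k+1) → α) : Fin (k+2) → α) i) := by
    ext i j; simp [hB, hT]
  have e1 : B.submatrix (Fin.succAbove (Fin.succ 0)) Fin.succ = of fun i : Fin (k+2) => f ((Fin.cons x (Fin.cons z S : Fin (k+1) → α) : Fin (k+2) → α) i) := by
    ext i j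
    refine Fin.cases ?_ (fun i => ?_) i <;> simp [hB, hT]
  have e2 : B.submatrix (Fin.succAbove (Fin.succ (Fin.succ 0))) Fin.succ = of fun i : Fin (k+2) => f ((Fin.cons x (Fin.cons y S : Fin (k+1) → α) : Fin (k+2) → α) i) := by
    ext i j
    refine Fin.cases ?_ (fun i => Fin.cases ?_ (fun i => ?_) i) i
    · simp only [submatrix_apply, Fin.succ_succAbove_zero]; simp [hB, hT]
    · simp only [submatrix_apply, Fin.succ_succAbove_succ]; simp [hB, hT]
    · simp only [submatrix_apply, Fin.succ_succAbove_succ]; simp [hB, hT]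
  rw [e0, e1, e2] at h0
  have b0 : B 0 0 = φ x := by simp [hB, hT]
  have b1 : B (Fin.succ 0) 0 = φ y := by simp [hB, hT]
  have b2 : B (Fin.succ (Fin.succ 0)) 0 = φ z := rfl
  rw [b0, b1, b2] at h0
  simp only [Fin.val_succ, Fin.val_zero] at h0
  change _ * φ y = _ * φ z + _ * φ x
  linear_combination -h0

lemma det_insertNth {α : Type*} {k : ℕ} (f : α → Fin (k+1) → ℝ) (p : Fin (k+1)) (v : α) (S : Fin k → α) :
    det (of fun i => f ((p.insertNth v S : Fin (k+1) → α) i)) =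
    (-1)^(p:ℕ) * det (of fun i => f ((Fin.cons v S : Fin (k+1) → α) i)) := by
  rw [det_succ_row _ p, det_succ_row_zero, Finset.mul_sum]
  apply Finset.sum_congr rfl
  intro j _
  simp [submatrix, pow_add]
  ring

lemma det_cons_insertNth {α : Type*} {k : ℕ} (f : α → Fin (k+2) → ℝ) (p : Fin (k+1)) (u v : α) (S : Fin k → α) :
    det (of fun i => f ((Fin.cons u (p.insertNth v S : Fin (k+1) → α) : Fin (k+2) → α) i)) =
    (-1)^(p:ℕ) * det (of fun i => f ((Fin.cons u (Fin.cons v S : Fin (k+1) → α) : Fin (k+2) → α) i)) := by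
  rw [det_succ_row_zero, det_succ_row_zero, Finset.mul_sum]
  apply Finset.sum_congr rfl
  intro j _
  have := det_insertNth (fun a l => f a (j.succAbove l)) p v S
  simp only [submatrix, of_apply, Fin.cons_zero, Fin.cons_succ]
  erw [this]
  ring

lemma det_cons_swap {α : Type*} {k : ℕ} (f : α → Fin (k+2) → ℝ) (u v : α) (S : Fin k → α) :
    det (of fun i => f ((Fin.cons u (Fin.cons v S : Fin (k+1) → α) : Fin (k+2) → α) i)) =
    - det (of fun i => f ((Fin.cons v (Fin.cons u S : Fin (k+1) → α) : Fin (k+2) → α) i)) := by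
  have := det_insertNth f (Fin.succ 0) u (Fin.cons v S)
  rw [Fin.insertNth_succ_cons, Fin.insertNth_zero'] at this
  rw [this]
  simp

/-- ordered three-term relation -/
lemma plucker_ordered {α : Type*} (k : ℕ) (f : α → Fin (k+2) → ℝ) (x y z : α) (S : Fin k → α)
    (p : Fin (k+1)) :
    det (of fun i : Fin (k+2) => f ((Fin.cons x ((Fin.last k).insertNth z S : Fin (k+1) → α) : Fin (k+2) → α) i))
      * det (of fun (i j : Fin (k+1)) => f ((p.insertNth y S : Fin (k+1) → α) i) j.castSucc)
    = det (of fun i : Fin (k+2) => f ((Fin.cons x (p.insertNth y S : Fin (k+1) → α) : Fin (k+2) → α) i))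
      * det (of fun (i j : Fin (k+1)) => f (((Fin.last k).insertNth z S : Fin (k+1) → α) i) j.castSucc)
    + det (of fun i : Fin (k+2) => f (((Fin.last (k+1)).insertNth z (p.insertNth y S : Fin (k+1) → α) : Fin (k+2) → α) i))
      * det (of fun (i j : Fin (k+1)) => f ((Fin.cons x S : Fin (k+1) → α) i) j.castSucc) := by
  have h1 := det_insertNth (fun a (j : Fin (k+1)) => f a j.castSucc) p y S
  have h2 := det_insertNth (fun a (j : Fin (k+1)) => f a j.castSucc) (Fin.last k) z S
  have h3 := plucker_three k f x y z S
  rw [det_cons_insertNth, det_cons_insertNth, det_insertNth, det_cons_insertNth, det_cons_swap f z y]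
  erw [h1, h2]
  simp only [Fin.val_last, pow_succ]
  linear_combination ((-1)^k * (-1)^(p:ℕ)) * h3

/-- Desnanot–Jacobi -/
lemma dodgson_s6 (k : ℕ) (A : Matrix (Fin (k+2)) (Fin (k+2)) ℝ) :
    A.det * det (of fun i j : Fin k => A i.succ.castSucc j.succ.castSucc) =
    det (of fun i j : Fin (k+1) => A i.castSucc j.castSucc) * det (of fun i j : Fin (k+1) => A i.succ j.succ)
    - det (of fun i j : Fin (k+1) => A i.castSucc j.succ) * det (of fun i j : Fin (k+1) => A i.succ j.castSucc) := by
  set x := A 0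
  set y := A (Fin.last (k+1))
  set S : Fin k → Fin (k+2) → ℝ := fun i => A i.succ.castSucc
  set e : Fin (k+2) → ℝ := Pi.single 0 1 with he
  have key := plucker_three k (fun v => v) x y e S
  have eA : A = of fun i => ((Fin.cons x ((Fin.last k).insertNth y S : Fin (k+1) → Fin (k+2) → ℝ) : Fin (k+2) → Fin (k+2) → ℝ) i) := by
    ext i j
    refine Fin.cases ?_ (fun i => Fin.lastCases ?_ (fun i => ?_) i) i
    · rfl
    · simp; rfl
    · simp [S]
  have r1 : ∀ g : Fin (k+1) → Fin (k+2), det (of fun i j : Fin (k+1) => A i.castSucc (g j)) =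
      det (of fun i j : Fin (k+1) => (Fin.cons x S : Fin (k+1) → Fin (k+2) → ℝ) i (g j)) := by
    intro g
    congr 1; ext i j
    refine Fin.cases ?_ (fun i => ?_) i
    · simp [x]
    · simp [S]
  have r2 : ∀ g : Fin (k+1) → Fin (k+2), det (of fun i j : Fin (k+1) => A i.succ (g j)) =
      (-1)^k * det (of fun i j : Fin (k+1) => (Fin.cons y S : Fin (k+1) → Fin (k+2) → ℝ) i (g j)) := by
    intro g
    have := det_insertNth (fun (a : Fin (k+2) → ℝ) (j : Fin (k+1)) => a (g j)) (Fin.last k) y S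
    simp only [Fin.val_last] at this
    erw [← this]
    congr 1; ext i j
    refine Fin.lastCases ?_ (fun i => ?_) i
    · simp [y]
    · simp [S]
  have r3 : ∀ T : Fin (k+1) → Fin (k+2) → ℝ, det (of fun i => (Fin.cons e T : Fin (k+2) → Fin (k+2) → ℝ) i) =
      det (of fun i j : Fin (k+1) => T i j.succ) := by
    intro T
    rw [det_succ_row_zero, Fin.sum_univ_succ]
    simp [he, submatrix]
  have r4 : det (of fun i j : Fin (k+1) => (Fin.cons e S : Fin (k+1) → Fin (k+2) → ℝ) i j.castSucc) =
      det (of fun i j : Fin k => S i j.succ.castSucc) := by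
    rw [det_succ_row_zero, Fin.sum_univ_succ]
    simp only [of_apply, Fin.cons_zero]
    rw [Finset.sum_eq_zero]
    · simp [he, submatrix]
    · intro i _
      simp [he, Fin.ext_iff]
  have hA : A.det = (-1)^k * det (of fun i => ((Fin.cons x (Fin.cons y S : Fin (k+1) → Fin (k+2) → ℝ) : Fin (k+2) → Fin (k+2) → ℝ) i)) := by
    have := det_cons_insertNth (fun (a : Fin (k+2) → ℝ) => a) (Fin.last k) x y S
    simp only [Fin.val_last] at this
    rw [← this, ← eA]
  have s1 := det_cons_swap (fun (a : Fin (k+2) → ℝ) => a) x e S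
  have s2 := det_cons_swap (fun (a : Fin (k+2) → ℝ) => a) y e S
  rw [r3] at s1 s2
  rw [s1, s2, r4] at key
  rw [hA, r1, r1, r2, r2]
  linear_combination (-(-1)^k) * key

lemma strictMono_insertNth {k : ℕ} (p : Fin (k+1)) (h : ℕ) (S : Fin k → ℕ) (hS : StrictMono S)
    (h1 : ∀ j, j.castSucc < p → S j < h) (h2 : ∀ j, p ≤ j.castSucc → h < S j) :
    StrictMono (p.insertNth h S : Fin (k+1) → ℕ) := by
  intro a b hab
  rcases Fin.eq_self_or_eq_succAbove p a with ha | ⟨a, rfl⟩ <;>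
  rcases Fin.eq_self_or_eq_succAbove p b with hb | ⟨b, rfl⟩
  · rw [ha, hb] at hab; exact absurd hab (lt_irrefl _)
  · subst ha
    simp only [Fin.insertNth_apply_same, Fin.insertNth_apply_succAbove]
    exact h2 _ ((Fin.lt_succAbove_iff_le_castSucc _ _).mp hab)
  · subst hb
    simp only [Fin.insertNth_apply_same, Fin.insertNth_apply_succAbove]
    exact h1 _ ((Fin.succAbove_lt_iff_castSucc_lt _ _).mp hab)
  · simp only [Fin.insertNth_apply_succAbove]
    exact hS ((Fin.strictMono_succAbove p).lt_iff_lt.mp hab)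

lemma forall_insertNth {k : ℕ} (p : Fin (k+1)) (h : ℕ) (S : Fin k → ℕ) (P : ℕ → Prop)
    (h1 : P h) (h2 : ∀ i, P (S i)) : ∀ i, P ((p.insertNth h S : Fin (k+1) → ℕ) i) := by
  intro a
  rcases Fin.eq_self_or_eq_succAbove p a with rfl | ⟨a, rfl⟩
  · simpa using h1
  · simpa using h2 a

lemma fekete_rows (X : ℕ → ℕ → ℝ) (p q : ℕ)
    (H : ∀ m r c, r + m ≤ p → c + m ≤ q → 0 < det (of fun i j : Fin m => X (r + i) (c + j))) :
    ∀ (m : ℕ) (R : Fin m → ℕ), StrictMono R → (∀ i, R i < p) → ∀ c, c + m ≤ q →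
      0 < det (of fun i j : Fin m => X (R i) (c + j)) := by
  intro m
  induction m with
  | zero => intro R _ _ c _; simp
  | succ m ih =>
  rcases m with _ | k
  · intro R _ hp c hc
    have := H 1 (R 0) c (hp 0) hc
    simpa using this
  · intro R hR hp c hc
    obtain ⟨N, hN⟩ : ∃ N, R (Fin.last (k+1)) ≤ R 0 + N := ⟨_, Nat.le_add_left _ _⟩
    induction N generalizing R with
    | zero =>
      have := hR (show (0 : Fin (k+2)) < Fin.last (k+1) from Fin.last_pos)
      omega
    | succ N ihN =>
    by_cases hgap : ∃ i : Fin (k+1), R i.castSucc + 1 < R i.succ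
    · obtain ⟨g, hg⟩ := hgap
      set x := R 0 with hx
      set z := R (Fin.last (k+1)) with hz
      set S : Fin k → ℕ := fun i => R i.succ.castSucc with hSdef
      set y := R g.castSucc + 1 with hy
      have hS : StrictMono S := fun a b hab => hR (by simpa using hab)
      have eR : R = (Fin.cons x ((Fin.last k).insertNth z S : Fin (k+1) → ℕ) : Fin (k+2) → ℕ) := by
        funext i
        refine Fin.cases ?_ (fun i => Fin.lastCases ?_ (fun i => ?_) i) i
        · rfl
        · simp [hz]
        · simp [hSdef]
      have hxS : ∀ i, x < S i := fun i => hR (by simp [Fin.lt_def])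
      have hSz : ∀ i, S i < z := fun i => hR (by simp [Fin.lt_def])
      have hxz : x < z := hR Fin.last_pos
      have hxy : x < y := Nat.lt_succ_of_le (hR.monotone (Fin.zero_le _))
      have hyz : y < z := lt_of_lt_of_le hg (hR.monotone (Fin.le_last _))
      have hSy : ∀ j : Fin k, j.castSucc < g → S j < y := fun j hj =>
        Nat.lt_succ_of_le (hR.monotone (by simp only [Fin.lt_def, Fin.le_def, Fin.val_castSucc, Fin.val_succ] at *; omega))
      have hyS : ∀ j : Fin k, g ≤ j.castSucc → y < S j := fun j hj =>
        lt_of_lt_of_le hg (hR.monotone (by simp only [Fin.le_def, Fin.val_castSucc, Fin.val_succ] at *; omega))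
      have hT := strictMono_insertNth g y S hS hSy hyS
      have hxp : x < p := hp _
      have hzp : z < p := hp _
      have hSp : ∀ i, S i < p := fun i => hp _
      have hTp : ∀ i, (g.insertNth y S : Fin (k+1) → ℕ) i < p :=
        forall_insertNth g y S (· < p) (hyz.trans hzp) hSp
      have hxT : ∀ i, x < (g.insertNth y S : Fin (k+1) → ℕ) i :=
        forall_insertNth g y S (x < ·) hxy hxS
      have hTz : ∀ i, (g.insertNth y S : Fin (k+1) → ℕ) i < z :=
        forall_insertNth g y S (· < z) hyz hSz
      have hcons : ∀ {l : ℕ} (U : Fin l → ℕ), StrictMono U → (∀ i, x < U i) → StrictMono (Fin.cons x U : Fin (l+1) → ℕ) := by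
        intro l U hU hxU
        rw [← Fin.insertNth_zero']
        exact strictMono_insertNth 0 x U hU (fun j hj => absurd hj (by simp)) (fun j _ => hxU j)
      have hconsp : ∀ {l : ℕ} (U : Fin l → ℕ), (∀ i, U i < p) → ∀ i, (Fin.cons x U : Fin (l+1) → ℕ) i < p := by
        intro l U hU
        rw [← Fin.insertNth_zero']
        exact forall_insertNth 0 x U (· < p) hxp hU
      have hsnoc : ∀ {l : ℕ} (U : Fin l → ℕ), StrictMono U → (∀ i, U i < z) → StrictMono ((Fin.last l).insertNth z U : Fin (l+1) → ℕ) := by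
        intro l U hU hUz
        exact strictMono_insertNth _ z U hU (fun j _ => hUz j) (fun j hj => absurd hj (by simp [Fin.le_def]))
      have hsnocp : ∀ {l : ℕ} (U : Fin l → ℕ), (∀ i, U i < p) → ∀ i, ((Fin.last l).insertNth z U : Fin (l+1) → ℕ) i < p := by
        intro l U hU
        exact forall_insertNth _ z U (· < p) hzp hU
      have key := plucker_ordered k (fun r (j : Fin (k+2)) => X r (c + j)) x y z S g
      simp only [Fin.val_castSucc] at key
      have c1 : c + (k+1) ≤ q := by omega
      have q1 := ih _ hT hTp c c1
      have q2 := ih _ (hsnoc S hS hSz) (hsnocp S hSp) c c1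
      have q3 := ih _ (hcons S hS hxS) (hconsp S hSp) c c1
      have q4 := ihN _ (hcons _ hT hxT) (hconsp _ hTp) (by
        have := hTz (Fin.last k)
        rw [← Fin.succ_last]
        simp only [Fin.cons_succ, Fin.cons_zero]
        omega)
      have q5 := ihN _ (hsnoc _ hT hTz) (hsnocp _ hTp) (by
        have := hxT 0
        have e : ((Fin.last (k+1)).insertNth z (g.insertNth y S : Fin (k+1) → ℕ) : Fin (k+2) → ℕ) 0
          = (g.insertNth y S : Fin (k+1) → ℕ) 0 := by
          have := Fin.insertNth_apply_succAbove (α := fun _ => ℕ) (Fin.last (k+1)) z (g.insertNth y S : Fin (k+1) → ℕ) 0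
          simpa only [Fin.succAbove_last, Fin.castSucc_zero] using this
        rw [e, Fin.insertNth_apply_same]
        omega)
      rw [← eR] at key
      have : 0 < det (of fun i j : Fin (k+2) => X (R i) (c + j)) * det (of fun (i j : Fin (k+1)) => X ((g.insertNth y S : Fin (k+1) → ℕ) i) (c + j)) := by
        erw [key]
        exact add_pos (mul_pos q4 q2) (mul_pos q5 q3)
      exact pos_of_mul_pos_left this q1.le
    · push Not at hgap
      have hsol : ∀ i : Fin (k+2), R i = R 0 + i := by
        intro i
        induction i using Fin.induction with
        | zero => simp
        | succ i hi =>
          have h1 := hgap i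
          have h2 := hR (Fin.castSucc_lt_succ (i := i))
          simp only [Fin.val_castSucc, Fin.val_succ] at *
          omega
      have h1 := hp (Fin.last (k+1))
      rw [hsol] at h1
      have := H (k+2) (R 0) c (by simp at h1; omega) hc
      simp only [← hsol] at this
      exact this

lemma fekete_s6 (X : ℕ → ℕ → ℝ) (p q : ℕ)
    (H : ∀ m r c, r + m ≤ p → c + m ≤ q → 0 < det (of fun i j : Fin m => X (r + i) (c + j)))
    (k : ℕ) (R C : Fin k → ℕ) (hR : StrictMono R) (hC : StrictMono C) (hp : ∀ i, R i < p)
    (hq : ∀ i, C i < q) : 0 < det (of fun i j : Fin k => X (R i) (C j)) := by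
  set R' : ℕ → ℕ := fun i => if h : i < k then R ⟨i, h⟩ else 0 with hR'
  have hR'1 : ∀ i (h : i < k), R' i = R ⟨i, h⟩ := fun i h => dif_pos h
  have := fekete_rows (fun j i => X (R' i) j) q k ?_ k C hC hq 0 (by omega)
  · rw [← det_transpose] at this
    convert this using 2
    ext i j
    rw [transpose_apply, of_apply, of_apply, Nat.zero_add, hR'1 _ i.2]
  · intro m r c hr hc
    have := fekete_rows X p q H m (fun i => R' (c + i)) ?_ ?_ r hr
    · rw [← det_transpose] at this
      exact this
    · intro i j hij
      simp only
      rw [hR'1 _ (by omega), hR'1 _ (by omega)]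
      exact hR (Fin.lt_def.mpr (Nat.add_lt_add_left (Fin.lt_def.mp hij) c))
    · intro i
      rw [hR'1 _ (by omega)]
      exact hp _

lemma cm_congr {n : ℕ} (M : Matrix (ZMod n) (ZMod n) ℝ) {a b a' b' : ℤ} (y : ℕ)
    (ha : ∃ q : ℤ, a' = a + n * q) (hb : ∃ q : ℤ, b' = b + n * q) :
    contiguousMinor n M a b y = contiguousMinor n M a' b' y := by
  obtain ⟨q, rfl⟩ := ha
  obtain ⟨r, rfl⟩ := hb
  simp [contiguousMinor]

lemma cm_symm {n : ℕ} (M : Matrix (ZMod n) (ZMod n) ℝ) (hM : M.IsSymm) (a b : ℤ) (y : ℕ) :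
    contiguousMinor n M a b y = contiguousMinor n M b a y := by
  unfold contiguousMinor
  rw [← det_transpose, ← det_submatrix_equiv_self Fin.revPerm]
  congr 1
  ext i j
  simp only [submatrix_apply, transpose_apply, of_apply, Fin.revPerm_apply, Fin.val_rev]
  rw [hM.apply]
  congr 2
  · have := i.2
    omega
  · have := j.2
    omega

lemma cm_zero {n : ℕ} (M : Matrix (ZMod n) (ZMod n) ℝ) (a b : ℤ) : contiguousMinor n M a b 0 = 1 := by
  simp [contiguousMinor]

lemma cm_dodgson {n : ℕ} (M : Matrix (ZMod n) (ZMod n) ℝ) (a b : ℤ) (k : ℕ) :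
    contiguousMinor n M a (b+1) (k+1) * contiguousMinor n M (a+1) b (k+1) =
    contiguousMinor n M a b (k+2) * contiguousMinor n M (a+1) (b+1) k +
    contiguousMinor n M a b (k+1) * contiguousMinor n M (a+1) (b+1) (k+1) := by
  have := dodgson_s6 k (of fun i j : Fin (k+2) =>
    M (((a + (i : ℤ)) : ℤ) : ZMod n) (((b + ((k+2 : ℕ) : ℤ) - 1 - (j : ℤ)) : ℤ) : ZMod n))
  unfold contiguousMinor
  have e1 : (of fun i j : Fin k => M (((a + 1 + (i : ℤ)) : ℤ) : ZMod n) (((b + 1 + (k : ℤ) - 1 - (j : ℤ)) : ℤ) : ZMod n))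
     = of fun i j : Fin k => (of fun i j : Fin (k+2) =>
    M (((a + (i : ℤ)) : ℤ) : ZMod n) (((b + ((k+2 : ℕ) : ℤ) - 1 - (j : ℤ)) : ℤ) : ZMod n)) i.succ.castSucc j.succ.castSucc := by
    ext i j; simp only [of_apply, Fin.val_castSucc, Fin.val_succ]
    congr 2 <;> push_cast <;> ring
  have e2 : (of fun i j : Fin (k+1) => M (((a + (i : ℤ)) : ℤ) : ZMod n) (((b + 1 + ((k+1 : ℕ) : ℤ) - 1 - (j : ℤ)) : ℤ) : ZMod n))
     = of fun i j : Fin (k+1) => (of fun i j : Fin (k+2) =>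
    M (((a + (i : ℤ)) : ℤ) : ZMod n) (((b + ((k+2 : ℕ) : ℤ) - 1 - (j : ℤ)) : ℤ) : ZMod n)) i.castSucc j.castSucc := by
    ext i j; simp only [of_apply, Fin.val_castSucc]
    congr 2; push_cast; ring
  have e3 : (of fun i j : Fin (k+1) => M (((a + 1 + (i : ℤ)) : ℤ) : ZMod n) (((b + ((k+1 : ℕ) : ℤ) - 1 - (j : ℤ)) : ℤ) : ZMod n))
     = of fun i j : Fin (k+1) => (of fun i j : Fin (k+2) =>
    M (((a + (i : ℤ)) : ℤ) : ZMod n) (((b + ((k+2 : ℕ) : ℤ) - 1 - (j : ℤ)) : ℤ) : ZMod n)) i.succ j.succ := by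
    ext i j; simp only [of_apply, Fin.val_succ]
    congr 2 <;> push_cast <;> ring
  have e4 : (of fun i j : Fin (k+1) => M (((a + (i : ℤ)) : ℤ) : ZMod n) (((b + ((k+1 : ℕ) : ℤ) - 1 - (j : ℤ)) : ℤ) : ZMod n))
     = of fun i j : Fin (k+1) => (of fun i j : Fin (k+2) =>
    M (((a + (i : ℤ)) : ℤ) : ZMod n) (((b + ((k+2 : ℕ) : ℤ) - 1 - (j : ℤ)) : ℤ) : ZMod n)) i.castSucc j.succ := by
    ext i j; simp only [of_apply, Fin.val_castSucc, Fin.val_succ]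
    congr 2; push_cast; ring
  have e5 : (of fun i j : Fin (k+1) => M (((a + 1 + (i : ℤ)) : ℤ) : ZMod n) (((b + 1 + ((k+1 : ℕ) : ℤ) - 1 - (j : ℤ)) : ℤ) : ZMod n))
     = of fun i j : Fin (k+1) => (of fun i j : Fin (k+2) =>
    M (((a + (i : ℤ)) : ℤ) : ZMod n) (((b + ((k+2 : ℕ) : ℤ) - 1 - (j : ℤ)) : ℤ) : ZMod n)) i.succ j.castSucc := by
    ext i j; simp only [of_apply, Fin.val_castSucc, Fin.val_succ]
    congr 2 <;> push_cast <;> ring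
  rw [e1, e2, e3, e4, e5]
  linear_combination -this

/-- all noninterlaced contiguous minors with offset `d` are positive -/
def SlicePos (n : ℕ) (M : Matrix (ZMod n) (ZMod n) ℝ) (d : ℕ) : Prop :=
  ∀ (a : ℤ) (y : ℕ), y ≤ d → y + d ≤ n → 0 < contiguousMinor n M a (a + d) y

lemma slice_symm {n : ℕ} {M : Matrix (ZMod n) (ZMod n) ℝ} (hM : M.IsSymm) {d : ℕ} (hd : d ≤ n)
    (h : SlicePos n M d) : SlicePos n M (n - d) := by
  intro a y h1 h2
  have := h (a + (n - d : ℕ)) y (by omega) (by omega)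
  rw [cm_symm M hM]
  rw [cm_congr (a' := a + (n - d : ℕ)) (b' := a + (n-d : ℕ) + d) M y ⟨0, by ring⟩ ⟨1, by push_cast [hd]; ring⟩]
  exact this

/-- positivity of the right-hand side of the recurrence -/
lemma slice_rhs {n : ℕ} {M : Matrix (ZMod n) (ZMod n) ℝ} {d : ℕ} (hd : 2 * (d + 1) ≤ n)
    (h : SlicePos n M (d+1)) (a : ℤ) (k : ℕ) (hk : k + 1 ≤ d) :
    0 < contiguousMinor n M (a-1) (a + d + 1) (k+1) * contiguousMinor n M a (a + d) (k+1) := by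
  have := cm_dodgson M (a-1) (a + d) k
  rw [show a - 1 + 1 = a by ring] at this
  rw [this]
  have e1 : a + (d:ℤ) = (a - 1) + (d + 1 : ℕ) := by push_cast; ring
  have e2 : a + (d:ℤ) + 1 = a + (d + 1 : ℕ) := by push_cast; ring
  rw [e2, e1]
  exact add_pos (mul_pos (h _ _ (by omega) (by omega)) (h _ _ (by omega) (by omega)))
    (mul_pos (h _ _ (by omega) (by omega)) (h _ _ (by omega) (by omega)))

lemma slice_step {n : ℕ} {M : Matrix (ZMod n) (ZMod n) ℝ} {d : ℕ} (hd : 2 * (d + 1) ≤ n)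
    (h1 : SlicePos n M (d+1)) (h2 : SlicePos n M (d+2)) : SlicePos n M d := by
  intro a y hy hy'
  rcases y with _ | k
  · rw [cm_zero]; exact one_pos
  · refine pos_of_mul_pos_right (slice_rhs hd h1 a k hy) (le_of_lt ?_)
    have := h2 (a-1) (k+1) (by omega) (by omega)
    rwa [show a - 1 + ((d+2 : ℕ) : ℤ) = a + d + 1 by push_cast; ring] at this

lemma slice_desc {n : ℕ} {M : Matrix (ZMod n) (ZMod n) ℝ} {s : ℕ} (hs : 2 * (s+1) ≤ n)
    (h1 : SlicePos n M (s+1)) (h2 : SlicePos n M s) : ∀ d, d ≤ s → SlicePos n M d ∧ SlicePos n M (d+1) := by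
  intro d hd
  induction hd using Nat.decreasingInduction with
  | self => exact ⟨h2, h1⟩
  | of_succ d hd ih => exact ⟨slice_step (by omega) ih.1 ih.2, ih.1⟩

lemma cm_pos_of_central {n : ℕ} (M : Matrix (ZMod n) (ZMod n) ℝ) (hM : M.IsSymm) {x : ℤ} {y : ℕ} (a b : ℤ)
    (h : 0 < centralMinor n M x y)
    (hab : (∃ q r, Int.fdiv (x - (y : ℤ)) 2 = a + n * q ∧
        Int.fdiv (x - (y : ℤ) + (n : ℤ) - (((n : ℤ) - 1) % 2)) 2 = b + n * r) ∨
      (∃ q r, Int.fdiv (x - (y : ℤ)) 2 = b + n * q ∧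
        Int.fdiv (x - (y : ℤ) + (n : ℤ) - (((n : ℤ) - 1) % 2)) 2 = a + n * r)) :
    0 < contiguousMinor n M a b y := by
  unfold centralMinor at h
  rcases hab with ⟨q, r, h1, h2⟩ | ⟨q, r, h1, h2⟩
  · rwa [cm_congr M y ⟨q, h1⟩ ⟨r, h2⟩]
  · rwa [cm_symm M hM, cm_congr M y ⟨q, h1⟩ ⟨r, h2⟩]

lemma exists_rep (n : ℕ) (hn : 0 < n) (x : ℤ) : ∃ q r : ℤ, 1 ≤ x - n * q ∧ x - n * q ≤ n ∧ (q = 2 * r ∨ q = 2 * r + 1) := by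
  refine ⟨(x - 1) / n, ((x-1)/n) / 2, ?_, ?_, by omega⟩
  · have := Int.emod_nonneg (x-1) (b := n) (by omega)
    have := Int.mul_ediv_add_emod (x-1) n
    omega
  · have := Int.emod_lt_of_pos (x-1) (b := n) (by omega)
    have := Int.mul_ediv_add_emod (x-1) n
    omega

lemma all_slices (n : ℕ) (M : Matrix (ZMod n) (ZMod n) ℝ) (hM : M.IsSymm) (hn : 0 < n)
    (hpos : ∀ (x : ℤ) (y : ℕ), 1 ≤ x → x ≤ (n : ℤ) →
      ((1 ≤ y ∧ 2 * y < n) ∨ (2 * y = n ∧ Odd (x + (y : ℤ)))) →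
      0 < centralMinor n M x y) (d : ℕ) (hd : d ≤ n) : SlicePos n M d := by
  suffices hmain : ∀ d, 2 * d ≤ n → SlicePos n M d by
    by_cases h : 2 * d ≤ n
    · exact hmain d h
    · have := slice_symm hM (by omega) (hmain (n - d) (by omega))
      rwa [show n - (n - d) = d by omega] at this
  obtain ⟨s, hs⟩ : ∃ s, n = 2 * s ∨ n = 2 * s + 1 := ⟨n / 2, by omega⟩
  have hps : SlicePos n M s := by
    intro a y hy hy'
    rcases Nat.eq_zero_or_pos y with rfl | hy0
    · rw [cm_zero]; exact one_pos
    rcases hs with hs | hs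
    · obtain ⟨q, r, h1, h2, hq⟩ := exists_rep n hn (2 * a + 1 + y)
      have hodd : Odd (2 * a + 1 + y - n * q + (y:ℤ)) := by
        refine ⟨a + y - s * q, ?_⟩
        rw [hs]; push_cast; ring
      refine cm_pos_of_central M hM _ _ (hpos _ y h1 h2 (by
        rcases Nat.lt_or_ge (2 * y) n with h | h
        · left; omega
        · right; exact ⟨by omega, hodd⟩)) ?_
      have e1 : Int.fdiv (2 * a + 1 + y - n * q - (y : ℤ)) 2 = a - s * q := by
        rw [Int.fdiv_eq_ediv_of_nonneg _ (by norm_num), hs]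
        rw [show (2 * a + 1 + y - ((2 * s : ℕ) : ℤ) * q - (y : ℤ)) = 1 + (a - s * q) * 2 by push_cast; ring]
        omega
      have e2 : Int.fdiv (2 * a + 1 + y - n * q - (y : ℤ) + (n : ℤ) - (((n : ℤ) - 1) % 2)) 2 = a + s - s * q := by
        rw [Int.fdiv_eq_ediv_of_nonneg _ (by norm_num), show ((n : ℤ) - 1) % 2 = 1 by omega, hs]
        rw [show (2 * a + 1 + y - ((2 * s : ℕ) : ℤ) * q - (y : ℤ) + ((2 * s : ℕ) : ℤ) - 1) = (a + s - s * q) * 2 by push_cast; ring]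
        omega
      rw [e1, e2, hs]
      rcases hq with rfl | rfl
      · left; exact ⟨-r, -r, by push_cast; ring, by push_cast; ring⟩
      · right; exact ⟨-r-1, -r, by push_cast; ring, by push_cast; ring⟩
    · obtain ⟨q, r, h1, h2, hq⟩ := exists_rep n hn (2 * a + y)
      refine cm_pos_of_central M hM _ _ (hpos _ y h1 h2 (by left; omega)) ?_
      rw [Int.fdiv_eq_ediv_of_nonneg _ (by norm_num), Int.fdiv_eq_ediv_of_nonneg _ (by norm_num),
        show ((n : ℤ) - 1) % 2 = 0 by omega]
      rcases hq with rfl | rfl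
      · left
        refine ⟨-r, -r, ?_, ?_⟩
        · rw [show 2 * a + (y:ℤ) - n * (2 * r) - y = (a + n * -r) * 2 by ring]; omega
        · rw [show 2 * a + (y:ℤ) - n * (2 * r) - y + n - 0 = n + (a + n * -r) * 2 by ring]; omega
      · right
        refine ⟨-r - 1, -r, ?_, ?_⟩
        · rw [show 2 * a + (y:ℤ) - n * (2 * r + 1) - y = n + (a + n * (-r-1)) * 2 by ring]; omega
        · rw [show 2 * a + (y:ℤ) - n * (2 * r + 1) - y + n - 0 = (a + n * -r) * 2 by ring]; omega
  intro d hd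
  rcases s with _ | s
  · obtain rfl : d = 0 := by omega
    exact hps
  have hps' : SlicePos n M s := by
    rcases hs with hs | hs
    · intro a y hy hy'
      rcases y with _ | k
      · rw [cm_zero]; exact one_pos
      have hprod := slice_rhs (by omega) hps a k hy
      suffices 0 < contiguousMinor n M (a-1) (a + s + 1) (k+1) ∨ 0 < contiguousMinor n M a (a + s) (k+1) by
        rcases this with h | h
        · exact pos_of_mul_pos_right hprod h.le
        · exact h
      obtain ⟨q, r, h1, h2, hq⟩ := exists_rep n hn (2 * a + (k+1 : ℕ))
      have hc := hpos _ (k+1) h1 h2 (by left; omega)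
      have e1 : Int.fdiv (2 * a + (k+1 : ℕ) - n * q - ((k+1 : ℕ) : ℤ)) 2 = a - (s+1) * q := by
        rw [Int.fdiv_eq_ediv_of_nonneg _ (by norm_num), hs]
        rw [show (2 * a + (k+1 : ℕ) - ((2 * (s+1) : ℕ) : ℤ) * q - ((k+1 : ℕ) : ℤ)) = (a - (s+1) * q) * 2 by push_cast; ring]
        omega
      have e2 : Int.fdiv (2 * a + (k+1 : ℕ) - n * q - ((k+1 : ℕ) : ℤ) + (n : ℤ) - (((n : ℤ) - 1) % 2)) 2 = a + s - (s+1) * q := by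
        rw [Int.fdiv_eq_ediv_of_nonneg _ (by norm_num), show ((n : ℤ) - 1) % 2 = 1 by omega, hs]
        rw [show (2 * a + (k+1 : ℕ) - ((2 * (s+1) : ℕ) : ℤ) * q - ((k+1 : ℕ) : ℤ) + ((2 * (s+1) : ℕ) : ℤ) - 1) = 1 + (a + s - (s+1) * q) * 2 by push_cast; ring]
        omega
      rcases hq with rfl | rfl
      · right
        refine cm_pos_of_central M hM _ _ hc ?_
        rw [e1, e2, hs]
        left; exact ⟨-r, -r, by push_cast; ring, by push_cast; ring⟩
      · left
        refine cm_pos_of_central M hM _ _ hc ?_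
        rw [e1, e2, hs]
        right; exact ⟨-r-1, -r, by push_cast; ring, by push_cast; ring⟩
    · have := slice_symm hM (by omega) hps
      rw [show n - (s+1) = s + 2 by omega] at this
      exact slice_step (by omega) hps this
  rcases Nat.lt_or_ge s d with h | h
  · obtain rfl : d = s + 1 := by omega
    exact hps
  · exact (slice_desc (by omega) hps hps' d h).1

end Helpers

/-- If every small central minor of a symmetric `n × n` real matrix `M` is positive
(`CM_{x,y}(M) > 0` for all `1 ≤ x ≤ n` and `1 ≤ y < n/2`, or `y = n/2` with `x + y` odd),
then every noninterlaced minor of `M` is positive.  The noninterlaced pair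
`A = {a₁,…,a_k}`, `B = {b₁,…,b_k}` is encoded by the hypothesis that after a cyclic
rotation by `t`, the sequence `a₁, …, a_k, b_k, …, b₁` is strictly increasing
(i.e. it occurs in circular order). -/
theorem noninterlaced_minors_pos_of_small_central_minors_pos (n k : ℕ) [NeZero n]
    (M : Matrix (ZMod n) (ZMod n) ℝ) (hM : M.IsSymm)
    (hpos : ∀ (x : ℤ) (y : ℕ), 1 ≤ x → x ≤ (n : ℤ) →
      ((1 ≤ y ∧ 2 * y < n) ∨ (2 * y = n ∧ Odd (x + (y : ℤ)))) →
      0 < centralMinor n M x y)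
    (a b : Fin k → Fin n) (t : ℕ)
    (hg : StrictMono (fun i : Fin k => ((a i : ℕ) + t) % n))
    (hh : StrictAnti (fun i : Fin k => ((b i : ℕ) + t) % n))
    (hgh : ∀ i j : Fin k, ((a i : ℕ) + t) % n < ((b j : ℕ) + t) % n) :
    0 < Matrix.det (Matrix.of fun i j : Fin k =>
        M (((a i : ℕ) : ZMod n)) (((b j : ℕ) : ZMod n))) := by

  have hn : 0 < n := Nat.pos_of_ne_zero (NeZero.ne n)
  rcases k with _ | k
  · simp
  set R : Fin (k+1) → ℕ := fun i => ((a i : ℕ) + t) % n with hR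
  set C : Fin (k+1) → ℕ := fun i => n - 1 - ((b i : ℕ) + t) % n with hC
  have hbn : ∀ i, ((b i : ℕ) + t) % n < n := fun i => Nat.mod_lt _ hn
  have hCm : StrictMono C := by
    intro i j hij
    have h1 := hh hij
    have h2 := hbn i
    simp only [hC] at *
    omega
  have := fekete_s6 (fun r c => M (((r : ℤ) - t : ℤ) : ZMod n) (((n : ℤ) - 1 - c - t : ℤ) : ZMod n))
    (R (Fin.last k) + 1) (n - (R (Fin.last k) + 1)) ?_ (k+1) R C hg hCm ?_ ?_
  · convert this using 2
    ext i j
    simp only [Matrix.of_apply]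
    congr 1
    · simp [hR]
    · simp only [hC]
      rw [show (n : ℤ) - 1 - ((n - 1 - ((b j : ℕ) + t) % n : ℕ) : ℤ) - t = ((((b j : ℕ) + t) % n : ℕ) : ℤ) - t by
        have := hbn j
        omega]
      simp
  · intro m r c hr hc
    have h := all_slices n M hM hn hpos (n - c - m - r) (by omega) ((r : ℤ) - t) m (by omega) (by omega)
    unfold contiguousMinor at h
    convert h using 2
    ext i j
    have hRl : R (Fin.last k) < n := Nat.mod_lt _ hn
    simp only [Matrix.of_apply]
    congr 2 <;> omega
  · intro i
    exact Nat.lt_succ_of_le (hg.monotone (Fin.le_last i))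
  · intro j
    have h1 := hgh (Fin.last k) j
    have h2 := hbn j
    simp only [hC, hR] at *
    omega
end
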